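/- arXiv:2407.20614 — 4 statements merged into one kernel-verified Lean document; each statement's English description precedes it below -/
import Mathlib

section
/- Let V be an n-dimensional vector space over the finite field 𝔽_q with n ≥ 2t+1 and t ≥ 1, and let F be a cover-free family of 2t-dimensional subspaces of V with |F| = [n-1 choose t]_q / [2t-1 choose t]_q. Then for all distinct F, F' ∈ F, dim(F ∩ F') ≤ t. -/
/-- A family of subspaces is cover-free if there are no three distinct members
`F₀, F₁, F₂` with `F₀ ≤ (F₀ ⊓ F₁) ⊔ (F₀ ⊓ F₂)`. -/
def IsCoverFree {K V : Type*} [Field K] [AddCommGroup V] [Module K V]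
    (F : Set (Submodule K V)) : Prop :=
  ¬ ∃ F₀ F₁ F₂ : Submodule K V, F₀ ∈ F ∧ F₁ ∈ F ∧ F₂ ∈ F ∧
    F₀ ≠ F₁ ∧ F₀ ≠ F₂ ∧ F₁ ≠ F₂ ∧ F₀ ≤ (F₀ ⊓ F₁) ⊔ (F₀ ⊓ F₂)

/-- The Gaussian binomial coefficient `[m choose k]_q` as a rational number. -/
def GaussQ (q m k : ℕ) : ℚ :=
  ∏ i ∈ Finset.range k, ((q : ℚ) ^ (m - i) - 1) / ((q : ℚ) ^ (k - i) - 1)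

/-
Charge a `(t + 1)`-frame to a member of the family if one of its tails spans a subspace lying in
that member only; nested tails force this member to be unique. By cover-freeness, of two
complementary subspaces of a member at least one is private to it. Averaging over the general
linear group, the proportions `p j` of private `j`-subspaces of a member satisfy
`1 ≤ p (t - 1) + p (t + 1)`, and averaging over the translates of a spread of `q ^ t + 1` pairwise
complementary `t`-subspaces gives `q ^ t / (q ^ t + 1) ≤ p t`. Hence every member is charged at
least a fixed number of frames, strictly more if `p (t + 1) < 1`, and the total number of
`(t + 1)`-frames yields the bound on the size of the family. If it is attained, then
`p (t + 1) = 1` for every member, so no two members share a `(t + 1)`-subspace.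
-/

theorem ncard_setOf_smul_mem_mul_card {G X : Type*} [Group G] [MulAction G X]
    [MulAction.IsPretransitive G X] (T : Set X) (x : X) :
    {g : G | g • x ∈ T}.ncard * Nat.card X = T.ncard * Nat.card G := by
  choose h hx using MulAction.exists_smul_eq G x
  rw [← Nat.card_coe_set_eq, ← Nat.card_coe_set_eq, ← Nat.card_prod, ← Nat.card_prod]
  exact Nat.card_congr
    { toFun p := (⟨p.1.1 • x, p.1.2⟩, p.1.1 * (h p.2)⁻¹)
      invFun p := (⟨p.2 * h (p.2⁻¹ • p.1.1), by simp [mul_smul, hx]⟩, p.2⁻¹ • p.1.1)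
      left_inv := by
        rintro ⟨g, y⟩
        have hy : (g.1 * (h y)⁻¹)⁻¹ • g.1 • x = y := by simp [mul_smul, hx]
        simp only [hy, inv_mul_cancel_right]
      right_inv := by rintro ⟨z, g⟩; simp [mul_smul, hx] }

section Frames

open scoped LinearAlgebra.Projectivization

variable {K W : Type*} [Field K] [AddCommGroup W] [Module K W]

variable (K W) in
/-- The `j`-frames of `W`, that is, the linearly independent `j`-tuples of vectors, as an invariant
subset for the coordinatewise action of the general linear group of `W`. -/
def frames (j : ℕ) : SubMulAction (W ≃ₗ[K] W) (Fin j → W) where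
  carrier := {x | LinearIndependent K x}
  smul_mem' g _ hx := hx.map' g.toLinearMap g.ker

theorem mem_frames {j : ℕ} {x : Fin j → W} : x ∈ frames K W j ↔ LinearIndependent K x :=
  Iff.rfl

theorem span_range_smul {j : ℕ} (g : W ≃ₗ[K] W) (x : Fin j → W) :
    Submodule.span K (Set.range (g • x)) =
      (Submodule.span K (Set.range x)).map g.toLinearMap := by
  rw [← Submodule.span_image, ← Set.range_comp]
  rfl

theorem exists_linearEquiv_apply_eq [FiniteDimensional K W] {ι : Type*} {x y : ι → W}
    (hx : LinearIndependent K x) (hy : LinearIndependent K y) :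
    ∃ g : W ≃ₗ[K] W, ∀ i, g (x i) = y i := by
  obtain ⟨g, hg⟩ := Submodule.exists_linearEquiv_restrict_eq
    ((Module.Basis.span hx).equiv (Module.Basis.span hy) (Equiv.refl ι))
  refine ⟨g, fun i ↦ ?_⟩
  calc g (x i) = g (Module.Basis.span hx i) := by rw [Module.Basis.span_apply]
    _ = y i := by rw [← hg, Module.Basis.equiv_apply, Module.Basis.span_apply, Equiv.refl_apply]

instance isPretransitive_frames [FiniteDimensional K W] (j : ℕ) :
    MulAction.IsPretransitive (W ≃ₗ[K] W) (frames K W j) where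
  exists_smul_eq x y := by
    obtain ⟨g, hg⟩ := exists_linearEquiv_apply_eq (mem_frames.1 x.2) (mem_frames.1 y.2)
    exact ⟨g, Subtype.ext (funext hg)⟩

theorem exists_mem_frames_span_eq [FiniteDimensional K W] (S : Submodule K W) :
    ∃ x ∈ frames K W (Module.finrank K S), Submodule.span K (Set.range x) = S := by
  let b := Module.finBasis K S
  refine ⟨S.subtype ∘ b, b.linearIndependent.map' S.subtype S.ker_subtype, ?_⟩
  rw [Set.range_comp, Submodule.span_image, b.span_eq, Submodule.map_top, Submodule.range_subtype]

/-- The proportion of the `j`-frames of `W` whose span satisfies `P`. Since all `j`-dimensional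
subspaces are spanned by equally many `j`-frames, this is also the proportion of the
`j`-dimensional subspaces satisfying `P`. -/
noncomputable def frameDensity (P : Submodule K W → Prop) (j : ℕ) : ℚ :=
  {x : frames K W j | P (Submodule.span K (Set.range x.1))}.ncard / Nat.card (frames K W j)

section Finite

variable [Finite W] {P : Submodule K W → Prop}

theorem frameDensity_le_one (P : Submodule K W → Prop) (j : ℕ) : frameDensity P j ≤ 1 :=
  div_le_one_of_le₀ (mod_cast Set.ncard_le_card _) (Nat.cast_nonneg _)

theorem frameDensity_lt_one {j : ℕ} {x : Fin j → W} (hx : x ∈ frames K W j)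
    (hP : ¬ P (Submodule.span K (Set.range x))) : frameDensity P j < 1 := by
  have : Nonempty (frames K W j) := ⟨⟨x, hx⟩⟩
  rw [frameDensity, div_lt_one (mod_cast Nat.card_pos), Nat.cast_lt, ← Set.ncard_univ]
  exact Set.ncard_lt_ncard <| Set.ssubset_univ_iff.2 <|
    ((Set.ne_univ_iff_exists_notMem _).2 ⟨⟨x, hx⟩, hP⟩)

instance finite_linearEquiv : Finite (W ≃ₗ[K] W) :=
  DFunLike.finite _

theorem ncard_setOf_map (P : Submodule K W → Prop) (S : Submodule K W) :
    ({g : W ≃ₗ[K] W | P (S.map g.toLinearMap)}.ncard : ℚ) =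
      frameDensity P (Module.finrank K S) * Nat.card (W ≃ₗ[K] W) := by
  obtain ⟨x, hx, hxS⟩ := exists_mem_frames_span_eq S
  have : Nonempty (frames K W (Module.finrank K S)) := ⟨⟨x, hx⟩⟩
  have hcount := ncard_setOf_smul_mem_mul_card (G := W ≃ₗ[K] W)
    {y : frames K W (Module.finrank K S) | P (Submodule.span K (Set.range y.1))} ⟨x, hx⟩
  simp only [Set.mem_ofPred_eq, SubMulAction.val_smul, span_range_smul, hxS] at hcount
  rw [frameDensity, div_mul_eq_mul_div, eq_div_iff (mod_cast Nat.card_pos.ne')]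
  exact_mod_cast hcount

theorem card_le_sum_frameDensity_add_one
    (hP : ∀ X Y, IsCompl X Y → P X ∨ P Y)
    {ι : Type*} [Fintype ι] {S : ι → Submodule K W} (hS : Pairwise fun i j ↦ IsCompl (S i) (S j)) :
    (Fintype.card ι : ℚ) ≤ ∑ i, frameDensity P (Module.finrank K (S i)) + 1 := by
  classical
  have := Fintype.ofFinite (W ≃ₗ[K] W)
  let r (g : W ≃ₗ[K] W) (i : ι) : Prop := P ((S i).map g.toLinearMap)
  have hr (g : W ≃ₗ[K] W) :
      Fintype.card ι ≤ (Finset.univ.bipartiteAbove r g).card + 1 := by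
    have hfail : (Finset.univ.filter fun i ↦ ¬ r g i).card ≤ 1 := by
      rw [Finset.card_le_one]
      simp only [Finset.mem_filter_univ]
      intro i hi j hj
      by_contra hij
      exact (hP _ _ ((Submodule.orderIsoMapComap g).isCompl (hS hij))).elim hi hj
    have hsplit := Finset.univ.card_filter_add_card_filter_not (r g)
    rw [Finset.card_univ] at hsplit
    rw [Finset.bipartiteAbove]
    lia
  have hcount : Fintype.card ι * Nat.card (W ≃ₗ[K] W) ≤
      ∑ i, {g : W ≃ₗ[K] W | r g i}.ncard + Nat.card (W ≃ₗ[K] W) := by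
    calc Fintype.card ι * Nat.card (W ≃ₗ[K] W)
        = ∑ _g : W ≃ₗ[K] W, Fintype.card ι := by simp [mul_comm]
      _ ≤ ∑ g, ((Finset.univ.bipartiteAbove r g).card + 1) := Finset.sum_le_sum fun g _ ↦ hr g
      _ = ∑ i, (Finset.univ.bipartiteBelow r i).card + Nat.card (W ≃ₗ[K] W) := by
        rw [Finset.sum_add_distrib, Finset.sum_card_bipartiteAbove_eq_sum_card_bipartiteBelow]
        simp
      _ = ∑ i, {g : W ≃ₗ[K] W | r g i}.ncard + Nat.card (W ≃ₗ[K] W) := by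
        simp only [Set.ncard_eq_toFinset_card', Set.toFinset_ofPred, Finset.bipartiteBelow]
  have hpos : (0 : ℚ) < Nat.card (W ≃ₗ[K] W) := mod_cast Nat.card_pos
  refine le_of_mul_le_mul_right ?_ hpos
  rw [add_mul, one_mul, Finset.sum_mul, ← Finset.sum_congr rfl fun i _ ↦ ncard_setOf_map P (S i)]
  exact_mod_cast hcount

theorem one_le_frameDensity_add_frameDensity
    (hP : ∀ X Y, IsCompl X Y → P X ∨ P Y) {a b : ℕ} (hab : a + b = Module.finrank K W) :
    1 ≤ frameDensity P a + frameDensity P b := by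
  obtain ⟨x, hx⟩ := exists_linearIndependent_of_le_finrank (R := K) (M := W) (n := a) (by lia)
  obtain ⟨Y, hXY⟩ := Submodule.exists_isCompl (Submodule.span K (Set.range x))
  have hX : Module.finrank K (Submodule.span K (Set.range x)) = a := by
    rw [finrank_span_eq_card hx, Fintype.card_fin]
  have hY : Module.finrank K Y = b := by
    have := Submodule.finrank_add_eq_of_isCompl hXY
    lia
  have hsum := card_le_sum_frameDensity_add_one hP
    (S := fun i : Bool ↦ bif i then Submodule.span K (Set.range x) else Y)
    (by rintro (_ | _) (_ | _) h <;> first | exact absurd rfl h | exact hXY | exact hXY.symm)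
  rw [Fintype.sum_bool] at hsum
  dsimp only [cond_true, cond_false] at hsum
  rw [hX, hY, Fintype.card_bool, Nat.cast_ofNat] at hsum
  linarith

end Finite

theorem exists_spread [Finite K] [FiniteDimensional K W] {t : ℕ} (ht : t ≠ 0)
    (hW : Module.finrank K W = 2 * t) :
    ∃ S : Fin (Nat.card K ^ t + 1) → Submodule K W,
      (∀ i, Module.finrank K (S i) = t) ∧ Pairwise fun i j ↦ IsCompl (S i) (S j) := by
  obtain ⟨p, _⟩ := CharP.exists K
  have : Fact p.Prime := ⟨CharP.char_is_prime K p⟩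
  have : NeZero t := ⟨ht⟩
  let L := FiniteField.Extension K p t
  have hL : Module.finrank K L = t := FiniteField.finrank_extension K p t
  have hL2 : Module.finrank L (L × L) = 2 := by rw [Module.finrank_prod, Module.finrank_self]
  let e : (L × L) ≃ₗ[K] W := LinearEquiv.ofFinrankEq _ _ <| by
    rw [Module.finrank_prod, hL, hW, two_mul]
  have hcard : Nat.card (ℙ L (L × L)) = Nat.card K ^ t + 1 := by
    rw [Projectivization.card_of_finrank_two L _ hL2, FiniteField.natCard_extension]
  have : Finite (ℙ L (L × L)) := Nat.finite_of_card_ne_zero (by lia)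
  let point := (Finite.equivFinOfCardEq hcard).symm
  refine ⟨fun i ↦ ((point i).submodule.restrictScalars K).map e.toLinearMap, fun i ↦ ?_,
    fun i j hij ↦ (Submodule.orderIsoMapComap e).isCompl ?_⟩
  · rw [LinearEquiv.finrank_map_eq]
    change Module.finrank K (point i).submodule = t
    rw [← Module.finrank_mul_finrank K L, hL, Projectivization.finrank_submodule, mul_one]
  · have hatom (x : ℙ L (L × L)) : IsAtom x.submodule :=
      Submodule.isAtom_iff_finrank_eq_one.2 x.finrank_submodule
    have hdisj : Disjoint (point i).submodule (point j).submodule :=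
      (hatom _).disjoint_of_ne (hatom _)
        (Projectivization.submodule_injective.ne (point.injective.ne hij))
    have hcompl : IsCompl (point i).submodule (point j).submodule :=
      (Submodule.isCompl_iff_disjoint _ _ (by simp [Projectivization.finrank_submodule])).2 hdisj
    exact hcompl.map (Submodule.restrictScalarsLatticeHom K L (L × L))

theorem div_le_frameDensity [Finite K] [FiniteDimensional K W] {P : Submodule K W → Prop}
    (hP : ∀ X Y, IsCompl X Y → P X ∨ P Y) {t : ℕ} (ht : t ≠ 0)
    (hW : Module.finrank K W = 2 * t) :
    (Nat.card K : ℚ) ^ t / ((Nat.card K : ℚ) ^ t + 1) ≤ frameDensity P t := by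
  have : Finite W := Module.finite_of_finite K
  obtain ⟨S, hSt, hS⟩ := exists_spread ht hW
  have hsum := card_le_sum_frameDensity_add_one hP hS
  simp only [hSt, Fintype.card_fin, Finset.sum_const, Finset.card_univ, nsmul_eq_mul, Nat.cast_add,
    Nat.cast_pow, Nat.cast_one, add_le_add_iff_right] at hsum
  rwa [div_le_iff₀' (by positivity)]

end Frames

section Arithmetic

/-- The number of `j`-frames of an `m`-dimensional vector space over a field with `q` elements;
`q` is rational so that no subtraction is truncated. -/
def numFrames (q : ℚ) (m j : ℕ) : ℚ :=
  ∏ i ∈ Finset.range j, (q ^ m - q ^ i)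

theorem numFrames_succ (q : ℚ) (m j : ℕ) :
    numFrames q m (j + 1) = numFrames q m j * (q ^ m - q ^ j) :=
  Finset.prod_range_succ _ _

theorem numFrames_succ_succ (q : ℚ) (m j : ℕ) :
    numFrames q (m + 1) (j + 1) = (q ^ (m + 1) - 1) * q ^ j * numFrames q m j := by
  have hfactor (i : ℕ) : q ^ (m + 1) - q ^ (i + 1) = q * (q ^ m - q ^ i) := by ring
  rw [numFrames, Finset.prod_range_succ', Finset.prod_congr rfl fun i _ ↦ hfactor i,
    Finset.prod_mul_distrib, Finset.prod_const, Finset.card_range, numFrames]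
  ring

theorem numFrames_pos {q : ℚ} (hq : 1 < q) {m j : ℕ} (hj : j ≤ m) : 0 < numFrames q m j :=
  Finset.prod_pos fun _ hi ↦ sub_pos.2 <|
    pow_lt_pow_right₀ hq ((Finset.mem_range.1 hi).trans_le hj)

theorem numFrames_eq_prod_mul_prod (q : ℚ) {m j : ℕ} (hj : j ≤ m) :
    numFrames q m j =
      (∏ i ∈ Finset.range j, q ^ i) * ∏ i ∈ Finset.range j, (q ^ (m - i) - 1) := by
  rw [numFrames, ← Finset.prod_mul_distrib]
  refine Finset.prod_congr rfl fun i hi ↦ ?_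
  rw [mul_sub, ← pow_add, mul_one, Nat.add_sub_cancel' ((Finset.mem_range.1 hi).le.trans hj)]

theorem gaussQ_eq_numFrames_div {q m k : ℕ} (hq : q ≠ 0) (hk : k ≤ m) :
    GaussQ q m k = numFrames q m k / numFrames q k k := by
  rw [numFrames_eq_prod_mul_prod _ hk, numFrames_eq_prod_mul_prod _ le_rfl, mul_div_mul_left,
    GaussQ, Finset.prod_div_distrib]
  exact Finset.prod_ne_zero_iff.2 fun i _ ↦ by positivity

theorem gaussQ_div_gaussQ {q m m' k : ℕ} (hq : 1 < q) (hm : k ≤ m) (hm' : k ≤ m') :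
    GaussQ q m k / GaussQ q m' k = numFrames q m k / numFrames q m' k := by
  rw [gaussQ_eq_numFrames_div (by lia) hm, gaussQ_eq_numFrames_div (by lia) hm',
    div_div_div_cancel_right₀ (numFrames_pos (mod_cast hq) le_rfl).ne']

/-- The number of `(s + 2)`-frames of an `n`-dimensional space charged to a member `A` of dimension
`2 * (s + 1)` whose private `j`-frames have density `p j`, where only frames are counted whose
longest tail in `A` is private of length `s`, `s + 1` or `s + 2`, giving one summand each. -/
def charge (q : ℚ) (n s : ℕ) (p : ℕ → ℚ) : ℚ :=
  p s * numFrames q (2 * (s + 1)) s * (q ^ n - q ^ (2 * (s + 1))) * (q ^ n - q ^ (s + 1)) +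
    p (s + 1) * numFrames q (2 * (s + 1)) (s + 1) * (q ^ n - q ^ (2 * (s + 1))) +
    p (s + 2) * numFrames q (2 * (s + 1)) (s + 2)

theorem numFrames_two_mul_succ (q : ℚ) (s : ℕ) :
    numFrames q (2 * (s + 1)) (s + 1) = (q ^ (s + 1) + 1) * numFrames q (2 * s + 1) (s + 1) := by
  rw [numFrames_succ q (2 * s + 1), show 2 * (s + 1) = 2 * s + 1 + 1 by ring, numFrames_succ_succ]
  ring

theorem pow_sub_mul_pow_sub_lt {R : Type*} [CommRing R] [LinearOrder R] [IsStrictOrderedRing R]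
    {q : R} (hq : 2 ≤ q) {a b d n : ℕ} (hab : a ≤ b) (hbd : b < d) (hdn : d < n) :
    (q ^ d - q ^ a) * (q ^ d - q ^ b) < (q ^ n - q ^ d) * (q ^ n - q ^ b) := by
  have ha : 0 < q ^ a := pow_pos (by linarith) a
  have hab' : q ^ a ≤ q ^ b := pow_le_pow_right₀ (by linarith) hab
  have hbd' : q ^ b < q ^ d := pow_lt_pow_right₀ (by linarith) hbd
  have hdn' : 2 * q ^ d ≤ q ^ n :=
    calc 2 * q ^ d ≤ q * q ^ d := mul_le_mul_of_nonneg_right hq (pow_nonneg (by linarith) d)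
      _ = q ^ (d + 1) := by ring
      _ ≤ q ^ n := pow_le_pow_right₀ (by linarith) hdn
  apply mul_lt_mul' <;> linarith

theorem exists_pos_forall_add_le_charge {q : ℚ} (hq : 2 ≤ q) {m s : ℕ} (hm : 2 * (s + 1) ≤ m) :
    ∃ γ > 0, ∀ p : ℕ → ℚ, 1 ≤ p s + p (s + 2) → q ^ (s + 1) / (q ^ (s + 1) + 1) ≤ p (s + 1) →
      (q ^ (m + 1) - 1) * q ^ (s + 1) * numFrames q (2 * s + 1) (s + 1) + (1 - p (s + 2)) * γ ≤
        charge q (m + 1) s p := by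
  have hD : q ^ (2 * (s + 1)) = q ^ (s + 1) * q ^ (s + 1) := by ring
  have hL₁ := numFrames_two_mul_succ q s
  have hL₂ : numFrames q (2 * (s + 1)) (s + 2) =
      numFrames q (2 * (s + 1)) (s + 1) * (q ^ (2 * (s + 1)) - q ^ (s + 1)) := numFrames_succ ..
  have hL₂' : numFrames q (2 * (s + 1)) (s + 2) = numFrames q (2 * (s + 1)) s *
      ((q ^ (2 * (s + 1)) - q ^ s) * (q ^ (2 * (s + 1)) - q ^ (s + 1))) := by
    rw [hL₂, numFrames_succ, mul_assoc]
  have hL : 0 < numFrames q (2 * (s + 1)) s := numFrames_pos (by linarith) (by lia)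
  have hQN : q ^ (s + 1) ≤ q ^ (m + 1) := pow_le_pow_right₀ (by linarith) (by lia)
  have hDN : q ^ (2 * (s + 1)) ≤ q ^ (m + 1) := pow_le_pow_right₀ (by linarith) (by lia)
  have hgap := pow_sub_mul_pow_sub_lt hq s.le_succ (show s + 1 < 2 * (s + 1) by lia)
    (show 2 * (s + 1) < m + 1 by lia)
  have hQ : 0 < q ^ (s + 1) := by positivity
  unfold charge
  set L := numFrames q (2 * (s + 1)) s
  set M := numFrames q (2 * s + 1) (s + 1)
  set L₁ := numFrames q (2 * (s + 1)) (s + 1)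
  set L₂ := numFrames q (2 * (s + 1)) (s + 2)
  set D := q ^ (2 * (s + 1))
  set Q := q ^ (s + 1)
  set N := q ^ (m + 1)
  refine ⟨L * ((N - D) * (N - Q) - (D - q ^ s) * (D - Q)), mul_pos hL (sub_pos.2 hgap),
    fun p h₀ h₁ ↦ ?_⟩
  have hQM : Q / (Q + 1) * L₁ = Q * M := by
    rw [hL₁, ← mul_assoc, div_mul_cancel₀ Q (by positivity)]
  calc (N - 1) * Q * M + (1 - p (s + 2)) * (L * ((N - D) * (N - Q) - (D - q ^ s) * (D - Q)))
      = (1 - p (s + 2)) * L * (N - D) * (N - Q) + Q / (Q + 1) * L₁ * (N - D) +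
          p (s + 2) * L₂ := by
        linear_combination (1 - p (s + 2)) * hL₂' - (N - D) * hQM - hL₂ - (D - Q) * hL₁ - M * hD
    _ ≤ p s * L * (N - D) * (N - Q) + p (s + 1) * L₁ * (N - D) + p (s + 2) * L₂ := by
        have : 0 ≤ N - D := sub_nonneg.2 hDN
        have : 0 ≤ N - Q := sub_nonneg.2 hQN
        have hL₁_nonneg : 0 ≤ L₁ := (numFrames_pos (by linarith) (by lia)).le
        gcongr
        linarith

end Arithmetic

section Counting

variable {K V : Type*} [Field K] [Finite K] [AddCommGroup V] [Module K V] [FiniteDimensional K V]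

theorem natCard_frames {j : ℕ} (hj : j ≤ Module.finrank K V) :
    (Nat.card (frames K V j) : ℚ) = numFrames (Nat.card K) (Module.finrank K V) j := by
  have := Fintype.ofFinite K
  have : Finite V := Module.finite_of_finite K
  have hcard : Nat.card (frames K V j) = _ := card_linearIndependent hj
  rw [hcard, Nat.cast_prod, numFrames, Finset.prod_range, Nat.card_eq_fintype_card]
  refine Finset.prod_congr rfl fun i _ ↦ ?_
  rw [Nat.cast_sub (Nat.pow_le_pow_right Fintype.card_pos (by lia)), Nat.cast_pow, Nat.cast_pow]

theorem natCard_notMem (U : Submodule K V) :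
    (Nat.card {v : V // v ∉ U} : ℚ) =
      (Nat.card K : ℚ) ^ Module.finrank K V - (Nat.card K : ℚ) ^ Module.finrank K U := by
  have : Finite V := Module.finite_of_finite K
  have hsplit := Set.ncard_add_ncard_compl (U : Set V)
  rw [← Nat.card_coe_set_eq, ← Nat.card_coe_set_eq, Module.natCard_eq_pow_finrank (K := K) (V := V),
    SetLike.coe_sort_coe, Module.natCard_eq_pow_finrank (K := K) (V := U)] at hsplit
  rw [eq_sub_iff_add_eq']
  exact_mod_cast hsplit

end Counting

section Extend

variable {K V : Type*} [Field K] [AddCommGroup V] [Module K V]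

/-- The tuples obtained from some `x` in `T` by prepending a vector outside `U x`. -/
def extendOutside {j : ℕ} (T : Set (Fin j → V)) (U : (Fin j → V) → Submodule K V) :
    Set (Fin (j + 1) → V) :=
  {y | Fin.tail y ∈ T ∧ y 0 ∉ U (Fin.tail y)}

theorem ncard_extendOutside [Finite K] [FiniteDimensional K V] {j d : ℕ} {T : Set (Fin j → V)}
    {U : (Fin j → V) → Submodule K V} (hU : ∀ x ∈ T, Module.finrank K (U x) = d) :
    ((extendOutside T U).ncard : ℚ) =
      T.ncard * ((Nat.card K : ℚ) ^ Module.finrank K V - (Nat.card K : ℚ) ^ d) := by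
  have : Finite V := Module.finite_of_finite K
  have := Fintype.ofFinite T
  let e : extendOutside T U ≃ Σ x : T, {v : V // v ∉ U x} :=
    { toFun y := ⟨⟨Fin.tail y.1, y.2.1⟩, y.1 0, y.2.2⟩
      invFun p := ⟨Fin.cons p.2.1 p.1.1, p.1.2, p.2.2⟩
      left_inv y := Subtype.ext (Fin.cons_self_tail y.1)
      right_inv p := rfl }
  rw [← Nat.card_coe_set_eq, Nat.card_congr e, Nat.card_sigma, Nat.cast_sum,
    Finset.sum_congr rfl fun x _ ↦ by rw [natCard_notMem, hU x x.2], Finset.sum_const,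
    Finset.card_univ, nsmul_eq_mul, ← Nat.card_eq_fintype_card, Nat.card_coe_set_eq]

end Extend

section Private

variable {K V : Type*} [Field K] [AddCommGroup V] [Module K V] {F : Set (Submodule K V)}
  {A B : Submodule K V} {j : ℕ}

/-- `U` is a private subspace of `A` with respect to the family `F`: it lies in `A` and in no other
member of `F`. -/
def IsPrivate (F : Set (Submodule K V)) (A U : Submodule K V) : Prop :=
  U ≤ A ∧ ∀ B ∈ F, U ≤ B → B = A

theorem IsCoverFree.isPrivate_or_isPrivate (hF : IsCoverFree F) (hanti : IsAntichain (· ≤ ·) F)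
    (hA : A ∈ F) {X Y : Submodule K V} (hX : X ≤ A) (hY : Y ≤ A) (hXY : A ≤ X ⊔ Y) :
    IsPrivate F A X ∨ IsPrivate F A Y := by
  by_contra! hcon
  simp only [IsPrivate, hX, hY, true_and, not_forall] at hcon
  obtain ⟨⟨B, hB, hXB, hBA⟩, C, hC, hYC, hCA⟩ := hcon
  have hBC : B ≠ C := by
    rintro rfl
    exact hBA (hanti.eq hA hB (hXY.trans (sup_le hXB hYC))).symm
  exact hF ⟨A, B, C, hA, hB, hC, Ne.symm hBA, Ne.symm hCA, hBC,
    hXY.trans (sup_le_sup (le_inf hX hXB) (le_inf hY hYC))⟩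

theorem IsCoverFree.isPrivate_map_subtype_or (hF : IsCoverFree F)
    (hanti : IsAntichain (· ≤ ·) F) (hA : A ∈ F) (X Y : Submodule K A) (hXY : IsCompl X Y) :
    IsPrivate F A (X.map A.subtype) ∨ IsPrivate F A (Y.map A.subtype) :=
  hF.isPrivate_or_isPrivate hanti hA (Submodule.map_subtype_le A X) (Submodule.map_subtype_le A Y)
    (by rw [← Submodule.map_sup, hXY.sup_eq_top, Submodule.map_top, Submodule.range_subtype])

theorem isAntichain_of_finrank_eq [FiniteDimensional K V] {d : ℕ}
    (hd : ∀ A ∈ F, Module.finrank K A = d) : IsAntichain (· ≤ ·) F :=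
  fun A hA B hB hne hle ↦
    hne (Submodule.eq_of_le_of_finrank_eq hle ((hd A hA).trans (hd B hB).symm))

/-- The `j`-frames of `V` that span a private subspace of `A`. -/
def privateFrames (F : Set (Submodule K V)) (A : Submodule K V) (j : ℕ) : Set (Fin j → V) :=
  {x | LinearIndependent K x ∧ IsPrivate F A (Submodule.span K (Set.range x))}

/-- The proportion of the `j`-frames of `A` that span a private subspace of `A`. -/
noncomputable def privateDensity (F : Set (Submodule K V)) (A : Submodule K V) (j : ℕ) : ℚ :=
  frameDensity (fun X : Submodule K A ↦ IsPrivate F A (X.map A.subtype)) j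

theorem apply_mem_of_mem_privateFrames {x : Fin j → V} (hx : x ∈ privateFrames F A j) (i : Fin j) :
    x i ∈ A :=
  hx.2.1 (Submodule.subset_span (Set.mem_range_self i))

theorem span_range_subtype_comp {ι : Type*} (x : ι → A) :
    Submodule.span K (Set.range (A.subtype ∘ x)) =
      (Submodule.span K (Set.range x)).map A.subtype := by
  rw [Set.range_comp, Submodule.span_image]

theorem image_subtype_comp_eq_privateFrames :
    (fun x : frames K A j ↦ A.subtype ∘ x.1) ''
      {x | IsPrivate F A ((Submodule.span K (Set.range x.1)).map A.subtype)} =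
    privateFrames F A j := by
  ext x
  constructor
  · rintro ⟨y, hy, rfl⟩
    exact ⟨y.2.map' A.subtype A.ker_subtype, (span_range_subtype_comp y.1).symm ▸ hy⟩
  · intro hx
    let y : Fin j → A := fun i ↦ ⟨x i, apply_mem_of_mem_privateFrames hx i⟩
    refine ⟨⟨y, LinearIndependent.of_comp A.subtype hx.1⟩, ?_, rfl⟩
    rw [Set.mem_ofPred_eq, ← span_range_subtype_comp]
    exact hx.2

theorem ncard_privateFrames [Finite K] [FiniteDimensional K V] (hj : j ≤ Module.finrank K A) :
    ((privateFrames F A j).ncard : ℚ) =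
      privateDensity F A j * numFrames (Nat.card K) (Module.finrank K A) j := by
  have hinj : Function.Injective fun x : frames K A j ↦ A.subtype ∘ x.1 :=
    A.subtype_injective.comp_left.comp Subtype.val_injective
  rw [← image_subtype_comp_eq_privateFrames, Set.ncard_image_of_injective _ hinj, privateDensity,
    frameDensity, natCard_frames hj,
    div_mul_cancel₀ _ (numFrames_pos (mod_cast Finite.one_lt_card) hj).ne']

theorem privateDensity_lt_one [Finite V] (hB : B ∈ F) (hBA : B ≠ A)
    (hj : j ≤ Module.finrank K ↥(A ⊓ B)) : privateDensity F A j < 1 := by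
  obtain ⟨x, hx⟩ := exists_linearIndependent_of_le_finrank hj
  refine frameDensity_lt_one
    (hx.map' (Submodule.inclusion inf_le_left) (Submodule.ker_inclusion _ _ inf_le_left))
    fun hpriv ↦ hBA (hpriv.2 B hB ?_)
  rw [← span_range_subtype_comp, Submodule.span_le]
  rintro _ ⟨i, rfl⟩
  exact (x i).2.2

/-- The `j`-frames charged to `A`: those with a tail that spans a private subspace of `A`. -/
def chargedFrames (F : Set (Submodule K V)) (A : Submodule K V) (j : ℕ) : Set (Fin j → V) :=
  {x | LinearIndependent K x ∧ ∃ m : ℕ, IsPrivate F A (Submodule.span K (x '' {i | m ≤ i}))}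

theorem disjoint_chargedFrames (hA : A ∈ F) (hB : B ∈ F) (hAB : A ≠ B) :
    Disjoint (chargedFrames F A j) (chargedFrames F B j) := by
  rw [Set.disjoint_left]
  rintro x ⟨-, m, hmA, hmA'⟩ ⟨-, m', hmB, hmB'⟩
  have htail {a b : ℕ} (hab : a ≤ b) :
      Submodule.span K (x '' {i | b ≤ i}) ≤ Submodule.span K (x '' {i | a ≤ i}) :=
    Submodule.span_mono (Set.image_mono fun _ ↦ hab.trans)
  rcases le_total m m' with h | h
  · exact hAB (hmB' A hA ((htail h).trans hmA))
  · exact hAB (hmA' B hB ((htail h).trans hmB)).symm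

theorem privateFrames_subset_chargedFrames : privateFrames F A j ⊆ chargedFrames F A j :=
  fun x hx ↦ ⟨hx.1, 0, by simpa using hx.2⟩

theorem extendOutside_subset_chargedFrames {T : Set (Fin j → V)}
    {U : (Fin j → V) → Submodule K V} (hT : T ⊆ chargedFrames F A j)
    (hU : ∀ x ∈ T, Submodule.span K (Set.range x) ≤ U x) :
    extendOutside T U ⊆ chargedFrames F A (j + 1) := by
  rintro y ⟨hyT, hy0⟩
  obtain ⟨hy, m, hm⟩ := hT hyT
  have htail : y '' {i | m + 1 ≤ i} = Fin.tail y '' {i | m ≤ i} := by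
    ext v
    simp [Fin.exists_fin_succ, Fin.tail]
  exact ⟨linearIndependent_finSucc.2 ⟨hy, fun h ↦ hy0 (hU _ hyT h)⟩, m + 1, htail ▸ hm⟩

theorem charge_le_ncard_chargedFrames [Finite K] [FiniteDimensional K V] {s : ℕ}
    (hA : Module.finrank K A = 2 * (s + 1)) :
    charge (Nat.card K) (Module.finrank K V) s (privateDensity F A) ≤
      (chargedFrames F A (s + 2)).ncard := by
  have : Finite V := Module.finite_of_finite K
  have hspan {i : ℕ} : ∀ x ∈ privateFrames F A i, Submodule.span K (Set.range x) ≤ A :=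
    fun x hx ↦ hx.2.1
  have hEs : extendOutside (privateFrames F A s) (fun _ ↦ A) ⊆ chargedFrames F A (s + 1) :=
    extendOutside_subset_chargedFrames privateFrames_subset_chargedFrames hspan
  let E₀ : Set (Fin (s + 2) → V) := extendOutside
    (extendOutside (privateFrames F A s) fun _ ↦ A) fun x ↦ Submodule.span K (Set.range x)
  let E₁ : Set (Fin (s + 2) → V) := extendOutside (privateFrames F A (s + 1)) fun _ ↦ A
  let E₂ : Set (Fin (s + 2) → V) := privateFrames F A (s + 2)
  have h₀₁ : Disjoint E₀ E₁ := Set.disjoint_left.2 fun y h₀ h₁ ↦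
    h₀.1.2 (apply_mem_of_mem_privateFrames h₁.1 0)
  have h₀₂ : Disjoint E₀ E₂ := Set.disjoint_left.2 fun y h₀ h₂ ↦
    h₀.1.2 (apply_mem_of_mem_privateFrames h₂ 1)
  have h₁₂ : Disjoint E₁ E₂ := Set.disjoint_left.2 fun y h₁ h₂ ↦
    h₁.2 (apply_mem_of_mem_privateFrames h₂ 0)
  have hsub : E₀ ∪ E₁ ∪ E₂ ⊆ chargedFrames F A (s + 2) :=
    Set.union_subset (Set.union_subset
      (extendOutside_subset_chargedFrames hEs fun _ _ ↦ le_rfl)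
      (extendOutside_subset_chargedFrames privateFrames_subset_chargedFrames hspan))
      privateFrames_subset_chargedFrames
  calc charge (Nat.card K) (Module.finrank K V) s (privateDensity F A)
      = E₀.ncard + E₁.ncard + E₂.ncard := by
        rw [ncard_extendOutside (d := s + 1) fun x hx ↦
            (finrank_span_eq_card (hEs hx).1).trans (Fintype.card_fin _),
          ncard_extendOutside fun _ _ ↦ hA, ncard_extendOutside fun _ _ ↦ hA,
          ncard_privateFrames (by lia), ncard_privateFrames (by lia), ncard_privateFrames (by lia),
          hA, charge]
    _ = (E₀ ∪ E₁ ∪ E₂).ncard := by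
        rw [Set.ncard_union_eq (h₀₂.union_left h₁₂), Set.ncard_union_eq h₀₁, Nat.cast_add,
          Nat.cast_add]
    _ ≤ (chargedFrames F A (s + 2)).ncard := mod_cast Set.ncard_le_ncard hsub

theorem sum_ncard_chargedFrames_le [Finite V] (F : Finset (Submodule K V)) (j : ℕ) :
    ∑ A ∈ F, (chargedFrames (F : Set (Submodule K V)) A j).ncard ≤ Nat.card (frames K V j) := by
  rw [← finsum_mem_coe_finset, ← F.finite_toSet.ncard_biUnion (fun _ _ ↦ Set.toFinite _)
    fun A hA B hB ↦ disjoint_chargedFrames hA hB]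
  exact Set.ncard_le_ncard (Set.iUnion₂_subset fun A _ x hx ↦ hx.1)

end Private

section Main

variable {K V : Type*} [Field K] [Finite K] [AddCommGroup V] [Module K V] [FiniteDimensional K V]
  {F : Finset (Submodule K V)} {s : ℕ}

theorem sum_charge_le (hdim : ∀ A ∈ F, Module.finrank K A = 2 * (s + 1))
    (hn : s + 2 ≤ Module.finrank K V) :
    ∑ A ∈ F, charge (Nat.card K) (Module.finrank K V) s (privateDensity F A) ≤
      numFrames (Nat.card K) (Module.finrank K V) (s + 2) := by
  have : Finite V := Module.finite_of_finite K
  calc ∑ A ∈ F, charge (Nat.card K) (Module.finrank K V) s (privateDensity F A)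
      ≤ ∑ A ∈ F, ((chargedFrames (F : Set (Submodule K V)) A (s + 2)).ncard : ℚ) :=
        Finset.sum_le_sum fun A hA ↦ charge_le_ncard_chargedFrames (hdim A hA)
    _ ≤ Nat.card (frames K V (s + 2)) := mod_cast sum_ncard_chargedFrames_le F (s + 2)
    _ = numFrames (Nat.card K) (Module.finrank K V) (s + 2) := natCard_frames hn

theorem IsCoverFree.card_lt_gaussQ_div {m : ℕ}
    (hF : IsCoverFree (F : Set (Submodule K V)))
    (hdim : ∀ A ∈ F, Module.finrank K A = 2 * (s + 1)) (hV : Module.finrank K V = m + 1)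
    (hm : 2 * (s + 1) ≤ m) {A B : Submodule K V} (hA : A ∈ F) (hB : B ∈ F) (hBA : B ≠ A)
    (hAB : s + 2 ≤ Module.finrank K ↥(A ⊓ B)) :
    (F.card : ℚ) < GaussQ (Nat.card K) m (s + 1) / GaussQ (Nat.card K) (2 * s + 1) (s + 1) := by
  have : Finite V := Module.finite_of_finite K
  set q := Nat.card K
  have hq : 1 < q := Finite.one_lt_card
  obtain ⟨γ, hγ, hcharge⟩ := exists_pos_forall_add_le_charge (q := q) (mod_cast hq) hm
  set w : ℚ := ((q : ℚ) ^ (m + 1) - 1) * q ^ (s + 1)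
  set M := numFrames q (2 * s + 1) (s + 1)
  have hp : ∀ C ∈ F, w * M + (1 - privateDensity F C (s + 2)) * γ ≤
      charge q (m + 1) s (privateDensity F C) := by
    intro C hC
    have hcompl := hF.isPrivate_map_subtype_or (isAntichain_of_finrank_eq hdim) hC
    exact hcharge _ (one_le_frameDensity_add_frameDensity hcompl (by rw [hdim C hC]; ring))
      (div_le_frameDensity hcompl s.succ_ne_zero (hdim C hC))
  have hle : ∀ C ∈ F, w * M ≤ charge q (m + 1) s (privateDensity F C) := fun C hC ↦
    (le_add_of_nonneg_right
      (mul_nonneg (sub_nonneg.2 (frameDensity_le_one _ _)) hγ.le)).trans (hp C hC)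
  have hlt : w * M < charge q (m + 1) s (privateDensity F A) :=
    (lt_add_of_pos_right _
      (mul_pos (sub_pos.2 (privateDensity_lt_one hB hBA hAB)) hγ)).trans_le (hp A hA)
  have hsum : w * (F.card * M) < w * numFrames q m (s + 1) :=
    calc w * (F.card * M) = ∑ _C ∈ F, w * M := by rw [Finset.sum_const, nsmul_eq_mul]; ring
      _ < ∑ C ∈ F, charge q (m + 1) s (privateDensity F C) :=
        Finset.sum_lt_sum hle ⟨A, hA, hlt⟩
      _ ≤ numFrames q (m + 1) (s + 2) := hV ▸ sum_charge_le hdim (by lia)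
      _ = w * numFrames q m (s + 1) := numFrames_succ_succ ..
  have hw : 0 ≤ w := by
    have : (1 : ℚ) ≤ q ^ (m + 1) := one_le_pow₀ (mod_cast hq.le)
    exact mul_nonneg (by linarith) (by positivity)
  rw [gaussQ_div_gaussQ hq (by lia) (by lia),
    lt_div_iff₀ (numFrames_pos (mod_cast hq) (by lia))]
  exact lt_of_mul_lt_mul_left hsum hw

end Main

theorem stmt16 (q n t : ℕ) (K : Type*) [Field K] [Fintype K] (hK : Fintype.card K = q)
    (V : Type*) [AddCommGroup V] [Module K V] [FiniteDimensional K V]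
    (hV : Module.finrank K V = n) (ht : 1 ≤ t) (hn : 2 * t + 1 ≤ n)
    (F : Set (Submodule K V)) (hdim : ∀ A ∈ F, Module.finrank K A = 2 * t)
    (hcf : IsCoverFree F)
    (hcard : (F.ncard : ℚ) = GaussQ q (n - 1) t / GaussQ q (2 * t - 1) t) :
    ∀ F₁ ∈ F, ∀ F₂ ∈ F, F₁ ≠ F₂ → Module.finrank K ↥(F₁ ⊓ F₂) ≤ t := by
  intro F₁ hF₁ F₂ hF₂ hne
  by_contra! hinf
  have : Finite V := Module.finite_of_finite K
  lift F to Finset (Submodule K V) using F.toFinite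
  obtain ⟨s, rfl⟩ : ∃ s, t = s + 1 := ⟨t - 1, by lia⟩
  obtain ⟨m, rfl⟩ : ∃ m, n = m + 1 := ⟨n - 1, by lia⟩
  rw [← Nat.card_eq_fintype_card] at hK
  subst hK
  rw [Set.ncard_coe_finset] at hcard
  exact (hcf.card_lt_gaussQ_div hdim hV (by lia) hF₁ hF₂ hne.symm hinf).ne hcard
end

section
/- Let V be an n-dimensional vector space over the finite field 𝔽_q with n ≥ 3, and let F be a cover-free family of 2-dimensional subspaces of V with |F| = [n-1 choose 1]_q = (q^{n-1}-1)/(q-1). Then F = {E ⊕ S : S a 1-dimensional subspace of W} for some 1-dimensional subspace E of V and some (n-1)-dimensional subspace W of V with E ⊕ W = V. -/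
/-!
Through every member `A` of `F` there is a line `E_A ≤ A` containing all intersections of `A` with
the other members: cover-freeness forces these intersections into a single proper subspace of `A`.
Hence the petals `A \ E_A` are pairwise disjoint and miss every `E_B`. When `F` has
`1 + q + ⋯ + q ^ (n - 2)` members, the petals have `q ^ n - q` elements in total, so they fill the
complement of each `E_B`. All the lines `E_B` therefore coincide with one line `E`, and `F`,
covering every vector outside `E` by planes through `E`, consists of all planes through `E`.
-/

open Module

section ModularLattice

variable {α : Type*} [Lattice α] [BoundedOrder α] [IsModularLattice α] {a b : α}

theorem setOf_covBy_eq_image_sup_of_isCompl (h : IsCompl a b) :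
    {x | a ⋖ x} = (fun y => a ⊔ y) '' {y | y ≤ b ∧ IsAtom y} := by
  ext x
  constructor
  · intro hx
    have hsup : a ⊔ b ⊓ x = x := by
      rw [← sup_inf_assoc_of_le b hx.le, h.sup_eq_top, top_inf_eq]
    have hinf : a ⊓ (b ⊓ x) = ⊥ := by rw [← inf_assoc, h.inf_eq_bot, bot_inf_eq]
    have hcov : a ⊓ (b ⊓ x) ⋖ b ⊓ x := inf_covBy_of_covBy_sup_left (hsup.symm ▸ hx)
    exact ⟨b ⊓ x, ⟨inf_le_left, bot_covBy_iff.1 (hinf ▸ hcov)⟩, hsup⟩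
  · rintro ⟨y, ⟨hyb, hy⟩, rfl⟩
    have hinf : a ⊓ y = ⊥ := (h.disjoint.mono_right hyb).eq_bot
    exact covBy_sup_of_inf_covBy_right (hinf ▸ hy.bot_covBy)

end ModularLattice

section Core

variable {R M : Type*} [Semiring R] [AddCommMonoid M] [Module R M]
  {F : Set (Submodule R M)} {A B E : Submodule R M}

theorem eq_setOf_covBy_of_forall_notMem (hcov : ∀ A ∈ F, E ⋖ A)
    (hmem : ∀ v ∉ E, ∃ A ∈ F, v ∈ A) : F = {A | E ⋖ A} := by
  refine Set.Subset.antisymm hcov fun A hA => ?_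
  obtain ⟨v, hvA, hvE⟩ := SetLike.exists_of_lt hA.lt
  obtain ⟨B, hB, hvB⟩ := hmem v hvE
  have hlt : E < A ⊓ B :=
    lt_of_le_not_ge (le_inf hA.le (hcov B hB).le) fun h => hvE (h ⟨hvA, hvB⟩)
  have hAB : A ≤ B := inf_eq_left.1 ((hA.eq_or_eq hlt.le inf_le_left).resolve_left hlt.ne')
  have hAB' : A = B := ((hcov B hB).eq_or_eq hA.le hAB).resolve_left hA.ne'
  rwa [hAB']

/-- `E` is a core of the member `A` of the family `F`: a subspace of `A` that contains the
intersections of `A` with all other members, so that no other member meets the petal `A \ E`. -/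
structure IsCore (F : Set (Submodule R M)) (A E : Submodule R M) : Prop where
  le : E ≤ A
  inf_le : ∀ B ∈ F, B ≠ A → A ⊓ B ≤ E

namespace IsCore

theorem disjoint_diff (hE : IsCore F A E) (hB : B ∈ F) (hBA : B ≠ A) :
    Disjoint ((A : Set M) \ E) B :=
  Set.disjoint_left.2 fun _ hv hvB => hv.2 (hE.inf_le B hB hBA ⟨hv.1, hvB⟩)

variable {e : Submodule R M → Submodule R M}

theorem pairwiseDisjoint_diff (he : ∀ A ∈ F, IsCore F A (e A)) :
    F.PairwiseDisjoint fun A => (A : Set M) \ e A :=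
  fun A hA _ hB hAB => ((he A hA).disjoint_diff hB hAB.symm).mono_right Set.sdiff_subset

theorem biUnion_diff_subset_compl (he : ∀ A ∈ F, IsCore F A (e A)) (hA : A ∈ F) :
    ⋃ B ∈ F, (B : Set M) \ e B ⊆ (e A : Set M)ᶜ := by
  refine Set.iUnion₂_subset fun B hB => Set.subset_compl_iff_disjoint_right.2 ?_
  obtain rfl | hAB := eq_or_ne A B
  · exact Set.disjoint_sdiff_left
  · exact ((he B hB).disjoint_diff hA hAB).mono_right (he A hA).le

end IsCore

end Core

section DivisionRing

variable {K V : Type*} [DivisionRing K] [AddCommGroup V] [Module K V]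
  {F : Set (Submodule K V)} {A B : Submodule K V} {e : Submodule K V → Submodule K V} {r : ℕ}

theorem covBy_of_le_of_finrank_eq_add_one (hAB : A ≤ B) (h : finrank K B = finrank K A + 1) :
    A ⋖ B := by
  have : FiniteDimensional K B := finite_of_finrank_pos (by lia)
  refine ⟨lt_of_le_of_ne hAB fun hA => by rw [hA] at h; lia, fun C hAC hCB => ?_⟩
  have : FiniteDimensional K C := Submodule.finiteDimensional_of_le hCB.le
  have := Submodule.finrank_lt_finrank_of_lt hAC
  have := Submodule.finrank_lt_finrank_of_lt hCB
  lia

theorem exists_le_finrank_eq_one (hA : A ≠ ⊥) : ∃ E ≤ A, finrank K E = 1 := by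
  obtain ⟨v, hv, hv0⟩ := Submodule.exists_mem_ne_zero_of_ne_bot hA
  exact ⟨K ∙ v, (Submodule.span_singleton_le_iff_mem v A).2 hv, finrank_span_singleton hv0⟩

theorem finrank_inf_eq_one (hA : finrank K A = 2) (hB : finrank K B = 2) (hAB : A ≠ B)
    (h : A ⊓ B ≠ ⊥) : finrank K ↥(A ⊓ B) = 1 := by
  have : FiniteDimensional K A := finite_of_finrank_pos (by lia)
  have : FiniteDimensional K B := finite_of_finrank_pos (by lia)
  have hlt : A ⊓ B < A := inf_lt_left.2 fun hle =>
    hAB (Submodule.eq_of_le_of_finrank_eq hle (hA.trans hB.symm))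
  have := Submodule.finrank_lt_finrank_of_lt hlt
  have := Submodule.one_le_finrank_iff.2 h
  lia

section Finite

variable [Finite K] [FiniteDimensional K V]

theorem ncard_coe_eq_pow_finrank (A : Submodule K V) :
    (A : Set V).ncard = Nat.card K ^ finrank K A := by
  rw [← Nat.card_coe_set_eq]
  exact natCard_eq_pow_finrank (V := A)

theorem ncard_compl_eq_pow_mul_sum (A : Submodule K V) :
    (A : Set V)ᶜ.ncard = Nat.card K ^ finrank K A * (Nat.card K - 1) *
      ∑ i ∈ Finset.range (finrank K V - finrank K A), Nat.card K ^ i := by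
  have : Finite V := Module.finite_of_finite K
  have hq : 1 ≤ Nat.card K := Nat.card_pos
  rw [Set.ncard_compl, ncard_coe_eq_pow_finrank, natCard_eq_pow_finrank (K := K) (V := V),
    mul_assoc, mul_comm (_ - 1), geom_sum_mul_of_one_le hq, Nat.mul_sub_one, ← pow_add,
    Nat.add_sub_cancel' (Submodule.finrank_le A)]

namespace IsCore

theorem ncard_biUnion_diff (he : ∀ A ∈ F, IsCore F A (e A)) (hF : ∀ A ∈ F, finrank K A = r + 1)
    (her : ∀ A ∈ F, finrank K (e A) = r) :
    (⋃ A ∈ F, (A : Set V) \ e A).ncard = Nat.card K ^ r * (Nat.card K - 1) * F.ncard := by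
  have : Finite V := Module.finite_of_finite K
  have hpetal : ∀ A ∈ F, ((A : Set V) \ e A).ncard = Nat.card K ^ r * (Nat.card K - 1) := by
    intro A hA
    rw [Set.ncard_sdiff (he A hA).le, ncard_coe_eq_pow_finrank, ncard_coe_eq_pow_finrank,
      hF A hA, her A hA, pow_succ, Nat.mul_sub_one]
  rw [F.toFinite.ncard_biUnion (fun _ _ => Set.toFinite _) (pairwiseDisjoint_diff he),
    finsum_mem_congr rfl hpetal, finsum_mem_eq_finite_toFinset_sum _ F.toFinite,
    Finset.sum_const, ← Set.ncard_eq_toFinset_card F, smul_eq_mul, mul_comm]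

theorem biUnion_diff_eq_compl (he : ∀ A ∈ F, IsCore F A (e A))
    (hF : ∀ A ∈ F, finrank K A = r + 1) (her : ∀ A ∈ F, finrank K (e A) = r)
    (hcard : ∑ i ∈ Finset.range (finrank K V - r), Nat.card K ^ i ≤ F.ncard) (hA : A ∈ F) :
    ⋃ B ∈ F, (B : Set V) \ e B = (e A : Set V)ᶜ := by
  have : Finite V := Module.finite_of_finite K
  refine Set.eq_of_subset_of_ncard_le (biUnion_diff_subset_compl he hA) ?_
  rw [ncard_biUnion_diff he hF her, ncard_compl_eq_pow_mul_sum, her A hA]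
  exact Nat.mul_le_mul_left _ hcard

theorem eq_setOf_covBy (he : ∀ A ∈ F, IsCore F A (e A)) (hF : ∀ A ∈ F, finrank K A = r + 1)
    (her : ∀ A ∈ F, finrank K (e A) = r)
    (hcard : ∑ i ∈ Finset.range (finrank K V - r), Nat.card K ^ i ≤ F.ncard) (hA : A ∈ F) :
    F = {B | e A ⋖ B} := by
  have hcompl := fun {B} => biUnion_diff_eq_compl (A := B) he hF her hcard
  refine eq_setOf_covBy_of_forall_notMem (fun B hB => ?_) fun v hv => ?_
  · have heq : e A = e B := SetLike.coe_injective <| compl_injective <|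
      (hcompl hA).symm.trans (hcompl hB)
    exact heq ▸ covBy_of_le_of_finrank_eq_add_one (he B hB).le (by rw [hF B hB, her B hB])
  · have hv' : v ∈ ⋃ B ∈ F, (B : Set V) \ e B := hcompl hA ▸ hv
    obtain ⟨B, hB, hvB⟩ := Set.mem_iUnion₂.1 hv'
    exact ⟨B, hB, hvB.1⟩

end IsCore

end Finite

end DivisionRing

namespace IsCoverFree

variable {K V : Type*} [Field K] [AddCommGroup V] [Module K V]
  {F : Set (Submodule K V)} {A B C : Submodule K V}

theorem inf_sup_inf_lt (hF : IsCoverFree F) (hA : A ∈ F) (hB : B ∈ F) (hC : C ∈ F)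
    (hAB : A ≠ B) (hAC : A ≠ C) (hBC : B ≠ C) : A ⊓ B ⊔ A ⊓ C < A :=
  lt_of_le_not_ge (sup_le inf_le_left inf_le_left) fun h =>
    hF ⟨A, B, C, hA, hB, hC, hAB, hAC, hBC, h⟩

theorem isCore_inf (hF : IsCoverFree F) (hA : A ∈ F) (hB : B ∈ F) (hAB : A ⊓ B ⋖ A) :
    IsCore F A (A ⊓ B) := by
  refine ⟨inf_le_left, fun C hC hCA => ?_⟩
  obtain rfl | hBC := eq_or_ne B C
  · exact le_rfl
  · have hne : A ≠ B := fun h => hAB.ne (inf_eq_left.2 h.le)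
    have hlt := hF.inf_sup_inf_lt hA hB hC hne hCA.symm hBC
    have heq : A ⊓ B ⊔ A ⊓ C = A ⊓ B :=
      (hAB.eq_or_eq le_sup_left hlt.le).resolve_right hlt.ne
    exact heq ▸ le_sup_right

theorem exists_isCore (hF : IsCoverFree F) (hdim : ∀ A ∈ F, finrank K A = 2) (hA : A ∈ F) :
    ∃ E : Submodule K V, finrank K E = 1 ∧ IsCore F A E := by
  by_cases h : ∃ B ∈ F, B ≠ A ∧ A ⊓ B ≠ ⊥
  · obtain ⟨B, hB, hBA, hne⟩ := h
    have hline := finrank_inf_eq_one (hdim A hA) (hdim B hB) hBA.symm hne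
    refine ⟨A ⊓ B, hline, hF.isCore_inf hA hB ?_⟩
    exact covBy_of_le_of_finrank_eq_add_one inf_le_left (by rw [hdim A hA, hline])
  · push Not at h
    have hAbot : A ≠ ⊥ := by
      rintro rfl
      simpa using hdim _ hA
    obtain ⟨E, hEA, hE⟩ := exists_le_finrank_eq_one hAbot
    exact ⟨E, hE, hEA, fun B hB hBA => (h B hB hBA).trans_le bot_le⟩

theorem exists_eq_setOf_covBy [Finite K] [FiniteDimensional K V] (hF : IsCoverFree F)
    (hdim : ∀ A ∈ F, finrank K A = 2) (hne : F.Nonempty)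
    (hcard : ∑ i ∈ Finset.range (finrank K V - 1), Nat.card K ^ i ≤ F.ncard) :
    ∃ E : Submodule K V, finrank K E = 1 ∧ F = {A | E ⋖ A} := by
  choose! e he1 he using fun A => hF.exists_isCore hdim (A := A)
  obtain ⟨A, hA⟩ := hne
  exact ⟨e A, he1 A hA, IsCore.eq_setOf_covBy he hdim he1 hcard hA⟩

end IsCoverFree

theorem stmt17 (q n : ℕ) (K : Type*) [Field K] [Fintype K] (hK : Fintype.card K = q)
    (V : Type*) [AddCommGroup V] [Module K V] [FiniteDimensional K V]
    (hV : Module.finrank K V = n) (hn : 3 ≤ n)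
    (F : Set (Submodule K V)) (hdim : ∀ A ∈ F, Module.finrank K A = 2)
    (hcf : IsCoverFree F)
    (hcard : (F.ncard : ℚ) = ((q : ℚ) ^ (n - 1) - 1) / ((q : ℚ) - 1)) :
    ∃ E W : Submodule K V, Module.finrank K E = 1 ∧ Module.finrank K W = n - 1 ∧
      E ⊓ W = ⊥ ∧ E ⊔ W = ⊤ ∧
      F = (fun S => E ⊔ S) '' {S : Submodule K V | S ≤ W ∧ Module.finrank K S = 1} := by
  have hq : (q : ℚ) ≠ 1 := by exact_mod_cast hK ▸ Fintype.one_lt_card.ne'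
  have hcount : F.ncard = ∑ i ∈ Finset.range (n - 1), q ^ i := by
    rw [← geom_sum_eq hq] at hcard
    exact_mod_cast hcard
  have hpos : 0 < ∑ i ∈ Finset.range (n - 1), q ^ i :=
    hK ▸ geom_sum_pos (Nat.zero_le _) (by lia)
  have hne : F.Nonempty := Set.nonempty_of_ncard_ne_zero (by lia)
  obtain ⟨E, hE, hF⟩ := hcf.exists_eq_setOf_covBy hdim hne
    (by rw [hV, Nat.card_eq_fintype_card, hK, hcount])
  obtain ⟨W, hEW⟩ := Submodule.exists_isCompl E
  have hW := Submodule.finrank_add_eq_of_isCompl hEW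
  refine ⟨E, W, hE, by lia, hEW.inf_eq_bot, hEW.sup_eq_top, ?_⟩
  simp only [hF, setOf_covBy_eq_image_sup_of_isCompl hEW, Submodule.isAtom_iff_finrank_eq_one]
end

section
/- Let V be an n-dimensional vector space over the finite field 𝔽_q with n ≥ 2t+1 and t ≥ 2, and let F be a cover-free family of 2t-dimensional subspaces of V with |F| = [n-1 choose t]_q / [2t-1 choose t]_q. Let Ω be the set of t-dimensional subspaces A of V with |F_A| = 1, and let △(Ω) be its shadow. Then for every B ∈ △(Ω), |F_B| ≤ (q^{n-t}-1)/(q^t-1); moreover, equality holds if and only if there is exactly one t-dimensional subspace T of V with B ≤ T and |F_T| > 1. -/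
/-- `Ω`: the `t`-dimensional subspaces of `V` lying in exactly one member of the family. -/
def OmegaSet {K V : Type*} [Field K] [AddCommGroup V] [Module K V]
    (F : Set (Submodule K V)) (t : ℕ) : Set (Submodule K V) :=
  {A | Module.finrank K A = t ∧ {G ∈ F | A ≤ G}.ncard = 1}

/-!
Call `A ≤ G ∈ F` an own subspace of `G` if `G` is the only member of `F` containing it. In a
uniformly random full flag at most one member `G` of `F` has the property that the last flag
subspace contained in `G` is an own subspace of `G`, so the probabilities of these events, over all
`G`, have sum at most one. Cover-freeness says that of two subspaces spanning `G` one is own.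
Applied to complementary subspaces and to a spread of `G` this bounds each of the probabilities
below by `[2t-1 choose t]_q / [n-1 choose t]_q`.

For `F` of maximum size all these inequalities are equalities: every subspace of dimension more than
`t` of a member is own, no subspace of dimension less than `t` is, and every full flag is counted by
some member. Hence if a `t`-dimensional `T` is own in no member, every `(t+1)`-dimensional subspace
through `T` lies in exactly one member, and counting vectors outside `T` gives `|F_T|`. If moreover
`B` is a hyperplane of `T` lying in some own `t`-dimensional subspace, then `F_B = F_T`; if instead
all `t`-dimensional subspaces through `B` are own, counting vectors outside `B` gives a smaller
value.
-/

namespace CoverFree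

open Module Submodule
open scoped Pointwise

section Proportion

variable {α β ι : Type*}

theorem ncard_mul_eq_ncard_mul [Finite α] [Finite β] {r : α → β → Prop} {s : Set α} {t : Set β}
    {m n : ℕ} (hm : ∀ a ∈ s, {b ∈ t | r a b}.ncard = m) (hn : ∀ b ∈ t, {a ∈ s | r a b}.ncard = n) :
    s.ncard * m = t.ncard * n := by
  classical
  have := Fintype.ofFinite α
  have := Fintype.ofFinite β
  simp only [Set.ncard_eq_toFinset_card'] at hm hn ⊢
  refine Finset.card_mul_eq_card_mul r (fun a ha => ?_) fun b hb => ?_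
  · rw [← hm a (by simpa using ha)]
    congr 1
    ext b
    simp
  · rw [← hn b (by simpa using hb)]
    congr 1
    ext a
    simp

/-- The proportion of the elements of a finite type that satisfy `P`, i.e. the probability of `P`
under the uniform distribution; it is `0` on the empty type. -/
noncomputable def proportion (P : α → Prop) : ℚ :=
  {x | P x}.ncard / Nat.card α

theorem proportion_nonneg (P : α → Prop) : 0 ≤ proportion P := by
  unfold proportion
  positivity

theorem proportion_not_add [Finite α] [Nonempty α] (P : α → Prop) :
    proportion (fun x => ¬P x) + proportion P = 1 := by
  unfold proportion
  rw [← add_div, div_eq_one_iff_eq (by exact_mod_cast Nat.card_pos.ne'), add_comm]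
  exact_mod_cast Set.ncard_add_ncard_compl {x | P x}

theorem proportion_and_not [Finite α] {P Q : α → Prop} (h : ∀ x, Q x → P x) :
    proportion (fun x => P x ∧ ¬Q x) = proportion P - proportion Q := by
  have hcard := Set.ncard_sdiff_add_ncard_of_subset (s := {x | Q x}) (t := {x | P x}) h
  unfold proportion
  rw [← sub_div, ← hcard, Nat.cast_add, add_sub_cancel_right]
  rfl

theorem proportion_le_one [Finite α] [Nonempty α] (P : α → Prop) : proportion P ≤ 1 := by
  linarith [proportion_not_add P, proportion_nonneg fun x => ¬P x]

theorem proportion_eq_zero_iff [Finite α] [Nonempty α] {P : α → Prop} :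
    proportion P = 0 ↔ ∀ x, ¬P x := by
  have hcard : (Nat.card α : ℚ) ≠ 0 := by exact_mod_cast Nat.card_pos.ne'
  rw [proportion, div_eq_zero_iff, or_iff_left hcard, Nat.cast_eq_zero, Set.ncard_eq_zero,
    Set.eq_empty_iff_forall_notMem]
  rfl

theorem one_le_proportion_iff [Finite α] [Nonempty α] {P : α → Prop} :
    1 ≤ proportion P ↔ ∀ x, P x := by
  have hnot := proportion_eq_zero_iff (P := fun x => ¬P x)
  simp only [not_not] at hnot
  rw [← hnot, ← proportion_not_add P, add_le_iff_nonpos_left]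
  exact ⟨fun h => h.antisymm (proportion_nonneg _), fun h => h.le⟩

theorem sum_proportion [Finite α] {s : Finset ι} {P : ι → α → Prop}
    (hP : ∀ x, ∀ i ∈ s, ∀ j ∈ s, P i x → P j x → i = j) :
    ∑ i ∈ s, proportion (P i) = proportion fun x => ∃ i ∈ s, P i x := by
  have hdisj : (s : Set ι).PairwiseDisjoint fun i => {x | P i x} := fun i hi j hj hij =>
    Set.disjoint_left.2 fun x hix hjx => hij (hP x i hi j hj hix hjx)
  have hunion : {x | ∃ i ∈ s, P i x} = ⋃ i ∈ (s : Set ι), {x | P i x} := by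
    ext x
    simp
  unfold proportion
  rw [hunion, s.finite_toSet.ncard_biUnion (fun _ _ => Set.toFinite _) hdisj,
    finsum_mem_coe_finset, ← Finset.sum_div, Nat.cast_sum]

theorem proportion_comp_of_ncard_fiber [Finite α] [Finite β] {f : α → β} {m : ℕ} (hm : m ≠ 0)
    (hf : ∀ b, {a | f a = b}.ncard = m) (P : β → Prop) :
    proportion (fun a => P (f a)) = proportion P := by
  have hcount (Q : β → Prop) : {a | Q (f a)}.ncard = {b | Q b}.ncard * m := by
    refine .trans (mul_one _).symm (ncard_mul_eq_ncard_mul (r := fun a b => f a = b) ?_ ?_)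
    · intro a ha
      refine Set.ncard_eq_one.2 ⟨f a, Set.ext fun b => ⟨fun hb => hb.2.symm, ?_⟩⟩
      rintro rfl
      exact ⟨ha, rfl⟩
    · intro b hb
      rw [← hf b]
      congr 1
      ext a
      exact ⟨And.right, fun ha => ⟨by rwa [Set.mem_ofPred_eq, ha], ha⟩⟩
  have hcard : Nat.card α = Nat.card β * m := by
    simpa [Set.ncard_univ] using hcount fun _ => True
  unfold proportion
  rw [hcount, hcard, Nat.cast_mul, Nat.cast_mul, mul_div_mul_right _ _ (by exact_mod_cast hm)]

end Proportion

section LinearAction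

variable {K V : Type*} [Field K] [AddCommGroup V] [Module K V]

instance finite_linearEquiv [Finite V] : Finite (V ≃ₗ[K] V) := DFunLike.finite _

theorem mem_smul_iff {g : V ≃ₗ[K] V} {E : Submodule K V} {v : V} : g v ∈ g • E ↔ v ∈ E :=
  g.injective.mem_set_image (s := (E : Set V))

theorem finrank_smul (g : V ≃ₗ[K] V) (E : Submodule K V) : finrank K ↥(g • E) = finrank K E :=
  LinearEquiv.finrank_map_eq g E

theorem smul_codisjoint (g : V ≃ₗ[K] V) {A C : Submodule K V} (h : Codisjoint A C) :
    Codisjoint (g • A) (g • C) :=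
  codisjoint_map g.surjective h

theorem exists_smul_eq_of_finrank_eq [FiniteDimensional K V] {A A' : Submodule K V}
    (h : finrank K A = finrank K A') : ∃ g : V ≃ₗ[K] V, g • A = A' := by
  obtain ⟨g, hg⟩ := exists_linearEquiv_restrict_eq (LinearEquiv.ofFinrankEq A A' h)
  refine ⟨g, eq_of_le_of_finrank_eq ?_ ((finrank_smul g A).trans h)⟩
  rintro _ ⟨x, hx, rfl⟩
  exact (hg ⟨x, hx⟩).symm ▸ coe_mem _

theorem exists_smul_eq_smul_eq_of_finrank_eq [FiniteDimensional K V] {A C A' C' : Submodule K V}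
    (hAC : A ≤ C) (hAC' : A' ≤ C') (hA : finrank K A = finrank K A')
    (hC : finrank K C = finrank K C') : ∃ g : V ≃ₗ[K] V, g • A = A' ∧ g • C = C' := by
  obtain ⟨h, rfl⟩ := exists_smul_eq_of_finrank_eq hC
  have hle : h • A ≤ h • C := smul_le_smul_left h hAC
  obtain ⟨k, hk⟩ := exists_smul_eq_of_finrank_eq
    (A := (h • A).submoduleOf (h • C)) (A' := A'.submoduleOf (h • C))
    (by rw [(submoduleOfEquivOfLe hle).finrank_eq, (submoduleOfEquivOfLe hAC').finrank_eq,
      finrank_smul, hA])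
  obtain ⟨g, hg⟩ := exists_linearEquiv_restrict_eq k
  refine ⟨g * h, ?_, ?_⟩ <;> rw [mul_smul]
  · refine eq_of_le_of_finrank_eq ?_ (by rw [finrank_smul, finrank_smul, hA])
    rintro _ ⟨x, hx, rfl⟩
    have hkx : k ⟨x, hle hx⟩ ∈ A'.submoduleOf (h • C) := hk ▸ mem_smul_iff.2 hx
    exact (hg ⟨x, hle hx⟩) ▸ hkx
  · refine eq_of_le_of_finrank_eq ?_ (finrank_smul g _)
    rintro _ ⟨x, hx, rfl⟩
    exact (hg ⟨x, hx⟩) ▸ coe_mem _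

end LinearAction

section Density

variable {K V : Type*} [Field K] [AddCommGroup V] [Module K V]

/-- The proportion of the `i`-dimensional subspaces of `V` that satisfy `P`. -/
noncomputable def density (P : Submodule K V → Prop) (i : ℕ) : ℚ :=
  proportion fun A : {A : Submodule K V // finrank K A = i} => P A

theorem ncard_le_and (G : Submodule K V) (P : Submodule K V → Prop) (i : ℕ) :
    {A : {A : Submodule K V // finrank K A = i} | A ≤ G ∧ P A}.ncard =
      {A : {A : Submodule K G // finrank K A = i} | P (A.1.map G.subtype)}.ncard := by
  let f (A : {A : Submodule K G // finrank K A = i}) : {A : Submodule K V // finrank K A = i} :=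
    ⟨A.1.map G.subtype, (finrank_map_subtype_eq G A.1).trans A.2⟩
  have hf : f.Injective := fun A A' h => Subtype.ext <|
    map_injective_of_injective G.injective_subtype (congrArg Subtype.val h)
  rw [← Set.ncard_image_of_injective _ hf]
  congr 1
  ext A
  constructor
  · rintro ⟨hAG, hA⟩
    have hmap : (A.1.submoduleOf G).map G.subtype = A := by
      rw [submoduleOf, map_comap_subtype, inf_eq_right.2 hAG]
    exact ⟨⟨A.1.submoduleOf G, (submoduleOfEquivOfLe hAG).finrank_eq.trans A.2⟩,
      by simpa only [Set.mem_ofPred_eq, hmap], Subtype.ext hmap⟩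
  · rintro ⟨A', hA', rfl⟩
    exact ⟨map_subtype_le G A'.1, hA'⟩

variable [Finite V]

theorem proportion_smul (P : Submodule K V → Prop) (E : Submodule K V) :
    proportion (fun g : V ≃ₗ[K] V => P (g • E)) = density P (finrank K E) := by
  let f (g : V ≃ₗ[K] V) : {A : Submodule K V // finrank K A = finrank K E} :=
    ⟨g • E, finrank_smul g E⟩
  have hstab : {g : V ≃ₗ[K] V | g • E = E}.ncard ≠ 0 :=
    Set.ncard_ne_zero_of_mem (a := 1) (one_smul _ E)
  refine proportion_comp_of_ncard_fiber (f := f) hstab ?_ fun A => P A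
  rintro ⟨A, hA⟩
  obtain ⟨k, rfl⟩ := exists_smul_eq_of_finrank_eq hA.symm
  refine (Set.ncard_congr' ((Equiv.mulLeft k).subtypeEquiv fun g => ?_)).symm
  simp only [f, Set.mem_ofPred_eq, Equiv.coe_mulLeft, mul_smul, Subtype.mk.injEq,
    smul_left_cancel_iff]

theorem ncard_smul_pair_congr {A C A' C' : Submodule K V} (hAC : A ≤ C) (hAC' : A' ≤ C')
    (hA : finrank K A = finrank K A') (hC : finrank K C = finrank K C')
    (P : Submodule K V → Submodule K V → Prop) :
    {g : V ≃ₗ[K] V | P (g • A) (g • C)}.ncard =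
      {g : V ≃ₗ[K] V | P (g • A') (g • C')}.ncard := by
  obtain ⟨h, rfl, rfl⟩ := exists_smul_eq_smul_eq_of_finrank_eq hAC hAC' hA hC
  refine (Set.ncard_congr' ((Equiv.mulRight h).subtypeEquiv fun g => ?_)).symm
  simp only [Set.mem_ofPred_eq, Equiv.coe_mulRight, mul_smul]

theorem density_le_and (G : Submodule K V) (P : Submodule K V → Prop) (i : ℕ) :
    density (fun A => A ≤ G ∧ P A) i =
      density (· ≤ G) i * density (fun A : Submodule K G => P (A.map G.subtype)) i := by
  have hcard := ncard_le_and G (fun _ => True) i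
  simp only [and_true, Set.ofPred_true, Set.ncard_univ] at hcard
  unfold density proportion
  rw [ncard_le_and, hcard]
  rcases isEmpty_or_nonempty {A : Submodule K G // finrank K A = i} with h | h
  · simp only [Set.eq_empty_of_isEmpty, Set.ncard_empty, Nat.cast_zero, zero_div, mul_zero]
  · rw [mul_comm, div_mul_div_cancel₀ (by exact_mod_cast Nat.card_pos.ne')]

end Density

section Flag

variable {K V : Type*} [Field K] [AddCommGroup V] [Module K V]

/-- `e 0 ≤ e 1 ≤ ⋯ ≤ e n` is a maximal flag of the `n`-dimensional space `V`. Flags are indexed by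
`ℕ` for convenience; only the indices up to `n` carry information. -/
structure IsFullFlag (e : ℕ → Submodule K V) : Prop where
  monotone : Monotone e
  finrank_eq : ∀ i ≤ finrank K V, finrank K (e i) = i

theorem IsFullFlag.smul {e : ℕ → Submodule K V} (he : IsFullFlag e) (g : V ≃ₗ[K] V) :
    IsFullFlag fun i => g • e i where
  monotone _ _ hij := smul_le_smul_left g (he.monotone hij)
  finrank_eq i hi := (finrank_smul g _).trans (he.finrank_eq i hi)

variable [FiniteDimensional K V]

variable (K V) in
theorem exists_isFullFlag : ∃ e : ℕ → Submodule K V, IsFullFlag e := by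
  let b := finBasis K V
  refine ⟨fun i => span K (b '' {j | j.val < i}),
    fun i j hij => span_mono (Set.image_mono fun k hk => lt_of_lt_of_le hk hij), fun i hi => ?_⟩
  have hb := b.linearIndependent.comp _ (Subtype.val_injective (p := (·.val < i)))
  rw [Set.image_eq_range]
  refine (finrank_span_eq_card hb).trans ?_
  simp only [Fintype.card_subtype, Fin.card_filter_val_lt, min_eq_right hi]

theorem exists_isFullFlag_eq_eq {T S : Submodule K V} (hTS : T ≤ S) :
    ∃ e : ℕ → Submodule K V, IsFullFlag e ∧ e (finrank K T) = T ∧ e (finrank K S) = S := by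
  obtain ⟨e, he⟩ := exists_isFullFlag K V
  obtain ⟨g, hT, hS⟩ := exists_smul_eq_smul_eq_of_finrank_eq (he.monotone (finrank_mono hTS)) hTS
    (he.finrank_eq _ T.finrank_le) (he.finrank_eq _ S.finrank_le)
  exact ⟨_, he.smul g, hT, hS⟩

end Flag

section Covering

open scoped LinearAlgebra.Projectivization

variable {K V : Type*} [Field K] [AddCommGroup V] [Module K V]

theorem sum_one_sub_density_le_one [Finite V] {ι : Type*} [Fintype ι] {P : Submodule K V → Prop}
    (hP : ∀ A C, Codisjoint A C → P A ∨ P C) {σ : ι → Submodule K V}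
    (hσ : Pairwise fun i j => Codisjoint (σ i) (σ j)) :
    ∑ i, (1 - density P (finrank K (σ i))) ≤ 1 := by
  have hterm (i : ι) : 1 - density P (finrank K (σ i)) =
      proportion fun g : V ≃ₗ[K] V => ¬P (g • σ i) := by
    rw [← proportion_smul, ← proportion_not_add fun g : V ≃ₗ[K] V => P (g • σ i),
      add_sub_cancel_right]
  rw [Finset.sum_congr rfl fun i _ => hterm i, sum_proportion]
  · exact proportion_le_one _
  · intro g i _ j _ hi hj
    by_contra hij
    exact (hP _ _ (smul_codisjoint g (hσ hij))).elim hi hj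

theorem one_le_density_add_density [Finite V] {P : Submodule K V → Prop}
    (hP : ∀ A C, Codisjoint A C → P A ∨ P C) {i j : ℕ} (hij : i + j = finrank K V) :
    1 ≤ density P i + density P j := by
  obtain ⟨e, he⟩ := exists_isFullFlag K V
  obtain ⟨C, hC⟩ := (e i).exists_isCompl
  have hi : finrank K (e i) = i := he.finrank_eq i (by lia)
  have hj : finrank K C = j := by
    have := finrank_add_eq_of_isCompl hC
    lia
  have hσ : Pairwise fun b c : Bool => Codisjoint (cond b (e i) C) (cond c (e i) C) := by
    rintro (_ | _) (_ | _) h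
    · exact absurd rfl h
    · exact hC.codisjoint.symm
    · exact hC.codisjoint
    · exact absurd rfl h
  have := sum_one_sub_density_le_one hP hσ
  simp only [Fintype.sum_bool, cond_true, cond_false, hi, hj] at this
  linarith

theorem codisjoint_of_finrank_add_eq [FiniteDimensional K V] {A C : Submodule K V}
    (h : Disjoint A C) (hAC : finrank K A + finrank K C = finrank K V) : Codisjoint A C := by
  have := finrank_sup_add_finrank_inf_eq A C
  rw [h.eq_bot, finrank_bot, add_zero, hAC] at this
  exact codisjoint_iff.2 (eq_top_of_finrank_eq this)

theorem exists_spread [Finite K] [FiniteDimensional K V] {t : ℕ} (ht : t ≠ 0)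
    (hV : finrank K V = 2 * t) :
    ∃ (ι : Type) (_ : Fintype ι) (σ : ι → Submodule K V), Fintype.card ι = Nat.card K ^ t + 1 ∧
      (∀ i, finrank K (σ i) = t) ∧ Pairwise fun i j => Codisjoint (σ i) (σ j) := by
  obtain ⟨p, hp⟩ := CharP.exists K
  have : Fact p.Prime := ⟨CharP.char_is_prime K p⟩
  have : NeZero t := ⟨ht⟩
  let L := FiniteField.Extension K p t
  have hL : finrank K L = t := FiniteField.finrank_extension K p t
  have : Finite L := finite_of_finite K
  have hLL : finrank K (L × L) = finrank K V := by rw [finrank_prod, hL, hV, two_mul]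
  let φ := LinearEquiv.ofFinrankEq (L × L) V hLL
  have hatom (x : ℙ L (L × L)) : IsAtom x.submodule :=
    isAtom_iff_finrank_eq_one.2 x.finrank_submodule
  have : Fintype (ℙ L (L × L)) := Fintype.ofFinite _
  refine ⟨ℙ L (L × L), this, fun x => (x.submodule.restrictScalars K).map φ.toLinearMap,
    ?_, fun x => ?_, fun x y hxy => ?_⟩
  · rw [← Nat.card_eq_fintype_card, Projectivization.card_of_finrank_two L (L × L) (by simp),
      FiniteField.natCard_extension]
  · have := finrank_mul_finrank K L x.submodule
    rw [hL, x.finrank_submodule, mul_one] at this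
    exact (LinearEquiv.finrank_map_eq φ _).trans this.symm
  · refine codisjoint_map φ.surjective ((codisjoint_restrictScalars_iff K).2 ?_)
    refine codisjoint_of_finrank_add_eq ((hatom x).disjoint_of_ne (hatom y) ?_)
      (by rw [x.finrank_submodule, y.finrank_submodule, finrank_prod, finrank_self])
    exact Projectivization.submodule_injective.ne hxy

theorem card_pow_add_one_mul_one_sub_density_le [Finite K] [FiniteDimensional K V]
    {P : Submodule K V → Prop} (hP : ∀ A C, Codisjoint A C → P A ∨ P C) {t : ℕ} (ht : t ≠ 0)
    (hV : finrank K V = 2 * t) : ((Nat.card K : ℚ) ^ t + 1) * (1 - density P t) ≤ 1 := by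
  have : Finite V := finite_of_finite K
  obtain ⟨ι, _, σ, hcard, hfin, hσ⟩ := exists_spread ht hV
  simpa only [hfin, Finset.sum_const, Finset.card_univ, hcard, nsmul_eq_mul, Nat.cast_add,
    Nat.cast_pow, Nat.cast_one] using sum_one_sub_density_le_one hP hσ

end Covering

section InclusionRatio

variable {K V : Type*} [Field K] [AddCommGroup V] [Module K V]

/-- The probability `∏ l < i, (q ^ d - q ^ l) / (q ^ n - q ^ l)` that a random `i`-dimensional
subspace of an `n`-dimensional space over `𝔽_q` lies in a given `d`-dimensional one. -/
def inclusionRatio (q n d i : ℕ) : ℚ :=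
  ∏ l ∈ Finset.range i, ((q : ℚ) ^ d - (q : ℚ) ^ l) / ((q : ℚ) ^ n - (q : ℚ) ^ l)

/-- The probability that a random full flag of an `n`-dimensional space over `𝔽_q` leaves a given
`d`-dimensional subspace right after its `i`-dimensional term. -/
def exitProb (q n d i : ℕ) : ℚ :=
  inclusionRatio q n d i - inclusionRatio q n d (i + 1)

theorem smul_sup_span_singleton_le_iff {g : V ≃ₗ[K] V} {E G : Submodule K V} {v : V} :
    g • (E ⊔ K ∙ v) ≤ G ↔ g • E ≤ G ∧ g v ∈ G := by
  have hspan : g • (K ∙ v) = K ∙ g v := (map_span _ _).trans (congrArg _ Set.image_singleton)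
  rw [smul_sup', sup_le_iff, hspan, span_singleton_le_iff_mem]

variable [Finite K] [FiniteDimensional K V]

theorem ncard_sdiff_eq_pow_sub_pow {E G : Submodule K V} (h : E ≤ G) :
    ((G \ E : Set V).ncard : ℚ) =
      (Nat.card K : ℚ) ^ finrank K G - (Nat.card K : ℚ) ^ finrank K E := by
  have : Finite V := finite_of_finite K
  have hncard (A : Submodule K V) : (A : Set V).ncard = Nat.card K ^ finrank K A :=
    (Nat.card_coe_set_eq _).symm.trans natCard_eq_pow_finrank
  have hsum := Set.ncard_sdiff_add_ncard_of_subset (SetLike.coe_subset_coe.2 h)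
  rw [hncard, hncard] at hsum
  rw [eq_sub_iff_add_eq]
  exact_mod_cast hsum

theorem ncard_compl_eq_pow_sub_pow (E : Submodule K V) : ((E : Set V)ᶜ.ncard : ℚ) =
    (Nat.card K : ℚ) ^ finrank K V - (Nat.card K : ℚ) ^ finrank K E := by
  have hsdiff := ncard_sdiff_eq_pow_sub_pow (le_top : E ≤ ⊤)
  rwa [top_coe, ← Set.compl_eq_univ_sdiff, finrank_top] at hsdiff

theorem proportion_and_not_smul_le_mul {P : Submodule K V → Prop} {G E E' : Submodule K V}
    (hP : ∀ A, P A → A ≤ G) (hE : E ≤ E') (hE' : finrank K E' = finrank K E + 1) :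
    proportion (fun g : V ≃ₗ[K] V => P (g • E) ∧ ¬g • E' ≤ G) *
        ((Nat.card K : ℚ) ^ finrank K V - (Nat.card K : ℚ) ^ finrank K E) =
      density P (finrank K E) *
        ((Nat.card K : ℚ) ^ finrank K V - (Nat.card K : ℚ) ^ finrank K G) := by
  have : Finite V := finite_of_finite K
  have hcount : {g : V ≃ₗ[K] V | P (g • E)}.ncard * (G : Set V)ᶜ.ncard =
      (E : Set V)ᶜ.ncard * {g : V ≃ₗ[K] V | P (g • E) ∧ ¬g • E' ≤ G}.ncard := by
    refine ncard_mul_eq_ncard_mul (r := fun g v => g v ∉ G) (fun g hg => ?_) fun v hv => ?_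
    · refine Set.ncard_congr' (g.toEquiv.subtypeEquiv fun v => ?_)
      exact ⟨And.right, fun hv => ⟨fun hvE => hv (hP _ hg (mem_smul_iff.2 hvE)), hv⟩⟩
    · rw [ncard_smul_pair_congr (A' := E) (C' := E ⊔ K ∙ v) hE le_sup_left rfl
        (by rw [hE', finrank_sup_span_singleton hv]) fun A C => P A ∧ ¬C ≤ G]
      congr 1
      ext g
      simp only [Set.mem_ofPred_eq, smul_sup_span_singleton_le_iff]
      have := hP (g • E)
      tauto
  rw [← ncard_compl_eq_pow_sub_pow, ← ncard_compl_eq_pow_sub_pow, ← proportion_smul]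
  unfold proportion
  rw [div_mul_eq_mul_div, div_mul_eq_mul_div, mul_comm]
  exact_mod_cast congrArg (fun m : ℕ => (m : ℚ) / Nat.card (V ≃ₗ[K] V)) hcount.symm

theorem inclusionRatio_succ (q n d i : ℕ) : inclusionRatio q n d (i + 1) =
    inclusionRatio q n d i * (((q : ℚ) ^ d - (q : ℚ) ^ i) / ((q : ℚ) ^ n - (q : ℚ) ^ i)) :=
  Finset.prod_range_succ _ _

theorem pow_sub_pow_pos {q i n : ℕ} (hq : 1 < q) (hi : i < n) :
    (0 : ℚ) < (q : ℚ) ^ n - (q : ℚ) ^ i :=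
  sub_pos.2 (pow_lt_pow_right₀ (by exact_mod_cast hq) hi)

theorem exitProb_mul_pow_sub_pow {q n i : ℕ} (hq : 1 < q) (hi : i < n) (d : ℕ) :
    exitProb q n d i * ((q : ℚ) ^ n - (q : ℚ) ^ i) =
      inclusionRatio q n d i * ((q : ℚ) ^ n - (q : ℚ) ^ d) := by
  have := pow_sub_pow_pos hq hi
  rw [exitProb, inclusionRatio_succ]
  field_simp
  ring

theorem density_le (G : Submodule K V) {i : ℕ} (hi : i ≤ finrank K V) :
    density (· ≤ G) i = inclusionRatio (Nat.card K) (finrank K V) (finrank K G) i := by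
  have : Finite V := finite_of_finite K
  induction i with
  | zero =>
    rw [← finrank_bot K V, ← proportion_smul, finrank_bot]
    refine le_antisymm (proportion_le_one _) (one_le_proportion_iff.2 fun g => ?_)
    exact (smul_bot' g).trans_le bot_le
  | succ i ih =>
    obtain ⟨e, he⟩ := exists_isFullFlag K V
    have hdim := he.finrank_eq i (by lia)
    have hdim' := he.finrank_eq (i + 1) hi
    have hle := he.monotone i.le_succ
    have hsplit := proportion_and_not fun (g : V ≃ₗ[K] V) (hg : g • e (i + 1) ≤ G) =>
      (smul_le_smul_left g hle).trans hg
    have hpair := proportion_and_not_smul_le_mul (fun A => id) hle (G := G) (by rw [hdim, hdim'])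
    have hin : i < finrank K V := hi
    rw [hsplit, proportion_smul (· ≤ G), proportion_smul (· ≤ G), hdim, hdim', ih hin.le,
      ← exitProb_mul_pow_sub_pow Finite.one_lt_card hin] at hpair
    exact sub_right_injective
      (mul_right_cancel₀ (pow_sub_pow_pos Finite.one_lt_card hin).ne' hpair)

theorem IsFullFlag.proportion_le_and_not_le {e : ℕ → Submodule K V} (he : IsFullFlag e)
    (G : Submodule K V) (P : Submodule K V → Prop) {i : ℕ} (hi : i < finrank K V) :
    proportion (fun g : V ≃ₗ[K] V => (g • e i ≤ G ∧ P (g • e i)) ∧ ¬g • e (i + 1) ≤ G) =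
      exitProb (Nat.card K) (finrank K V) (finrank K G) i *
        density (fun A : Submodule K G => P (A.map G.subtype)) i := by
  have : Finite V := finite_of_finite K
  have hdim := he.finrank_eq i hi.le
  have hpair := proportion_and_not_smul_le_mul (P := fun A => A ≤ G ∧ P A) (fun A => And.left)
    (he.monotone i.le_succ) (by rw [hdim, he.finrank_eq _ hi])
  rw [hdim, density_le_and, density_le G hi.le, mul_right_comm,
    ← exitProb_mul_pow_sub_pow Finite.one_lt_card hi, mul_right_comm] at hpair
  exact mul_right_cancel₀ (pow_sub_pow_pos Finite.one_lt_card hi).ne' hpair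

end InclusionRatio

section ExitProb

variable {q n d i t : ℕ}

theorem inclusionRatio_pos (hq : 1 < q) (hd : d < n) (hi : i ≤ d) : 0 < inclusionRatio q n d i :=
  Finset.prod_pos fun l hl => by
    have hl := Finset.mem_range.1 hl
    exact div_pos (pow_sub_pow_pos hq (by lia)) (pow_sub_pow_pos hq (by lia))

theorem inclusionRatio_self_add_one (q n d : ℕ) : inclusionRatio q n d (d + 1) = 0 := by
  rw [inclusionRatio_succ, sub_self, zero_div, mul_zero]

theorem inclusionRatio_succ_nonneg (hq : 1 < q) (hd : d < n) (hi : i ≤ d) :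
    0 ≤ inclusionRatio q n d (i + 1) := by
  rcases hi.eq_or_lt with rfl | hi
  · exact (inclusionRatio_self_add_one q n i).ge
  · exact (inclusionRatio_pos hq hd hi).le

theorem two_mul_inclusionRatio_succ_lt (hq : 1 < q) (hd : d < n) (hi : i ≤ d) :
    2 * inclusionRatio q n d (i + 1) < inclusionRatio q n d i := by
  have hq' : (2 : ℚ) ≤ q := by exact_mod_cast hq
  have hpow : 2 * (q : ℚ) ^ d ≤ (q : ℚ) ^ n :=
    calc 2 * (q : ℚ) ^ d ≤ q * (q : ℚ) ^ d := by gcongr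
      _ = (q : ℚ) ^ (d + 1) := (pow_succ' _ _).symm
      _ ≤ (q : ℚ) ^ n := pow_le_pow_right₀ (by linarith) hd
  have hqi : 0 < (q : ℚ) ^ i := by positivity
  have hratio : ((q : ℚ) ^ d - (q : ℚ) ^ i) / ((q : ℚ) ^ n - (q : ℚ) ^ i) < 1 / 2 := by
    rw [div_lt_iff₀ (pow_sub_pow_pos hq (by lia))]
    linarith
  rw [inclusionRatio_succ]
  linarith [mul_lt_mul_of_pos_left hratio (inclusionRatio_pos hq hd hi)]

theorem exitProb_pos (hq : 1 < q) (hd : d < n) (hi : i ≤ d) : 0 < exitProb q n d i := by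
  unfold exitProb
  linarith [two_mul_inclusionRatio_succ_lt hq hd hi, inclusionRatio_succ_nonneg hq hd hi]

theorem exitProb_strictAntiOn (hq : 1 < q) (hd : d < n) :
    StrictAntiOn (exitProb q n d) (Set.Iic d) := by
  refine strictAntiOn_Iic_of_succ_lt fun i hi => ?_
  rw [Nat.succ_eq_succ, Nat.succ_eq_add_one]
  unfold exitProb
  linarith [two_mul_inclusionRatio_succ_lt hq hd hi.le, inclusionRatio_succ_nonneg hq hd hi]

theorem sum_range_two_mul_sub {M : Type*} [AddCommMonoid M] (f : ℕ → M) (t : ℕ) :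
    ∑ j ∈ Finset.range t, f (2 * t - j) = ∑ j ∈ Finset.range t, f (t + 1 + j) := by
  rw [← Finset.sum_range_reflect]
  refine Finset.sum_congr rfl fun j hj => congrArg f ?_
  have := Finset.mem_range.1 hj
  lia

theorem sum_range_two_mul_add_one {M : Type*} [AddCommMonoid M] (f : ℕ → M) (t : ℕ) :
    ∑ i ∈ Finset.range (2 * t + 1), f i = f t + ∑ j ∈ Finset.range t, (f j + f (2 * t - j)) := by
  rw [show 2 * t + 1 = t + 1 + t by lia, Finset.sum_range_add, Finset.sum_range_succ,
    Finset.sum_add_distrib, sum_range_two_mul_sub]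
  abel

theorem sum_exitProb_two_mul_sub (q n t : ℕ) :
    ∑ j ∈ Finset.range t, exitProb q n (2 * t) (2 * t - j) =
      inclusionRatio q n (2 * t) (t + 1) := by
  have htelescope := Finset.sum_range_sub' (fun j => inclusionRatio q n (2 * t) (t + 1 + j)) t
  rw [show t + 1 + t = 2 * t + 1 by lia, inclusionRatio_self_add_one, sub_zero] at htelescope
  rw [sum_range_two_mul_sub]
  exact htelescope

theorem le_sum_exitProb_mul (hq : 1 < q) (hn : 2 * t < n) {p : ℕ → ℚ}
    (hcompl : ∀ i j, i + j = 2 * t → 1 ≤ p i + p j)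
    (hspread : ((q : ℚ) ^ t + 1) * (1 - p t) ≤ 1) :
    inclusionRatio q n (2 * t) (t + 1) +
          exitProb q n (2 * t) t * ((q : ℚ) ^ t / ((q : ℚ) ^ t + 1)) +
        ∑ j ∈ Finset.range t, (exitProb q n (2 * t) j - exitProb q n (2 * t) (2 * t - j)) * p j ≤
      ∑ i ∈ Finset.range (2 * t + 1), exitProb q n (2 * t) i * p i := by
  have hmid : (q : ℚ) ^ t / ((q : ℚ) ^ t + 1) ≤ p t := by
    rw [div_le_iff₀ (by positivity)]
    linarith
  rw [sum_range_two_mul_add_one, ← sum_exitProb_two_mul_sub, add_comm (∑ _ ∈ _, _), add_assoc,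
    ← Finset.sum_add_distrib]
  refine add_le_add (mul_le_mul_of_nonneg_left hmid (exitProb_pos hq hn (by lia)).le)
    (Finset.sum_le_sum fun j hj => ?_)
  have hj := Finset.mem_range.1 hj
  have := mul_le_mul_of_nonneg_left (hcompl j (2 * t - j) (by lia))
    (exitProb_pos hq hn (Nat.sub_le (2 * t) j)).le
  linarith

theorem gaussQ_div_gaussQ (hq : 1 < q) (hn : 2 * t < n) :
    GaussQ q (n - 1) t / GaussQ q (2 * t - 1) t =
      (∏ l ∈ Finset.range t,
        ((q : ℚ) ^ (2 * t) - (q : ℚ) ^ (l + 1)) / ((q : ℚ) ^ n - (q : ℚ) ^ (l + 1)))⁻¹ := by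
  have hfactor {m l : ℕ} (hl : l + 1 ≤ m) :
      (q : ℚ) ^ m - (q : ℚ) ^ (l + 1) = (q : ℚ) ^ (l + 1) * ((q : ℚ) ^ (m - 1 - l) - 1) := by
    rw [mul_sub, ← pow_add, mul_one, show l + 1 + (m - 1 - l) = m by lia]
  have hpos {m : ℕ} (hm : 0 < m) : 0 < (q : ℚ) ^ m - 1 := by
    simpa only [pow_zero] using pow_sub_pow_pos hq hm
  unfold GaussQ
  rw [← Finset.prod_div_distrib, ← Finset.prod_inv_distrib]
  refine Finset.prod_congr rfl fun l hl => ?_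
  have hl := Finset.mem_range.1 hl
  rw [hfactor (by lia), hfactor (by lia), inv_div, mul_div_mul_left _ _ (by positivity),
    div_div_div_cancel_right₀ (hpos (by lia)).ne']

theorem inclusionRatio_succ_add_exitProb_mul (hq : 1 < q) (ht : t ≠ 0) (hn : 2 * t < n) :
    inclusionRatio q n (2 * t) (t + 1) +
        exitProb q n (2 * t) t * ((q : ℚ) ^ t / ((q : ℚ) ^ t + 1)) =
      ∏ l ∈ Finset.range t,
        ((q : ℚ) ^ (2 * t) - (q : ℚ) ^ (l + 1)) / ((q : ℚ) ^ n - (q : ℚ) ^ (l + 1)) := by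
  set R := ∏ l ∈ Finset.range t,
    ((q : ℚ) ^ (2 * t) - (q : ℚ) ^ (l + 1)) / ((q : ℚ) ^ n - (q : ℚ) ^ (l + 1))
  have hsq : (q : ℚ) ^ (2 * t) = ((q : ℚ) ^ t) ^ 2 := pow_mul' _ _ _
  have hx : 1 < (q : ℚ) ^ t := one_lt_pow₀ (by exact_mod_cast hq) ht
  have hy := pow_sub_pow_pos hq (show 0 < n by lia)
  have hfirst : inclusionRatio q n (2 * t) (t + 1) =
      R * (((q : ℚ) ^ (2 * t) - (q : ℚ) ^ 0) / ((q : ℚ) ^ n - (q : ℚ) ^ 0)) :=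
    Finset.prod_range_succ' _ _
  have hexit := exitProb_mul_pow_sub_pow hq (show t < n by lia) (2 * t)
  have hstep : inclusionRatio q n (2 * t) t =
    inclusionRatio q n (2 * t) (t + 1) + exitProb q n (2 * t) t := (add_sub_cancel _ _).symm
  rw [hstep] at hexit
  rw [mul_div_assoc', eq_div_iff hy.ne'] at hfirst
  rw [hsq, pow_zero] at hfirst
  rw [hsq] at hexit
  field_simp
  refine mul_left_cancel₀ (sub_pos.2 hx).ne' ?_
  linear_combination hfirst + hexit

theorem gaussQ_div_gaussQ_mul (hq : 1 < q) (ht : t ≠ 0) (hn : 2 * t < n) :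
    GaussQ q (n - 1) t / GaussQ q (2 * t - 1) t *
      (inclusionRatio q n (2 * t) (t + 1) +
        exitProb q n (2 * t) t * ((q : ℚ) ^ t / ((q : ℚ) ^ t + 1))) = 1 := by
  rw [gaussQ_div_gaussQ hq hn, inclusionRatio_succ_add_exitProb_mul hq ht hn]
  refine inv_mul_cancel₀ (Finset.prod_pos fun l hl => ?_).ne'
  have hl := Finset.mem_range.1 hl
  exact div_pos (pow_sub_pow_pos hq (by lia)) (pow_sub_pow_pos hq (by lia))

end ExitProb

section Own

variable {K V : Type*} [Field K] [AddCommGroup V] [Module K V] {F : Set (Submodule K V)}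
  {G G' A : Submodule K V}

/-- `A` is an own subspace of the member `G` of `F`: it lies in `G` and in no other member. -/
def IsOwn (F : Set (Submodule K V)) (G A : Submodule K V) : Prop :=
  {G' ∈ F | A ≤ G'} = {G}

theorem isOwn_iff : IsOwn F G A ↔ G ∈ F ∧ A ≤ G ∧ ∀ G' ∈ F, A ≤ G' → G' = G := by
  simp only [IsOwn, Set.eq_singleton_iff_unique_mem, Set.mem_ofPred_eq, and_assoc, and_imp]

theorem ncard_eq_one_iff : {G ∈ F | A ≤ G}.ncard = 1 ↔ ∃ G, IsOwn F G A :=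
  Set.ncard_eq_one

theorem IsOwn.mem (h : IsOwn F G A) : G ∈ F := (isOwn_iff.1 h).1

theorem IsOwn.le (h : IsOwn F G A) : A ≤ G := (isOwn_iff.1 h).2.1

theorem IsOwn.eq (h : IsOwn F G A) (hG' : G' ∈ F) (hA : A ≤ G') : G' = G :=
  (isOwn_iff.1 h).2.2 G' hG' hA

/-- The proportion of own subspaces of `G` among its `i`-dimensional subspaces. -/
noncomputable def ownDensity (F : Set (Submodule K V)) (G : Submodule K V) (i : ℕ) : ℚ :=
  density (fun A : Submodule K G => IsOwn F G (A.map G.subtype)) i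

theorem exists_map_subtype_eq (hA : A ≤ G) : ∃ A' : Submodule K G, A'.map G.subtype = A :=
  ⟨A.submoduleOf G, (map_comap_subtype _ _).trans (inf_of_le_right hA)⟩

theorem IsOwn.ownDensity_ne_zero [Finite V] (h : IsOwn F G A) :
    ownDensity F G (finrank K A) ≠ 0 := by
  obtain ⟨A, rfl⟩ := exists_map_subtype_eq h.le
  rw [finrank_map_subtype_eq]
  have : Nonempty {C : Submodule K G // finrank K C = finrank K A} := ⟨A, rfl⟩
  exact fun hzero => proportion_eq_zero_iff.1 hzero ⟨A, rfl⟩ h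

theorem isOwn_of_one_le_ownDensity [Finite V] (h : 1 ≤ ownDensity F G (finrank K A))
    (hA : A ≤ G) : IsOwn F G A := by
  obtain ⟨A, rfl⟩ := exists_map_subtype_eq hA
  rw [finrank_map_subtype_eq] at h
  have : Nonempty {C : Submodule K G // finrank K C = finrank K A} := ⟨A, rfl⟩
  exact one_le_proportion_iff.1 h ⟨A, rfl⟩

/-- The subspace `e i` of the flag `e` is an own subspace of the member `G` of `F`, and `i` is the
last index with `e i ≤ G`. -/
def LastOwn (F : Set (Submodule K V)) (e : ℕ → Submodule K V) (G : Submodule K V) (i : ℕ) :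
    Prop :=
  IsOwn F G (e i) ∧ ¬e (i + 1) ≤ G

theorem LastOwn.unique {e : ℕ → Submodule K V} (he : Monotone e) {i j : ℕ}
    (h : LastOwn F e G i) (h' : LastOwn F e G' j) : (G, i) = (G', j) := by
  wlog hij : i ≤ j generalizing G G' i j
  · exact (this h' h (le_of_not_ge hij)).symm
  obtain rfl := h.1.eq h'.1.mem ((he hij).trans h'.1.le)
  rcases hij.eq_or_lt with rfl | hij
  · rfl
  · exact absurd ((he hij).trans h'.1.le) h.2

variable [Finite K] [FiniteDimensional K V] {e : ℕ → Submodule K V} {m : ℕ}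

theorem IsFullFlag.proportion_lastOwn (he : IsFullFlag e) {i : ℕ} (hi : i < finrank K V) :
    proportion (fun g : V ≃ₗ[K] V => LastOwn F (fun j => g • e j) G i) =
      exitProb (Nat.card K) (finrank K V) (finrank K G) i * ownDensity F G i := by
  rw [ownDensity, ← he.proportion_le_and_not_le G (IsOwn F G) hi]
  refine congrArg proportion (funext fun g => propext (and_congr_left' ?_))
  exact (and_iff_right_of_imp IsOwn.le).symm

theorem IsFullFlag.sum_sum_exitProb_mul_ownDensity (F : Finset (Submodule K V))
    (he : IsFullFlag e) (hm : m ≤ finrank K V) :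
    ∑ G ∈ F, ∑ i ∈ Finset.range m,
        exitProb (Nat.card K) (finrank K V) (finrank K G) i * ownDensity F G i =
      proportion fun g : V ≃ₗ[K] V =>
        ∃ x ∈ F ×ˢ Finset.range m, LastOwn F (fun j => g • e j) x.1 x.2 := by
  have : Finite V := finite_of_finite K
  rw [← Finset.sum_product', ← sum_proportion fun g x _ y _ hx hy =>
    LastOwn.unique (he.smul g).monotone hx hy]
  refine Finset.sum_congr rfl fun x hx => ?_
  have hx := Finset.mem_range.1 (Finset.mem_product.1 hx).2
  exact (he.proportion_lastOwn (hx.trans_le hm)).symm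

theorem sum_sum_exitProb_mul_ownDensity_le_one (F : Finset (Submodule K V))
    (hm : m ≤ finrank K V) :
    ∑ G ∈ F, ∑ i ∈ Finset.range m,
      exitProb (Nat.card K) (finrank K V) (finrank K G) i * ownDensity F G i ≤ 1 := by
  have : Finite V := finite_of_finite K
  obtain ⟨e, he⟩ := exists_isFullFlag K V
  exact (he.sum_sum_exitProb_mul_ownDensity F hm).trans_le (proportion_le_one _)

theorem IsFullFlag.exists_lastOwn {F : Finset (Submodule K V)} (hm : m ≤ finrank K V)
    (hsum : 1 ≤ ∑ G ∈ F, ∑ i ∈ Finset.range m,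
      exitProb (Nat.card K) (finrank K V) (finrank K G) i * ownDensity F G i)
    (he : IsFullFlag e) : ∃ G, ∃ i < m, LastOwn F e G i := by
  have : Finite V := finite_of_finite K
  rw [he.sum_sum_exitProb_mul_ownDensity F hm, one_le_proportion_iff] at hsum
  obtain ⟨⟨G, i⟩, hx, hlast⟩ := hsum 1
  simp only [one_smul] at hlast
  exact ⟨G, i, Finset.mem_range.1 (Finset.mem_product.1 hx).2, hlast⟩

end Own

section Extremal

variable {K V : Type*} [Field K] [AddCommGroup V] [Module K V] {F : Set (Submodule K V)}
  {G S : Submodule K V} {t : ℕ}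

theorem isOwn_map_subtype_or (hF : IsCoverFree F) (hanti : IsAntichain (· ≤ ·) F) (hG : G ∈ F)
    (A C : Submodule K G) (hAC : Codisjoint A C) :
    IsOwn F G (A.map G.subtype) ∨ IsOwn F G (C.map G.subtype) := by
  simp only [isOwn_iff, hG, map_subtype_le, true_and]
  by_contra! hne
  obtain ⟨⟨G₁, hG₁, hA, hne₁⟩, G₂, hG₂, hC, hne₂⟩ := hne
  have hcover : G ≤ G ⊓ G₁ ⊔ G ⊓ G₂ :=
    calc G = A.map G.subtype ⊔ C.map G.subtype := by
          rw [← Submodule.map_sup, hAC.eq_top, map_subtype_top]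
      _ ≤ G ⊓ G₁ ⊔ G ⊓ G₂ :=
          sup_le_sup (le_inf (map_subtype_le _ _) hA) (le_inf (map_subtype_le _ _) hC)
  rcases eq_or_ne G₁ G₂ with rfl | hne₁₂
  · exact hne₁ (hanti.eq hG hG₁ (hcover.trans (sup_le inf_le_right inf_le_right))).symm
  · exact hF ⟨G, G₁, G₂, hG, hG₁, hG₂, hne₁.symm, hne₂.symm, hne₁₂, hcover⟩

/-- `F` is a cover-free family of `2 * t`-dimensional subspaces of the `n`-dimensional space `V`
over `𝔽_q`, of the maximum size `[n - 1 choose t]_q / [2 * t - 1 choose t]_q`. -/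
structure IsExtremal (F : Set (Submodule K V)) (t : ℕ) : Prop where
  ne_zero : t ≠ 0
  two_mul_lt : 2 * t < finrank K V
  finrank_eq : ∀ G ∈ F, finrank K G = 2 * t
  isCoverFree : IsCoverFree F
  ncard_eq : (F.ncard : ℚ) =
    GaussQ (Nat.card K) (finrank K V - 1) t / GaussQ (Nat.card K) (2 * t - 1) t

namespace IsExtremal

section

variable [Finite K]

theorem exitProb_two_mul_sub_lt (hF : IsExtremal F t) {j : ℕ} (hj : j < t) :
    exitProb (Nat.card K) (finrank K V) (2 * t) (2 * t - j) <
      exitProb (Nat.card K) (finrank K V) (2 * t) j :=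
  exitProb_strictAntiOn Finite.one_lt_card hF.two_mul_lt
    (Set.mem_Iic.2 (by lia)) (Set.mem_Iic.2 (Nat.sub_le _ _)) (by lia)

theorem mul_ownDensity_nonneg (hF : IsExtremal F t) (G : Submodule K V) {j : ℕ}
    (hj : j ∈ Finset.range t) :
    0 ≤ (exitProb (Nat.card K) (finrank K V) (2 * t) j -
      exitProb (Nat.card K) (finrank K V) (2 * t) (2 * t - j)) * ownDensity F G j :=
  mul_nonneg (sub_nonneg.2 (hF.exitProb_two_mul_sub_lt (Finset.mem_range.1 hj)).le)
    (proportion_nonneg _)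

theorem ncard_mul (hF : IsExtremal F t) : (F.ncard : ℚ) *
    (inclusionRatio (Nat.card K) (finrank K V) (2 * t) (t + 1) +
      exitProb (Nat.card K) (finrank K V) (2 * t) t *
        ((Nat.card K : ℚ) ^ t / ((Nat.card K : ℚ) ^ t + 1))) = 1 := by
  rw [hF.ncard_eq]
  exact gaussQ_div_gaussQ_mul Finite.one_lt_card hF.ne_zero hF.two_mul_lt

theorem sum_inv_ncard {F : Finset (Submodule K V)} (hF : IsExtremal (F : Set (Submodule K V)) t) :
    ∑ _ ∈ F, ((F : Set (Submodule K V)).ncard : ℚ)⁻¹ = 1 := by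
  rw [Finset.sum_const, nsmul_eq_mul, ← Set.ncard_coe_finset,
    mul_inv_cancel₀ (left_ne_zero_of_mul_eq_one hF.ncard_mul)]

end

variable [FiniteDimensional K V]

theorem isAntichain (hF : IsExtremal F t) : IsAntichain (· ≤ ·) F := fun G hG G' hG' hne hle =>
  hne (eq_of_le_of_finrank_eq hle ((hF.finrank_eq G hG).trans (hF.finrank_eq G' hG').symm))

variable [Finite K]

theorem one_le_ownDensity_add (hF : IsExtremal F t) (hG : G ∈ F) {i j : ℕ} (hij : i + j = 2 * t) :
    1 ≤ ownDensity F G i + ownDensity F G j :=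
  have : Finite V := finite_of_finite K
  one_le_density_add_density (isOwn_map_subtype_or hF.isCoverFree hF.isAntichain hG)
    (hij.trans (hF.finrank_eq G hG).symm)

theorem inv_ncard_add_sum_le (hF : IsExtremal F t) (hG : G ∈ F) :
    (F.ncard : ℚ)⁻¹ + ∑ j ∈ Finset.range t,
        (exitProb (Nat.card K) (finrank K V) (2 * t) j -
          exitProb (Nat.card K) (finrank K V) (2 * t) (2 * t - j)) * ownDensity F G j ≤
      ∑ i ∈ Finset.range (2 * t + 1),
        exitProb (Nat.card K) (finrank K V) (finrank K G) i * ownDensity F G i := by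
  rw [inv_eq_of_mul_eq_one_right hF.ncard_mul, hF.finrank_eq G hG]
  exact le_sum_exitProb_mul Finite.one_lt_card hF.two_mul_lt
    (fun i j => hF.one_le_ownDensity_add hG) (card_pow_add_one_mul_one_sub_density_le
      (isOwn_map_subtype_or hF.isCoverFree hF.isAntichain hG) hF.ne_zero (hF.finrank_eq G hG))

theorem sum_exitProb_mul_ownDensity (hF : IsExtremal F t) (hG : G ∈ F) :
    ∑ i ∈ Finset.range (2 * t + 1),
      exitProb (Nat.card K) (finrank K V) (finrank K G) i * ownDensity F G i =
        (F.ncard : ℚ)⁻¹ := by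
  have : Finite V := finite_of_finite K
  lift F to Finset (Submodule K V) using F.toFinite
  have hle (G : Submodule K V) (hG : G ∈ F) := (le_add_of_nonneg_right
    (Finset.sum_nonneg fun j => hF.mul_ownDensity_nonneg G)).trans (hF.inv_ncard_add_sum_le hG)
  have hsum := (sum_sum_exitProb_mul_ownDensity_le_one F hF.two_mul_lt).trans hF.sum_inv_ncard.ge
  exact ((Finset.sum_eq_sum_iff_of_le hle).1 ((Finset.sum_le_sum hle).antisymm hsum) G hG).symm

theorem ownDensity_eq_zero (hF : IsExtremal F t) (hG : G ∈ F) {j : ℕ} (hj : j < t) :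
    ownDensity F G j = 0 := by
  have hle := hF.inv_ncard_add_sum_le hG
  rw [hF.sum_exitProb_mul_ownDensity hG, add_le_iff_nonpos_right] at hle
  have hnonneg := fun j => hF.mul_ownDensity_nonneg G (j := j)
  have hzero := (Finset.sum_eq_zero_iff_of_nonneg hnonneg).1
    (hle.antisymm (Finset.sum_nonneg hnonneg)) j (Finset.mem_range.2 hj)
  exact (mul_eq_zero.1 hzero).resolve_left (sub_pos.2 (hF.exitProb_two_mul_sub_lt hj)).ne'

theorem isOwn_of_lt_finrank (hF : IsExtremal F t) (hG : G ∈ F) (hS : S ≤ G)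
    (ht : t < finrank K S) : IsOwn F G S := by
  have hdim := hF.finrank_eq G hG
  have hSG := finrank_mono hS
  have : Finite V := finite_of_finite K
  have hadd := hF.one_le_ownDensity_add hG (show 2 * t - finrank K S + finrank K S = 2 * t by lia)
  rw [hF.ownDensity_eq_zero hG (by lia), zero_add] at hadd
  exact isOwn_of_one_le_ownDensity hadd hS

theorem exists_lastOwn (hF : IsExtremal F t) {e : ℕ → Submodule K V} (he : IsFullFlag e) :
    ∃ G, ∃ i ≥ t, LastOwn F e G i := by
  have : Finite V := finite_of_finite K
  lift F to Finset (Submodule K V) using F.toFinite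
  have hsum := Finset.sum_congr rfl fun G (hG : G ∈ F) => hF.sum_exitProb_mul_ownDensity hG
  obtain ⟨G, i, hi, hlast⟩ := he.exists_lastOwn hF.two_mul_lt (hsum.trans hF.sum_inv_ncard).ge
  have hdens := hlast.1.ownDensity_ne_zero
  rw [he.finrank_eq i (hi.le.trans hF.two_mul_lt)] at hdens
  exact ⟨G, i, not_lt.1 fun hit => hdens (hF.ownDensity_eq_zero hlast.1.mem hit), hlast⟩

theorem exists_isOwn_sup_span_singleton (hF : IsExtremal F t) {T : Submodule K V}
    (hT : finrank K T = t) (hown : ∀ G, ¬IsOwn F G T) {v : V} (hv : v ∉ T) :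
    ∃ G, IsOwn F G (T ⊔ K ∙ v) := by
  have hS := finrank_sup_span_singleton hv
  obtain ⟨e, he, heT, heS⟩ := exists_isFullFlag_eq_eq (le_sup_left : T ≤ T ⊔ K ∙ v)
  obtain ⟨G, i, hi, hlast⟩ := hF.exists_lastOwn he
  rw [hT] at heT hS
  rw [hS] at heS
  have hne : t ≠ i := by
    rintro rfl
    exact hown G (heT ▸ hlast.1)
  have hle : T ⊔ K ∙ v ≤ G := heS ▸ (he.monotone (by lia)).trans hlast.1.le
  exact ⟨G, hF.isOwn_of_lt_finrank hlast.1.mem hle (by lia)⟩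

end IsExtremal

end Extremal

section Pencil

variable {K V : Type*} [Field K] [AddCommGroup V] [Module K V] [FiniteDimensional K V]
  {F : Set (Submodule K V)} {A B G T U : Submodule K V} {d t : ℕ}

theorem sup_span_singleton_eq_of_finrank {v : V} (hBA : B ≤ A)
    (hdim : finrank K A = finrank K B + 1) (hvA : v ∈ A) (hvB : v ∉ B) : B ⊔ K ∙ v = A :=
  eq_of_le_of_finrank_eq (sup_le hBA ((span_singleton_le_iff_mem _ _).2 hvA))
    ((finrank_sup_span_singleton hvB).trans hdim.symm)

variable [Finite K]

theorem ncard_mul_pow_sub_pow (hd : ∀ G ∈ F, finrank K G = d) (hU : finrank K U ≤ d)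
    (hown : ∀ v ∉ U, ∃ G, IsOwn F G (U ⊔ K ∙ v)) :
    ({G ∈ F | U ≤ G}.ncard : ℚ) * ((Nat.card K : ℚ) ^ d - (Nat.card K : ℚ) ^ finrank K U) =
      (Nat.card K : ℚ) ^ finrank K V - (Nat.card K : ℚ) ^ finrank K U := by
  have : Finite V := finite_of_finite K
  have hpow : Nat.card K ^ finrank K U ≤ Nat.card K ^ d := Nat.pow_le_pow_right Nat.card_pos hU
  have hcount : {G ∈ F | U ≤ G}.ncard * (Nat.card K ^ d - Nat.card K ^ finrank K U) =
      (U : Set V)ᶜ.ncard * 1 := by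
    refine ncard_mul_eq_ncard_mul (r := fun G v => v ∈ G) (fun G hG => ?_) fun v hv => ?_
    · have hsdiff := ncard_sdiff_eq_pow_sub_pow hG.2
      rw [hd G hG.1] at hsdiff
      rw [← Nat.cast_inj (R := ℚ), Nat.cast_sub hpow, Nat.cast_pow, Nat.cast_pow, ← hsdiff,
        Set.sdiff_eq, Set.inter_comm]
      rfl
    · obtain ⟨G, hG⟩ := hown v hv
      refine Set.ncard_eq_one.2 ⟨G, hG ▸ Set.ext fun G' => ?_⟩
      simp only [Set.mem_ofPred_eq, sup_le_iff, span_singleton_le_iff_mem, and_assoc]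
  rw [mul_one] at hcount
  rw [← ncard_compl_eq_pow_sub_pow]
  exact_mod_cast hcount

theorem pow_sub_one_div_pow_sub_one {q n t : ℕ} (hq : 1 < q) (hn : 2 * t < n) :
    ((q : ℚ) ^ (n - t) - 1) / ((q : ℚ) ^ t - 1) =
      ((q : ℚ) ^ n - (q : ℚ) ^ t) / ((q : ℚ) ^ (2 * t) - (q : ℚ) ^ t) := by
  have hfactor {m : ℕ} (hm : t ≤ m) :
      (q : ℚ) ^ m - (q : ℚ) ^ t = (q : ℚ) ^ t * ((q : ℚ) ^ (m - t) - 1) := by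
    rw [mul_sub_one, ← pow_add, Nat.add_sub_cancel' hm]
  rw [hfactor (by lia), hfactor (by lia), mul_div_mul_left _ _ (by positivity),
    show 2 * t - t = t by lia]

namespace IsExtremal

theorem le_of_isOwn (hF : IsExtremal F t) (hT : finrank K T = t) (hown : ∀ G, ¬IsOwn F G T)
    (hB : finrank K B + 1 = t) (hBT : B ≤ T) (hA : finrank K A = t) (hBA : B ≤ A)
    (hAG : IsOwn F G A) : T ≤ G := by
  obtain ⟨v, hvA, hvT⟩ : ∃ v ∈ A, v ∉ T := SetLike.not_le_iff_exists.1 fun hAT =>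
    hown G (eq_of_le_of_finrank_eq hAT (hA.trans hT.symm) ▸ hAG)
  obtain ⟨G', hG'⟩ := hF.exists_isOwn_sup_span_singleton hT hown hvT
  have hAG' : A ≤ G' :=
    calc A = B ⊔ K ∙ v :=
          (sup_span_singleton_eq_of_finrank hBA (by lia) hvA fun hvB => hvT (hBT hvB)).symm
      _ ≤ T ⊔ K ∙ v := sup_le_sup_right hBT _
      _ ≤ G' := hG'.le
  exact hAG.eq hG'.mem hAG' ▸ le_sup_left.trans hG'.le

theorem le_of_mem_of_le (hF : IsExtremal F t) (hT : finrank K T = t) (hown : ∀ G, ¬IsOwn F G T)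
    (hB : finrank K B + 1 = t) (hBT : B ≤ T) (hA : finrank K A = t) (hBA : B ≤ A)
    {G₀ : Submodule K V} (hAG₀ : IsOwn F G₀ A) (hG : G ∈ F) (hBG : B ≤ G) : T ≤ G := by
  by_contra hTG
  have hGG₀ : G ≤ G₀ := fun v hvG => by
    by_cases hvB : v ∈ B
    · exact hAG₀.le (hBA hvB)
    have hdim : finrank K ↥(B ⊔ K ∙ v) = t := (finrank_sup_span_singleton hvB).trans hB
    have hle : B ⊔ K ∙ v ≤ G := sup_le hBG ((span_singleton_le_iff_mem _ _).2 hvG)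
    have hown' (G') (hG' : IsOwn F G' (B ⊔ K ∙ v)) : False :=
      hTG (hG'.eq hG hle ▸ hF.le_of_isOwn hT hown hB hBT hdim le_sup_left hG')
    exact hF.le_of_isOwn hdim hown' hB le_sup_left hA hBA hAG₀
      (mem_sup_right (mem_span_singleton_self v))
  exact hTG (hF.isAntichain.eq hG hAG₀.mem hGG₀ ▸ hF.le_of_isOwn hT hown hB hBT hA hBA hAG₀)

theorem setOf_le_eq_of_not_isOwn (hF : IsExtremal F t) (hT : finrank K T = t)
    (hown : ∀ G, ¬IsOwn F G T) (hB : finrank K B + 1 = t) (hBT : B ≤ T) (hA : finrank K A = t)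
    (hBA : B ≤ A) (hAG : IsOwn F G A) : {G ∈ F | B ≤ G} = {G ∈ F | T ≤ G} :=
  Set.ext fun _ => and_congr_right fun hG =>
    ⟨hF.le_of_mem_of_le hT hown hB hBT hA hBA hAG hG, hBT.trans⟩

theorem ncard_eq_of_not_isOwn (hF : IsExtremal F t) (hT : finrank K T = t)
    (hown : ∀ G, ¬IsOwn F G T) : ({G ∈ F | T ≤ G}.ncard : ℚ) =
      ((Nat.card K : ℚ) ^ (finrank K V - t) - 1) / ((Nat.card K : ℚ) ^ t - 1) := by
  have ht := hF.ne_zero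
  have hcount := ncard_mul_pow_sub_pow hF.finrank_eq (by lia) fun v =>
    hF.exists_isOwn_sup_span_singleton hT hown
  rw [hT] at hcount
  rwa [pow_sub_one_div_pow_sub_one Finite.one_lt_card hF.two_mul_lt,
    eq_div_iff (pow_sub_pow_pos Finite.one_lt_card (by lia)).ne']

theorem one_lt_ncard_of_not_isOwn (hF : IsExtremal F t) (hT : finrank K T = t)
    (hown : ∀ G, ¬IsOwn F G T) : 1 < {G ∈ F | T ≤ G}.ncard := by
  have ht := hF.ne_zero
  have hpow := pow_sub_pow_pos (Finite.one_lt_card (α := K)) hF.two_mul_lt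
  rw [← Nat.one_lt_cast (α := ℚ), hF.ncard_eq_of_not_isOwn hT hown,
    pow_sub_one_div_pow_sub_one Finite.one_lt_card hF.two_mul_lt,
    one_lt_div (pow_sub_pow_pos Finite.one_lt_card (by lia))]
  linarith

theorem eq_of_not_isOwn (hF : IsExtremal F t) (hT : finrank K T = t) (hown : ∀ G, ¬IsOwn F G T)
    {T' : Submodule K V} (hT' : finrank K T' = t)
    (hTT' : {G ∈ F | T ≤ G} = {G ∈ F | T' ≤ G}) : T' = T := by
  by_contra hne
  have : Finite V := finite_of_finite K
  obtain ⟨G, hG, G', hG', hGG'⟩ := (Set.one_lt_ncard (Set.toFinite _)).1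
    (hF.one_lt_ncard_of_not_isOwn hT hown)
  have hle {G : Submodule K V} (hG : G ∈ {G ∈ F | T ≤ G}) : T ⊔ T' ≤ G :=
    sup_le hG.2 (hTT' ▸ hG : G ∈ {G ∈ F | T' ≤ G}).2
  have hlt : T < T ⊔ T' := left_lt_sup.2 fun hT'T =>
    hne (eq_of_le_of_finrank_eq hT'T (hT'.trans hT.symm))
  have hS := hF.isOwn_of_lt_finrank hG.1 (hle hG) (hT ▸ finrank_lt_finrank_of_lt hlt)
  exact hGG' (hS.eq hG'.1 (hle hG')).symm

theorem ncard_lt_of_forall_isOwn (hF : IsExtremal F t) (hB : finrank K B + 1 = t)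
    (hown : ∀ T : Submodule K V, finrank K T = t → B ≤ T → ∃ G, IsOwn F G T) :
    ({G ∈ F | B ≤ G}.ncard : ℚ) <
      ((Nat.card K : ℚ) ^ (finrank K V - t) - 1) / ((Nat.card K : ℚ) ^ t - 1) := by
  have hq := Finite.one_lt_card (α := K)
  have hn := hF.two_mul_lt
  have hcount := ncard_mul_pow_sub_pow hF.finrank_eq (by lia) fun v (hv : v ∉ B) =>
    hown _ ((finrank_sup_span_singleton hv).trans hB) le_sup_left
  have hB_pos := pow_sub_pow_pos hq (show finrank K B < 2 * t by lia)
  have ht_pos := pow_sub_pow_pos hq (show t < 2 * t by lia)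
  have hBt := pow_sub_pow_pos hq (show finrank K B < t by lia)
  have htn := pow_sub_pow_pos hq hn
  rw [pow_sub_one_div_pow_sub_one hq hn, eq_div_of_mul_eq hB_pos.ne' hcount,
    div_lt_div_iff₀ hB_pos ht_pos]
  linarith [mul_pos hBt htn]

end IsExtremal

end Pencil

end CoverFree

theorem stmt18 (q n t : ℕ) (K : Type*) [Field K] [Fintype K] (hK : Fintype.card K = q)
    (V : Type*) [AddCommGroup V] [Module K V] [FiniteDimensional K V]
    (hV : Module.finrank K V = n) (ht : 2 ≤ t) (hn : 2 * t + 1 ≤ n)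
    (F : Set (Submodule K V)) (hdim : ∀ A ∈ F, Module.finrank K A = 2 * t)
    (hcf : IsCoverFree F)
    (hcard : (F.ncard : ℚ) = GaussQ q (n - 1) t / GaussQ q (2 * t - 1) t)
    (B : Submodule K V) (hB : Module.finrank K B = t - 1)
    (hBshadow : ∃ A ∈ OmegaSet F t, B ≤ A) :
    ({G ∈ F | B ≤ G}.ncard : ℚ) ≤ ((q : ℚ) ^ (n - t) - 1) / ((q : ℚ) ^ t - 1) ∧
    (({G ∈ F | B ≤ G}.ncard : ℚ) = ((q : ℚ) ^ (n - t) - 1) / ((q : ℚ) ^ t - 1) ↔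
      ∃! T : Submodule K V, Module.finrank K T = t ∧ B ≤ T ∧ 1 < {G ∈ F | T ≤ G}.ncard) := by
  rw [Fintype.card_eq_nat_card] at hK
  subst hK hV
  have hF : CoverFree.IsExtremal F t := ⟨by lia, hn, hdim, hcf, hcard⟩
  have hBt : Module.finrank K B + 1 = t := by lia
  obtain ⟨A, ⟨hA, hA₁⟩, hBA⟩ := hBshadow
  obtain ⟨G₀, hAG₀⟩ := CoverFree.ncard_eq_one_iff.1 hA₁
  by_cases hall : ∀ T : Submodule K V, Module.finrank K T = t → B ≤ T → ∃ G, CoverFree.IsOwn F G T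
  · have hlt := hF.ncard_lt_of_forall_isOwn hBt hall
    refine ⟨hlt.le, iff_of_false hlt.ne ?_⟩
    rintro ⟨T, ⟨hT, hBT, hT₁⟩, -⟩
    exact hT₁.ne' (CoverFree.ncard_eq_one_iff.2 (hall T hT hBT))
  · push Not at hall
    obtain ⟨T, hT, hBT, hown⟩ := hall
    have hpencil (T : Submodule K V) (hT : Module.finrank K T = t) (hBT : B ≤ T)
        (hown : ∀ G, ¬CoverFree.IsOwn F G T) :=
      hF.setOf_le_eq_of_not_isOwn hT hown hBt hBT hA hBA hAG₀
    have heq := hF.ncard_eq_of_not_isOwn hT hown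
    rw [hpencil T hT hBT hown]
    refine ⟨heq.le, iff_of_true heq ⟨T, ⟨hT, hBT, hF.one_lt_ncard_of_not_isOwn hT hown⟩, ?_⟩⟩
    rintro T' ⟨hT', hBT', hT'₁⟩
    have hown' := not_exists.1 (mt CoverFree.ncard_eq_one_iff.2 hT'₁.ne')
    exact hF.eq_of_not_isOwn hT hown hT'
      ((hpencil T hT hBT hown).symm.trans (hpencil T' hT' hBT' hown'))
end

section
/- Let V be an n-dimensional vector space over the finite field 𝔽_q with n ≥ 2t+1 and t ≥ 2, and let F be a cover-free family of 2t-dimensional subspaces of V with |F| = [n-1 choose t]_q / [2t-1 choose t]_q. Let Ω be the set of t-dimensional subspaces A of V with |F_A| = 1. Then |△(Ω)| ≥ q^{t-1} [n-1 choose t-1]_q; moreover, if equality holds, then for every F ∈ F there exists a 1-dimensional subspace E of F such that N_t(F) = {H : H a t-dimensional subspace of F with E ≤ H}. -/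
/-- The shadow `△(Ω)` of the family `Ω` of `t`-dimensional subspaces: all
`(t-1)`-dimensional subspaces contained in some member of `Ω`. -/
def ShadowSet {K V : Type*} [Field K] [AddCommGroup V] [Module K V]
    (t : ℕ) (H : Set (Submodule K V)) : Set (Submodule K V) :=
  {G | Module.finrank K G = t - 1 ∧ ∃ A ∈ H, G ≤ A}

/-!
Share each `G ∈ △(Ω)` among the members of `F` above it. Of the `t`-subspaces above `G`, let `c` lie
in `B ∈ F`, let `C` lie in `V`, and let `e` be those in `N_t(B)`. Then `c - e` members of `Ω` above
`G` lie in `B` and at most `C - e` lie in `V`, so `B` may claim `(c - e) / (C - e)` of `G`.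

As `F` is cover-free, `N_t(B)` is an intersecting family of `t`-subspaces of the `2t`-space `B`.
Comparing it with the translates of a spread bounds its size by `[2t - 1 choose t]`, and the second
eigenvalue of the incidence operator between levels `t - 1` and `t` then bounds `∑ e ^ 2`. Since
`e` is an integer, these two bounds give every `B` at least an equal portion of the claimed total.

If the bound is attained, `e` only takes the values `0`, `1` and `c`, and `∑ e ^ 2` is known. Then
some `T ∈ N_t(B)` has many `(t - 1)`-subspaces all of whose `t`-superspaces in `B` are in `N_t(B)`.
Intersecting these leads down to a point with the same property, and `N_t(B)` is the star of it.
-/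

open Finset Module

/-- The `q`-analogue `[m]_q = 1 + q + ⋯ + q ^ (m - 1)` of `m`. Over a field with `q` elements it
counts the points of an `m`-dimensional space, and also its hyperplanes. -/
def qNumber (q m : ℕ) : ℚ := ∑ i ∈ range m, (q : ℚ) ^ i

section qNumber

variable (q m : ℕ)

@[simp]
theorem qNumber_zero : qNumber q 0 = 0 := sum_range_zero _

@[simp]
theorem qNumber_one : qNumber q 1 = 1 := by simp [qNumber]

theorem qNumber_succ : qNumber q (m + 1) = qNumber q m + (q : ℚ) ^ m := sum_range_succ _ _

theorem qNumber_succ' : qNumber q (m + 1) = q * qNumber q m + 1 := geom_sum_succ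

theorem qNumber_mul : qNumber q m * ((q : ℚ) - 1) = (q : ℚ) ^ m - 1 := geom_sum_mul _ _

theorem qNumber_nonneg : 0 ≤ qNumber q m := sum_nonneg fun _ _ ↦ by positivity

variable {q m}

theorem qNumber_strictMono (hq : 0 < q) : StrictMono (qNumber q) :=
  strictMono_nat_of_lt_succ fun m ↦ by
    rw [qNumber_succ]
    exact lt_add_of_pos_right _ (by positivity)

theorem qNumber_pos (hq : 0 < q) (hm : 0 < m) : 0 < qNumber q m := by
  simpa using qNumber_strictMono hq hm

theorem one_lt_qNumber (hq : 0 < q) (hm : 1 < m) : 1 < qNumber q m := by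
  simpa using qNumber_strictMono hq hm

theorem one_le_qNumber (hq : 0 < q) (hm : 0 < m) : 1 ≤ qNumber q m := by
  simpa using (qNumber_strictMono hq).monotone hm

end qNumber

section Intervals

variable {K V : Type*} [Field K] [AddCommGroup V] [Module K V]

theorem finrank_comap_subtype {A B : Submodule K V} (hAB : A ≤ B) :
    finrank K (A.comap B.subtype) = finrank K A :=
  (Submodule.comapSubtypeEquivOfLe hAB).finrank_eq

variable [FiniteDimensional K V]

theorem finrank_map_mkQ_add {A B : Submodule K V} (hAB : A ≤ B) :
    finrank K (B.map A.mkQ) + finrank K A = finrank K B := by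
  have h := (A.mkQ.domRestrict B).finrank_range_add_finrank_ker
  rwa [LinearMap.range_domRestrict, LinearMap.ker_domRestrict, Submodule.ker_mkQ,
    finrank_comap_subtype hAB] at h

variable [Finite K]

instance finite_submodule : Finite (Submodule K V) :=
  have := Module.finite_of_finite K (M := V)
  inferInstance

/-- The subspaces `C` of dimension `i` with `A ≤ C ≤ B`. All sums in the argument run over such
sets: with `A = ⊥` over the `i`-dimensional subspaces of `B`. -/
noncomputable def subspacesBetween (A B : Submodule K V) (i : ℕ) : Finset (Submodule K V) :=
  (Set.toFinite {C | A ≤ C ∧ C ≤ B ∧ finrank K C = i}).toFinset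

@[simp]
theorem mem_subspacesBetween {A B C : Submodule K V} {i : ℕ} :
    C ∈ subspacesBetween A B i ↔ A ≤ C ∧ C ≤ B ∧ finrank K C = i := by
  simp [subspacesBetween]

theorem card_subspacesBetween_comap_subtype {A B : Submodule K V} (hAB : A ≤ B) (i : ℕ) :
    #(subspacesBetween (A.comap B.subtype) ⊤ i) = #(subspacesBetween A B i) := by
  refine card_nbij' (Submodule.map B.subtype) (Submodule.comap B.subtype) ?_ ?_ ?_ ?_
  · rintro C hC
    simp only [mem_coe, mem_subspacesBetween] at hC ⊢
    refine ⟨?_, Submodule.map_subtype_le B C, by rw [Submodule.finrank_map_subtype_eq, hC.2.2]⟩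
    simpa [hAB] using Submodule.map_mono (f := B.subtype) hC.1
  · rintro C hC
    simp only [mem_coe, mem_subspacesBetween] at hC ⊢
    exact ⟨Submodule.comap_mono hC.1, le_top, by rw [finrank_comap_subtype hC.2.1, hC.2.2]⟩
  · exact fun C _ ↦ Submodule.comap_map_eq_of_injective B.injective_subtype C
  · rintro C hC
    simp only [mem_coe, mem_subspacesBetween] at hC
    rw [Submodule.map_comap_subtype, inf_eq_right.2 hC.2.1]

theorem card_subspacesBetween_map_mkQ {A B : Submodule K V} (hAB : A ≤ B) (i : ℕ) :
    #(subspacesBetween ⊥ (B.map A.mkQ) i) = #(subspacesBetween A B (finrank K A + i)) := by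
  have comap_map {C : Submodule K V} (hC : A ≤ C) : (C.map A.mkQ).comap A.mkQ = C := by
    rw [Submodule.comap_map_mkQ, sup_eq_right.2 hC]
  have le_comap (C : Submodule K (V ⧸ A)) : A ≤ C.comap A.mkQ := Submodule.le_comap_mkQ A C
  have map_comap (C : Submodule K (V ⧸ A)) : (C.comap A.mkQ).map A.mkQ = C :=
    Submodule.map_comap_eq_of_surjective A.mkQ_surjective C
  refine card_nbij' (Submodule.comap A.mkQ) (Submodule.map A.mkQ) ?_ ?_ ?_ ?_
  · rintro C hC
    simp only [mem_coe, mem_subspacesBetween] at hC ⊢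
    refine ⟨le_comap C, ?_, ?_⟩
    · simpa only [comap_map hAB] using Submodule.comap_mono (f := A.mkQ) hC.2.1
    · rw [← finrank_map_mkQ_add (le_comap C), map_comap, hC.2.2, add_comm]
  · rintro C hC
    simp only [mem_coe, mem_subspacesBetween] at hC ⊢
    have := finrank_map_mkQ_add hC.1
    exact ⟨bot_le, Submodule.map_mono hC.2.1, by lia⟩
  · exact fun C _ ↦ map_comap C
  · rintro C hC
    exact comap_map (mem_subspacesBetween.1 hC).1

theorem card_subspacesBetween_bot_top_one :
    (#(subspacesBetween (⊥ : Submodule K V) ⊤ 1) : ℚ) = qNumber (Nat.card K) (finrank K V) := by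
  have h : #(subspacesBetween (⊥ : Submodule K V) ⊤ 1) = Nat.card (Projectivization K V) := by
    rw [Nat.card_congr (Projectivization.equivSubmodule K V),
      Nat.subtype_card (subspacesBetween ⊥ ⊤ 1) fun C ↦ by simp]
  rw [h, Projectivization.card_of_finrank K V rfl, qNumber]
  push_cast
  rfl

theorem card_subspacesBetween_add_one {A B : Submodule K V} (hAB : A ≤ B) :
    (#(subspacesBetween A B (finrank K A + 1)) : ℚ) =
      qNumber (Nat.card K) (finrank K B - finrank K A) := by
  have : finrank K (B.map A.mkQ) = finrank K B - finrank K A := by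
    have := finrank_map_mkQ_add hAB
    lia
  rw [← card_subspacesBetween_map_mkQ hAB, ← card_subspacesBetween_comap_subtype bot_le, ← this,
    Submodule.comap_bot, Submodule.ker_subtype, card_subspacesBetween_bot_top_one]

theorem card_subspacesBetween_dualAnnihilator (A : Submodule K V) {i j : ℕ}
    (hij : i + j = finrank K V) :
    #(subspacesBetween A ⊤ i) = #(subspacesBetween ⊥ A.dualAnnihilator j) := by
  refine card_equiv
    ((Subspace.orderIsoFiniteDimensional (K := K) (V := V)).toEquiv.trans OrderDual.ofDual)
    fun C ↦ ?_
  have hC := Subspace.finrank_add_finrank_dualAnnihilator_eq C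
  have happly : ((Subspace.orderIsoFiniteDimensional (K := K) (V := V)).toEquiv.trans
    OrderDual.ofDual) C = C.dualAnnihilator := rfl
  simp only [happly, mem_subspacesBetween, bot_le, le_top, true_and,
    Subspace.dualAnnihilator_le_dualAnnihilator_iff]
  exact and_congr_right fun _ ↦ by lia

theorem card_subspacesBetween_of_add_one_eq {A B : Submodule K V} (hAB : A ≤ B) {i : ℕ}
    (hi : i + 1 = finrank K B) :
    (#(subspacesBetween A B i) : ℚ) = qNumber (Nat.card K) (finrank K B - finrank K A) := by
  have hdual : finrank K (A.comap B.subtype).dualAnnihilator = finrank K B - finrank K A := by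
    have := Subspace.finrank_add_finrank_dualAnnihilator_eq (A.comap B.subtype)
    rw [finrank_comap_subtype hAB] at this
    lia
  rw [← card_subspacesBetween_comap_subtype hAB, card_subspacesBetween_dualAnnihilator _ hi]
  simpa [hdual] using
    card_subspacesBetween_add_one (bot_le (a := (A.comap B.subtype).dualAnnihilator))

end Intervals

section Levels

variable {K V : Type*} [Field K] [AddCommGroup V] [Module K V] [FiniteDimensional K V] [Finite K]

/-- The operator carrying a function on `i`-dimensional subspaces to the function
`H ↦ ∑ f G`, the sum being over the `i`-dimensional subspaces `G` of `H`. -/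
noncomputable def upSum (i : ℕ) (f : Submodule K V → ℚ) (H : Submodule K V) : ℚ :=
  ∑ G ∈ subspacesBetween ⊥ H i, f G

/-- The operator carrying a function on the `i`-dimensional subspaces of `B` to the function
`G ↦ ∑ f T`, the sum being over the `i`-dimensional `T` with `G ≤ T ≤ B`. Between two levels of the
subspace lattice of `B` it is the transpose of `upSum`. -/
noncomputable def downSum (B : Submodule K V) (i : ℕ) (f : Submodule K V → ℚ)
    (G : Submodule K V) : ℚ :=
  ∑ T ∈ subspacesBetween G B i, f T

theorem subspacesBetween_bot_zero (B : Submodule K V) : subspacesBetween ⊥ B 0 = {⊥} := by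
  ext T
  simp only [mem_subspacesBetween, bot_le, true_and, Submodule.finrank_eq_zero, mem_singleton]
  exact and_iff_right_of_imp fun h ↦ h ▸ bot_le

theorem upSum_const {H : Submodule K V} {i : ℕ} (hH : finrank K H = i + 1) (a : ℚ) :
    upSum i (fun _ ↦ a) H = qNumber (Nat.card K) (i + 1) * a := by
  have h := card_subspacesBetween_of_add_one_eq (bot_le (a := H)) hH.symm
  rw [finrank_bot, Nat.sub_zero, hH] at h
  rw [upSum, sum_const, nsmul_eq_mul, h]

theorem downSum_const {G B : Submodule K V} {i : ℕ} (hGB : G ≤ B) (hG : finrank K G = i) (a : ℚ) :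
    downSum B (i + 1) (fun _ ↦ a) G = qNumber (Nat.card K) (finrank K B - i) * a := by
  rw [downSum, sum_const, nsmul_eq_mul, ← hG, card_subspacesBetween_add_one hGB]

theorem sum_upSum_mul (B : Submodule K V) (i j : ℕ) (f g : Submodule K V → ℚ) :
    ∑ H ∈ subspacesBetween ⊥ B j, upSum i f H * g H =
      ∑ G ∈ subspacesBetween ⊥ B i, f G * downSum B j g G := by
  simp only [upSum, downSum, sum_mul, mul_sum]
  refine sum_comm' fun H G ↦ ?_
  simp only [mem_subspacesBetween, bot_le, true_and]
  exact ⟨fun h ↦ ⟨⟨h.2.1, h.1⟩, h.2.1.trans h.1.1, h.2.2⟩, fun h ↦ ⟨h.1.2, h.1.1, h.2.2⟩⟩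

theorem sum_downSum (B : Submodule K V) (i : ℕ) (f : Submodule K V → ℚ) :
    ∑ G ∈ subspacesBetween ⊥ B i, downSum B (i + 1) f G =
      qNumber (Nat.card K) (i + 1) * ∑ T ∈ subspacesBetween ⊥ B (i + 1), f T := by
  have h := sum_upSum_mul B i (i + 1) (fun _ ↦ 1) f
  simp only [one_mul] at h
  rw [← h, mul_sum]
  exact sum_congr rfl fun H hH ↦ by rw [upSum_const (mem_subspacesBetween.1 hH).2.2, mul_one]

theorem card_subspacesBetween_mul_qNumber (B : Submodule K V) (i : ℕ) :
    (#(subspacesBetween ⊥ B i) : ℚ) * qNumber (Nat.card K) (finrank K B - i) =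
      #(subspacesBetween ⊥ B (i + 1)) * qNumber (Nat.card K) (i + 1) := by
  have h := sum_downSum B i fun _ ↦ 1
  rw [sum_congr rfl fun G hG ↦
    downSum_const (mem_subspacesBetween.1 hG).2.1 (mem_subspacesBetween.1 hG).2.2 1] at h
  simpa [mul_comm] using h

end Levels

section GaussQ

variable {q : ℕ}

@[simp]
theorem GaussQ_zero_right (q m : ℕ) : GaussQ q m 0 = 1 := prod_range_zero _

theorem GaussQ_succ_mul (hq : 1 < q) (m k : ℕ) :
    GaussQ q m (k + 1) * qNumber q (k + 1) = GaussQ q m k * qNumber q (m - k) := by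
  have hq1 : (1 : ℚ) < q := by exact_mod_cast hq
  have hden (j : ℕ) : (q : ℚ) ^ (j + 1) - 1 ≠ 0 :=
    (sub_pos.2 (one_lt_pow₀ hq1 j.succ_ne_zero)).ne'
  have GaussQ_eq (k : ℕ) :
      GaussQ q m k = ∏ i ∈ range k, ((q : ℚ) ^ (m - i) - 1) / ((q : ℚ) ^ (i + 1) - 1) := by
    rw [GaussQ, prod_div_distrib, prod_div_distrib,
      ← prod_range_reflect fun i ↦ (q : ℚ) ^ (k - i) - 1]
    congr 1
    refine prod_congr rfl fun i hi ↦ ?_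
    rw [show k - (k - 1 - i) = i + 1 by have := mem_range.1 hi; lia]
  refine mul_right_cancel₀ (sub_pos.2 hq1).ne' ?_
  rw [mul_assoc, mul_assoc, qNumber_mul, qNumber_mul, GaussQ_eq, GaussQ_eq, prod_range_succ,
    mul_assoc, div_mul_cancel₀ _ (hden k)]

theorem GaussQ_succ_left_mul (hq : 1 < q) (m k : ℕ) :
    GaussQ q (m + 1) k * qNumber q (m + 1 - k) = qNumber q (m + 1) * GaussQ q m k := by
  induction k with
  | zero => simp
  | succ k ih =>
    refine mul_right_cancel₀ (qNumber_pos (zero_lt_one.trans hq) k.succ_pos).ne' ?_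
    rw [Nat.add_sub_add_right]
    linear_combination qNumber q (m - k) * GaussQ_succ_mul hq (m + 1) k +
      qNumber q (m - k) * ih - qNumber q (m + 1) * GaussQ_succ_mul hq m k

theorem GaussQ_pos (hq : 1 < q) {m k : ℕ} (hkm : k ≤ m) : 0 < GaussQ q m k := by
  have hq0 := zero_lt_one.trans hq
  induction k with
  | zero => simp
  | succ k ih =>
    refine pos_of_mul_pos_left ?_ (qNumber_nonneg q (k + 1))
    rw [GaussQ_succ_mul hq]
    exact mul_pos (ih (by lia)) (qNumber_pos hq0 (by lia))

theorem GaussQ_two_mul (hq : 1 < q) {t : ℕ} (ht : 0 < t) :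
    GaussQ q (2 * t) t = (1 + (q : ℚ) ^ t) * GaussQ q (2 * t - 1) t := by
  have hq1 : (q : ℚ) - 1 ≠ 0 := by
    have : (1 : ℚ) < q := by exact_mod_cast hq
    exact (sub_pos.2 this).ne'
  have hfactor : qNumber q (2 * t) = qNumber q t * (1 + (q : ℚ) ^ t) := by
    refine mul_right_cancel₀ hq1 ?_
    rw [qNumber_mul, two_mul, pow_add]
    linear_combination -(1 + (q : ℚ) ^ t) * qNumber_mul q t
  have h := GaussQ_succ_left_mul hq (2 * t - 1) t
  rw [show 2 * t - 1 + 1 = 2 * t by lia, show 2 * t - t = t by lia, hfactor] at h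
  refine mul_right_cancel₀ (qNumber_pos (zero_lt_one.trans hq) ht).ne' ?_
  rw [h]
  ring

theorem sub_one_sub_pow_add_div_GaussQ_pos (hq : 1 < q) {s : ℕ} (ν : ℕ) {C : ℚ}
    (hC : qNumber q (s + 2) < C) :
    0 < C - 1 - (q : ℚ) ^ (s + 1) + ν / GaussQ q (2 * s + 1) (s + 1) := by
  have hM : 0 < GaussQ q (2 * s + 1) (s + 1) := GaussQ_pos hq (by lia)
  have hone : 1 ≤ qNumber q (s + 1) := one_le_qNumber (zero_lt_one.trans hq) s.succ_pos
  have hdiv : 0 ≤ ν / GaussQ q (2 * s + 1) (s + 1) := by positivity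
  rw [qNumber_succ] at hC
  linarith

theorem div_qNumber_sub_one_eq (hq : 1 < q) {n s : ℕ} (hn : 2 * (s + 1) < n) :
    qNumber q (s + 1) * (q : ℚ) ^ (s + 1) * GaussQ q (2 * s + 1) (s + 1) /
        (qNumber q (n - s) - 1) =
      (q : ℚ) ^ s * GaussQ q (n - 1) s /
        (GaussQ q (n - 1) (s + 1) / GaussQ q (2 * s + 1) (s + 1)) := by
  obtain ⟨m, rfl⟩ : ∃ m, n = m + s + 1 := ⟨n - s - 1, by lia⟩
  have h := GaussQ_succ_mul hq (m + s) s
  rw [Nat.add_sub_cancel] at h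
  rw [show m + s + 1 - s = m + 1 by lia, qNumber_succ' q m, add_sub_cancel_right,
    Nat.add_sub_cancel]
  have hq0 : (q : ℚ) ≠ 0 := by exact_mod_cast (zero_lt_one.trans hq).ne'
  have hm := (qNumber_pos (zero_lt_one.trans hq) (m := m) (by lia)).ne'
  have hM := (GaussQ_pos hq (m := 2 * s + 1) (k := s + 1) (by lia)).ne'
  have hG := (GaussQ_pos hq (m := m + s) (k := s + 1) (by lia)).ne'
  field_simp
  linear_combination (q : ℚ) ^ (s + 1) * h

theorem card_subspacesBetween_bot {K V : Type*} [Field K] [AddCommGroup V] [Module K V]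
    [FiniteDimensional K V] [Finite K] (B : Submodule K V) (i : ℕ) :
    (#(subspacesBetween ⊥ B i) : ℚ) = GaussQ (Nat.card K) (finrank K B) i := by
  induction i with
  | zero => simp [subspacesBetween_bot_zero]
  | succ i ih =>
    refine mul_right_cancel₀ (qNumber_pos (Nat.card_pos (α := K)) i.succ_pos).ne' ?_
    rw [← card_subspacesBetween_mul_qNumber, ih, GaussQ_succ_mul Finite.one_lt_card]

end GaussQ

section Spectrum

variable {K V : Type*} [Field K] [AddCommGroup V] [Module K V] [FiniteDimensional K V] [Finite K]

local notation "q" => Nat.card K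

theorem card_subspacesBetween_sup_eq_inf {A A' B : Submodule K V} (hAB : A ≤ B) (hA'B : A' ≤ B)
    {j : ℕ} (hA : finrank K A = j + 1) (hA' : finrank K A' = j + 1) (hne : A ≠ A') :
    #(subspacesBetween (A ⊔ A') B (j + 2)) = #(subspacesBetween ⊥ (A ⊓ A') j) := by
  have hdim := Submodule.finrank_sup_add_finrank_inf_eq A A'
  have hlt : j + 1 < finrank K (A ⊔ A' : Submodule K V) := by
    by_contra! h
    have h₁ := Submodule.eq_of_le_of_finrank_le (le_sup_left (a := A) (b := A')) (by lia)
    have h₂ := Submodule.eq_of_le_of_finrank_le (le_sup_right (a := A) (b := A')) (by lia)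
    exact hne (h₁.trans h₂.symm)
  rcases (show j + 2 ≤ _ from hlt).eq_or_lt with h | h
  · have hsup : subspacesBetween (A ⊔ A') B (j + 2) = {A ⊔ A'} := by
      ext H
      rw [mem_subspacesBetween, mem_singleton]
      constructor
      · exact fun ⟨hle, _, hH⟩ ↦ (Submodule.eq_of_le_of_finrank_eq hle (h.symm.trans hH.symm)).symm
      · rintro rfl
        exact ⟨le_rfl, sup_le hAB hA'B, h.symm⟩
    have hinf : subspacesBetween ⊥ (A ⊓ A') j = {A ⊓ A'} := by
      ext G
      rw [mem_subspacesBetween, mem_singleton]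
      constructor
      · exact fun ⟨_, hle, hG⟩ ↦ Submodule.eq_of_le_of_finrank_eq hle (by rw [hG]; lia)
      · rintro rfl
        exact ⟨bot_le, le_rfl, by lia⟩
    rw [hsup, hinf, card_singleton, card_singleton]
  · rw [card_eq_zero.2, card_eq_zero.2] <;> refine eq_empty_of_forall_notMem fun C hC ↦ ?_ <;>
      rw [mem_subspacesBetween] at hC
    · have := Submodule.finrank_mono hC.2.1
      lia
    · have := Submodule.finrank_mono hC.1
      lia

theorem downSum_upSum {A B : Submodule K V} (hAB : A ≤ B) {j : ℕ} (hA : finrank K A = j + 1)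
    (f : Submodule K V → ℚ) :
    downSum B (j + 2) (upSum (j + 1) f) A = upSum j (downSum B (j + 1) f) A +
      (qNumber q (finrank K B - (j + 1)) - qNumber q (j + 1)) * f A := by
  have hdown : downSum B (j + 2) (upSum (j + 1) f) A =
      ∑ A' ∈ subspacesBetween ⊥ B (j + 1), #(subspacesBetween (A ⊔ A') B (j + 2)) * f A' := by
    simp only [downSum, upSum, ← nsmul_eq_mul, ← sum_const]
    refine sum_comm' fun H A' ↦ ?_
    simp only [mem_subspacesBetween, bot_le, true_and, sup_le_iff]
    exact ⟨fun h ↦ ⟨⟨⟨h.1.1, h.2.1⟩, h.1.2⟩, h.2.1.trans h.1.2.1, h.2.2⟩,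
      fun h ↦ ⟨⟨h.1.1.1, h.1.2⟩, h.1.1.2, h.2.2⟩⟩
  have hup : upSum j (downSum B (j + 1) f) A =
      ∑ A' ∈ subspacesBetween ⊥ B (j + 1), #(subspacesBetween ⊥ (A ⊓ A') j) * f A' := by
    simp only [downSum, upSum, ← nsmul_eq_mul, ← sum_const]
    refine sum_comm' fun G A' ↦ ?_
    simp only [mem_subspacesBetween, bot_le, true_and, le_inf_iff]
    exact ⟨fun h ↦ ⟨⟨⟨h.1.1, h.2.1⟩, h.1.2⟩, h.2.2⟩, fun h ↦ ⟨⟨h.1.1.1, h.1.2⟩, h.1.1.2, h.2⟩⟩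
  have hmem : A ∈ subspacesBetween ⊥ B (j + 1) := mem_subspacesBetween.2 ⟨bot_le, hAB, hA⟩
  have hoff (A') (hA' : A' ∈ subspacesBetween ⊥ B (j + 1)) (hne : A' ≠ A) :
      ((#(subspacesBetween (A ⊔ A') B (j + 2)) : ℚ) - #(subspacesBetween ⊥ (A ⊓ A') j)) * f A' =
        0 := by
    rw [mem_subspacesBetween] at hA'
    rw [card_subspacesBetween_sup_eq_inf hAB hA'.2.1 hA hA'.2.2 hne.symm, sub_self, zero_mul]
  rw [hdown, hup, ← sub_eq_iff_eq_add', ← sum_sub_distrib]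
  simp only [← sub_mul]
  have habove := card_subspacesBetween_add_one hAB
  have hbelow := card_subspacesBetween_of_add_one_eq bot_le hA.symm
  rw [hA] at habove
  rw [hA, finrank_bot, Nat.sub_zero] at hbelow
  rw [sum_eq_single_of_mem A hmem hoff, sup_idem, inf_idem, habove, hbelow]

theorem sum_upSum_sq (B : Submodule K V) (j : ℕ) (f : Submodule K V → ℚ) :
    ∑ H ∈ subspacesBetween ⊥ B (j + 2), upSum (j + 1) f H ^ 2 =
      ∑ G ∈ subspacesBetween ⊥ B j, downSum B (j + 1) f G ^ 2 +
      (qNumber q (finrank K B - (j + 1)) - qNumber q (j + 1)) *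
        ∑ A ∈ subspacesBetween ⊥ B (j + 1), f A ^ 2 := by
  simp only [sq, ← sum_upSum_mul B j (j + 1) (downSum B (j + 1) f) f]
  rw [sum_upSum_mul, mul_sum, ← sum_add_distrib]
  refine sum_congr rfl fun A hA ↦ ?_
  rw [mem_subspacesBetween] at hA
  rw [downSum_upSum hA.2.1 hA.2.2]
  ring

-- Cauchy–Schwarz: a bound on the norm of an operator is a bound on the norm of its transpose.
theorem sum_downSum_sq_le_of_upSum {B : Submodule K V} {j : ℕ} {c : ℚ} (hc : 0 ≤ c)
    (hup : ∀ f : Submodule K V → ℚ, ∑ G ∈ subspacesBetween ⊥ B j, f G = 0 →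
      ∑ H ∈ subspacesBetween ⊥ B (j + 1), upSum j f H ^ 2 ≤
        c * ∑ G ∈ subspacesBetween ⊥ B j, f G ^ 2)
    {f : Submodule K V → ℚ} (hf : ∑ T ∈ subspacesBetween ⊥ B (j + 1), f T = 0) :
    ∑ G ∈ subspacesBetween ⊥ B j, downSum B (j + 1) f G ^ 2 ≤
      c * ∑ T ∈ subspacesBetween ⊥ B (j + 1), f T ^ 2 := by
  set D := ∑ G ∈ subspacesBetween ⊥ B j, downSum B (j + 1) f G ^ 2 with hD
  set N := ∑ T ∈ subspacesBetween ⊥ B (j + 1), f T ^ 2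
  have hD0 : 0 ≤ D := sum_nonneg fun _ _ ↦ sq_nonneg _
  have hN0 : 0 ≤ N := sum_nonneg fun _ _ ↦ sq_nonneg _
  have hD_eq : ∑ H ∈ subspacesBetween ⊥ B (j + 1), upSum j (downSum B (j + 1) f) H * f H = D := by
    simp only [sum_upSum_mul, hD, sq]
  have hle : D * D ≤ D * (c * N) := calc
    D * D = (∑ H ∈ subspacesBetween ⊥ B (j + 1), upSum j (downSum B (j + 1) f) H * f H) ^ 2 := by
      rw [hD_eq, sq]
    _ ≤ (∑ H ∈ subspacesBetween ⊥ B (j + 1), upSum j (downSum B (j + 1) f) H ^ 2) * N :=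
      sum_mul_sq_le_sq_mul_sq _ _ _
    _ ≤ c * D * N := by
      refine mul_le_mul_of_nonneg_right (hup _ ?_) hN0
      rw [sum_downSum, hf, mul_zero]
    _ = D * (c * N) := by ring
  rcases hD0.eq_or_lt with h | h
  · rw [← h]
    positivity
  · exact le_of_mul_le_mul_left hle h

theorem sum_downSum_sq_le_of_sum_eq_zero {B : Submodule K V} {j : ℕ} (hj : j + 1 ≤ finrank K B)
    {f : Submodule K V → ℚ} (hf : ∑ T ∈ subspacesBetween ⊥ B (j + 1), f T = 0) :
    ∑ G ∈ subspacesBetween ⊥ B j, downSum B (j + 1) f G ^ 2 ≤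
      q * qNumber q j * qNumber q (finrank K B - (j + 1)) *
        ∑ T ∈ subspacesBetween ⊥ B (j + 1), f T ^ 2 := by
  induction j generalizing f with
  | zero => simp [subspacesBetween_bot_zero, downSum, hf]
  | succ j ih =>
    have h₁ := qNumber_nonneg q (j + 1)
    have h₂ := qNumber_nonneg q (finrank K B - (j + 2))
    refine sum_downSum_sq_le_of_upSum (by positivity) (fun g hg ↦ ?_) hf
    obtain ⟨d, hd⟩ := Nat.exists_eq_add_of_le hj
    have ih := ih (by lia) hg
    rw [sum_upSum_sq]
    rw [show finrank K B - (j + 1) = d + 1 by lia] at ih ⊢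
    rw [show finrank K B - (j + 2) = d by lia]
    refine (add_le_add_left ih _).trans_eq ?_
    rw [← add_mul, qNumber_succ' _ d, qNumber_succ' _ j]
    ring

-- The constants are an eigenvector of `upSum ∘ downSum`; their orthogonal complement is controlled
-- by `sum_downSum_sq_le_of_sum_eq_zero`.
theorem sum_downSum_sq_le {B : Submodule K V} {j : ℕ} (hj : j + 1 ≤ finrank K B)
    (f : Submodule K V → ℚ) :
    ∑ G ∈ subspacesBetween ⊥ B j, downSum B (j + 1) f G ^ 2 ≤
      q * qNumber q j * qNumber q (finrank K B - (j + 1)) *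
        (∑ T ∈ subspacesBetween ⊥ B (j + 1), f T ^ 2 -
          (∑ T ∈ subspacesBetween ⊥ B (j + 1), f T) ^ 2 / #(subspacesBetween ⊥ B (j + 1))) +
      qNumber q (j + 1) * qNumber q (finrank K B - j) *
        ((∑ T ∈ subspacesBetween ⊥ B (j + 1), f T) ^ 2 / #(subspacesBetween ⊥ B (j + 1))) := by
  set S := ∑ T ∈ subspacesBetween ⊥ B (j + 1), f T with hS
  set X := (#(subspacesBetween ⊥ B (j + 1)) : ℚ) with hX
  have hX0 : X ≠ 0 := by
    rw [hX, card_subspacesBetween_bot]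
    exact (GaussQ_pos Finite.one_lt_card hj).ne'
  have hlevel := card_subspacesBetween_mul_qNumber B j
  rw [← hX] at hlevel
  have hsq : ∑ T ∈ subspacesBetween ⊥ B (j + 1), (f T - S / X) ^ 2 =
      ∑ T ∈ subspacesBetween ⊥ B (j + 1), f T ^ 2 - S ^ 2 / X := by
    simp only [sub_sq, sum_add_distrib, sum_sub_distrib, ← sum_mul, ← mul_sum, sum_const,
      nsmul_eq_mul, ← hS, ← hX]
    field_simp
    ring
  have hdown : ∑ G ∈ subspacesBetween ⊥ B j, downSum B (j + 1) (fun T ↦ f T - S / X) G ^ 2 =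
      ∑ G ∈ subspacesBetween ⊥ B j, downSum B (j + 1) f G ^ 2 -
        qNumber q (j + 1) * qNumber q (finrank K B - j) * (S ^ 2 / X) := by
    have hsub (G) (hG : G ∈ subspacesBetween ⊥ B j) :
        downSum B (j + 1) (fun T ↦ f T - S / X) G =
          downSum B (j + 1) f G - qNumber q (finrank K B - j) * (S / X) := by
      rw [mem_subspacesBetween] at hG
      rw [← downSum_const hG.2.1 hG.2.2]
      exact sum_sub_distrib _ _
    rw [sum_congr rfl fun G hG ↦ by rw [hsub G hG]]
    simp only [sub_sq, sum_add_distrib, sum_sub_distrib, ← sum_mul, ← mul_sum, sum_const,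
      nsmul_eq_mul, sum_downSum, ← hS]
    field_simp
    linear_combination S ^ 2 * qNumber q (finrank K B - j) * hlevel
  have hzero : ∑ T ∈ subspacesBetween ⊥ B (j + 1), (f T - S / X) = 0 := by
    rw [sum_sub_distrib, sum_const, nsmul_eq_mul, ← hX, mul_div_cancel₀ _ hX0, sub_self]
  have := sum_downSum_sq_le_of_sum_eq_zero hj hzero
  rw [hdown, hsq] at this
  linarith

end Spectrum

section CliqueCoclique

open MulAction

-- Sending `(s, x, h)` to an element `g` with `g • s = x`, one for each `h` in the stabilizer of
-- `a`, is injective, because `g` maps at most one element of `S` into `N`.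
theorem ncard_mul_ncard_le_ncard_orbit {G α : Type*} [Group G] [Finite G] [MulAction G α] {a : α}
    {S N : Set α} (hS : S ⊆ orbit G a) (hN : N ⊆ orbit G a)
    (hSN : ∀ g : G, ∀ s ∈ S, ∀ s' ∈ S, g • s ∈ N → g • s' ∈ N → s = s') :
    S.ncard * N.ncard ≤ (orbit G a).ncard := by
  choose! k hk using fun (x : α) (hx : x ∈ orbit G a) ↦ hx
  simp only at hk
  let φ (p : S × N × stabilizer G a) : G := k p.2.1 * p.2.2 * (k p.1)⁻¹
  have hφ (p) : φ p • (p.1 : α) = p.2.1 := by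
    have hs : (k p.1)⁻¹ • (p.1 : α) = a := inv_smul_eq_iff.2 (hk _ (hS p.1.2)).symm
    rw [mul_smul, hs, mul_smul, p.2.2.2, hk _ (hN p.2.1.2)]
  have hinj : Function.Injective φ := by
    rintro ⟨s, x, h⟩ ⟨s', x', h'⟩ heq
    have hs : s = s' := Subtype.ext <| hSN (φ (s, x, h)) s s.2 s' s'.2
      ((hφ (s, x, h)).symm ▸ x.2) (heq ▸ (hφ (s', x', h')).symm ▸ x'.2)
    subst hs
    have hx : x = x' := Subtype.ext <| by rw [← hφ (s, x, h), heq, hφ (s, x', h')]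
    subst hx
    simpa [φ] using heq
  have hcard := Nat.card_le_card_of_injective φ hinj
  have horbit : Nat.card (orbit G a) * Nat.card (stabilizer G a) = Nat.card G := by
    rw [← Nat.card_prod, Nat.card_congr (orbitProdStabilizerEquivGroup G a)]
  rw [Nat.card_prod, Nat.card_prod, ← mul_assoc, ← horbit] at hcard
  exact Nat.le_of_mul_le_mul_right hcard Nat.card_pos

end CliqueCoclique

section ErdosKoRado

variable {K W : Type*} [Field K] [AddCommGroup W] [Module K W] [FiniteDimensional K W]

open scoped Pointwise in
theorem exists_smul_eq_of_finrank_eq {T T' : Submodule K W} (h : finrank K T = finrank K T') :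
    ∃ g : W ≃ₗ[K] W, g • T = T' := by
  obtain ⟨C, hC⟩ := T.exists_isCompl
  obtain ⟨C', hC'⟩ := T'.exists_isCompl
  have hCC' : finrank K C = finrank K C' := by
    have := Submodule.finrank_add_eq_of_isCompl hC
    have := Submodule.finrank_add_eq_of_isCompl hC'
    lia
  let e := LinearEquiv.ofFinrankEq T T' h
  let g : W ≃ₗ[K] W := (Submodule.prodEquivOfIsCompl T C hC).symm ≪≫ₗ
    (e.prodCongr (LinearEquiv.ofFinrankEq C C' hCC')) ≪≫ₗ Submodule.prodEquivOfIsCompl T' C' hC'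
  have hg (x : T) : g x = e x := by simp [g]
  refine ⟨g, Submodule.eq_of_le_of_finrank_eq ?_ ?_⟩
  · rintro _ ⟨x, hx, rfl⟩
    exact hg ⟨x, hx⟩ ▸ (e ⟨x, hx⟩).2
  · exact (LinearEquiv.finrank_map_eq g T).trans h

variable [Finite K]

-- The Desarguesian spread: the lines of a plane over the extension of degree `t`.
theorem exists_spread_s19 {t : ℕ} (ht : 0 < t) (hW : finrank K W = 2 * t) :
    ∃ S : Set (Submodule K W), S.ncard = Nat.card K ^ t + 1 ∧ (∀ T ∈ S, finrank K T = t) ∧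
      S.PairwiseDisjoint id := by
  obtain ⟨p, hp⟩ := CharP.exists K
  have : Fact p.Prime := ⟨CharP.char_is_prime K p⟩
  have : NeZero t := ⟨ht.ne'⟩
  let L := FiniteField.Extension K p t
  have hL : finrank K L = t := FiniteField.finrank_extension K p t
  have : Module.Finite K L := Module.finite_of_finrank_pos (ht.trans_eq hL.symm)
  have : Finite L := Module.finite_of_finite K
  let e : (L × L) ≃ₗ[K] W := LinearEquiv.ofFinrankEq _ _ (by rw [finrank_prod, hL, hW, two_mul])
  let toW (P : Submodule L (L × L)) : Submodule K W := (P.restrictScalars K).map e.toLinearMap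
  have htoW : Function.Injective toW := (Submodule.map_injective_of_injective e.injective).comp
    (Submodule.restrictScalars_injective K L (L × L))
  refine ⟨toW '' {P | finrank L P = 1}, ?_, ?_, ?_⟩
  · have hcard := Projectivization.card_of_finrank_two L (L × L) (by simp)
    rw [Nat.card_congr (Projectivization.equivSubmodule L (L × L)),
      Module.natCard_eq_pow_finrank (K := K) (V := L), hL] at hcard
    rwa [Set.ncard_image_of_injective _ htoW]
  · rintro _ ⟨P, hP, rfl⟩
    rw [LinearEquiv.finrank_map_eq e]
    have := finrank_mul_finrank K L P
    rwa [hL, show finrank L P = 1 from hP, mul_one, eq_comm] at this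
  · rintro _ ⟨P, hP, rfl⟩ _ ⟨Q, hQ, rfl⟩ hPQ
    have hdisj : Disjoint P Q := (Submodule.isAtom_iff_finrank_eq_one.2 hP).disjoint_of_ne
      (Submodule.isAtom_iff_finrank_eq_one.2 hQ) (ne_of_apply_ne toW hPQ)
    have hdisjK : Disjoint (P.restrictScalars K) (Q.restrictScalars K) :=
      Submodule.disjoint_def.2 (Submodule.disjoint_def (p := P).1 hdisj)
    exact Submodule.disjoint_map e.injective hdisjK

open scoped Pointwise in
theorem ncard_mul_le_of_intersecting {t : ℕ} (ht : 0 < t) (hW : finrank K W = 2 * t)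
    {N : Set (Submodule K W)} (hNt : ∀ T ∈ N, finrank K T = t) (hN : N.Intersecting) :
    (Nat.card K ^ t + 1) * N.ncard ≤ #(subspacesBetween (⊥ : Submodule K W) ⊤ t) := by
  obtain ⟨S, hScard, hSt, hS⟩ := exists_spread_s19 ht hW
  obtain ⟨A, hA⟩ : S.Nonempty := Set.nonempty_of_ncard_ne_zero (by lia)
  have := Module.finite_of_finite K (M := W)
  have := DFunLike.finite (W ≃ₗ[K] W)
  have hA := hSt A hA
  have horbit : MulAction.orbit (W ≃ₗ[K] W) A = subspacesBetween (⊥ : Submodule K W) ⊤ t := by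
    ext T
    simp only [mem_coe, mem_subspacesBetween, bot_le, le_top, true_and]
    refine ⟨?_, fun hT ↦ exists_smul_eq_of_finrank_eq (hA.trans hT.symm)⟩
    rintro ⟨g, rfl⟩
    exact (LinearEquiv.finrank_map_eq g A).trans hA
  have hmem {T : Submodule K W} (hT : finrank K T = t) : T ∈ MulAction.orbit (W ≃ₗ[K] W) A := by
    simpa [horbit] using hT
  rw [← hScard, ← Set.ncard_coe_finset, ← horbit]
  refine ncard_mul_ncard_le_ncard_orbit (fun T hT ↦ hmem (hSt T hT)) (fun T hT ↦ hmem (hNt T hT))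
    fun g T hT T' hT' hgT hgT' ↦ hS.elim hT hT' fun hdisj ↦ hN hgT hgT' <|
      Submodule.disjoint_map g.injective hdisj

theorem card_le_GaussQ_of_intersecting {t : ℕ} (ht : 0 < t) {B : Submodule K W}
    (hB : finrank K B = 2 * t) {N : Finset (Submodule K W)} (hNB : N ⊆ subspacesBetween ⊥ B t)
    (hN : (N : Set (Submodule K W)).Intersecting) :
    (#N : ℚ) ≤ GaussQ (Nat.card K) (2 * t - 1) t := by
  have hinj := Submodule.map_injective_of_injective B.injective_subtype
  let N' : Set (Submodule K B) := Submodule.map B.subtype ⁻¹' N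
  have hrange : (N : Set (Submodule K W)) ⊆ Set.range (Submodule.map B.subtype) := fun T hT ↦
    ⟨T.comap B.subtype, by
      rw [Submodule.map_comap_subtype, inf_eq_right.2 (mem_subspacesBetween.1 (hNB hT)).2.1]⟩
  have hN't (T) (hT : T ∈ N') : finrank K T = t := by
    rw [← Submodule.finrank_map_subtype_eq, (mem_subspacesBetween.1 (hNB hT)).2.2]
  have hN' : N'.Intersecting := fun T hT T' hT' hdisj ↦
    hN hT hT' (Submodule.disjoint_map B.injective_subtype hdisj)
  have hbot : (⊥ : Submodule K W).comap B.subtype = ⊥ := by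
    rw [Submodule.comap_bot, Submodule.ker_subtype]
  have h := ncard_mul_le_of_intersecting ht hB hN't hN'
  rw [Set.ncard_preimage_of_injective_subset_range hinj hrange, Set.ncard_coe_finset, ← hbot,
    card_subspacesBetween_comap_subtype bot_le] at h
  have hle : ((Nat.card K : ℚ) ^ t + 1) * #N ≤ #(subspacesBetween ⊥ B t) := by exact_mod_cast h
  rw [card_subspacesBetween_bot, hB, GaussQ_two_mul Finite.one_lt_card ht, add_comm] at hle
  exact le_of_mul_le_mul_left hle (by positivity)

end ErdosKoRado

section Star

variable {K V : Type*} [Field K] [AddCommGroup V] [Module K V] [FiniteDimensional K V]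

theorem finrank_le_finrank_inf_ker_add_one (A : Submodule K V) (f : V →ₗ[K] K) :
    finrank K A ≤ finrank K (A ⊓ LinearMap.ker f : Submodule K V) + 1 := by
  have h := (f.domRestrict A).finrank_range_add_finrank_ker
  have hrange := (LinearMap.range (f.domRestrict A)).finrank_le
  rw [LinearMap.ker_domRestrict, ← Submodule.finrank_map_subtype_eq,
    Submodule.map_comap_subtype] at h
  rw [finrank_self] at hrange
  lia

variable [Finite K]

local notation "q" => Nat.card K

theorem subspacesBetween_nonempty {A B : Submodule K V} (hAB : A ≤ B) {i : ℕ}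
    (hA : finrank K A ≤ i) (hB : i ≤ finrank K B) : (subspacesBetween A B i).Nonempty := by
  induction i, hA using Nat.le_induction with
  | base => exact ⟨A, mem_subspacesBetween.2 ⟨le_rfl, hAB, rfl⟩⟩
  | succ i _ ih =>
    obtain ⟨C, hC⟩ := ih (by lia)
    obtain ⟨hAC, hCB, rfl⟩ := mem_subspacesBetween.1 hC
    obtain ⟨v, hvB, hvC⟩ := SetLike.exists_of_lt (hCB.lt_of_ne (by rintro rfl; lia))
    exact ⟨C ⊔ K ∙ v, mem_subspacesBetween.2 ⟨hAC.trans le_sup_left,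
      sup_le hCB ((Submodule.span_singleton_le_iff_mem v B).2 hvB),
      Submodule.finrank_sup_span_singleton hvC⟩⟩

/-- `R` is full for a family `N` of `t`-dimensional subspaces of `B` if `N` contains all
`t`-dimensional subspaces of `B` through `R`. A star is an intersecting family with a full point. -/
def IsFull (B : Submodule K V) (t : ℕ) (N : Finset (Submodule K V)) (R : Submodule K V) : Prop :=
  subspacesBetween R B t ⊆ N

theorem IsFull.mono {B : Submodule K V} {t : ℕ} {N : Finset (Submodule K V)}
    {R R' : Submodule K V} (hR : IsFull B t N R) (hRR' : R ≤ R') : IsFull B t N R' := fun T hT ↦ by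
  rw [mem_subspacesBetween] at hT
  exact hR (mem_subspacesBetween.2 ⟨hRR'.trans hT.1, hT.2⟩)

/-- `N` is saturated if every `s`-dimensional subspace of `B` below two members of `N` is full for
the `(s + 1)`-dimensional subspaces: the local structure forced by equality in the theorem. -/
def IsSaturated (B : Submodule K V) (s : ℕ) (N : Finset (Submodule K V)) : Prop :=
  ∀ G ∈ subspacesBetween ⊥ B s, (∃ T ∈ N, ∃ T' ∈ N, T ≠ T' ∧ G ≤ T ∧ G ≤ T') →
    IsFull B (s + 1) N G

variable {B : Submodule K V} {s : ℕ} {N : Finset (Submodule K V)}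

-- A hyperplane `H ≥ A'` of a given `Q ≥ A'` can be chosen inside a kernel that contains `A` but
-- not `r`, so that a point `a` of `A` and the point `r` extend `H` to distinct members of `N`.
theorem IsFull.of_sup_span_singleton (hN : IsSaturated B s N) {A A' S : Submodule K V} {r : V}
    (hAB : A ≤ B) (hA : IsFull B (s + 1) N A) (hA'A : A' ≤ A) (hA's : finrank K A' ≤ s)
    (hAA' : finrank K A = finrank K A' + 1) (hSA' : S ≤ A') (hrB : r ∈ B) (hrA : r ∉ A)
    (hS : IsFull B (s + 1) N (S ⊔ K ∙ r)) :
    IsFull B (s + 1) N A' := by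
  intro Q hQ
  obtain ⟨hA'Q, hQB, hQs⟩ := mem_subspacesBetween.1 hQ
  obtain ⟨f, hfr, hAf⟩ := Submodule.exists_le_ker_of_notMem hrA
  obtain ⟨H, hH⟩ := subspacesBetween_nonempty (le_inf hA'Q (hA'A.trans hAf)) hA's
    (by have := finrank_le_finrank_inf_ker_add_one Q f; lia)
  obtain ⟨hA'H, hHle, hHs⟩ := mem_subspacesBetween.1 hH
  obtain ⟨hHQ, hHf⟩ := le_inf_iff.1 hHle
  obtain ⟨a, haA, haA'⟩ := SetLike.exists_of_lt (hA'A.lt_of_ne (by rintro rfl; lia))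
  have hspan (C : Submodule K V) {v : V} (hv : v ∈ C) : K ∙ v ≤ C :=
    (Submodule.span_singleton_le_iff_mem v C).2 hv
  have hA_eq : A' ⊔ K ∙ a = A := Submodule.eq_of_le_of_finrank_eq (sup_le hA'A (hspan A haA)) <| by
    rw [Submodule.finrank_sup_span_singleton haA', hAA']
  by_cases haQ : a ∈ Q
  · exact hA (mem_subspacesBetween.2 ⟨hA_eq ▸ sup_le hA'Q (hspan Q haQ), hQB, hQs⟩)
  have hrH : r ∉ H ⊔ K ∙ a := fun h ↦ hfr (sup_le hHf (hspan _ (hAf haA)) h)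
  have hHB : H ≤ B := hHQ.trans hQB
  have haN : H ⊔ K ∙ a ∈ N := hA <| mem_subspacesBetween.2
    ⟨hA_eq ▸ sup_le_sup_right hA'H _, sup_le hHB (hspan B (hAB haA)),
      by rw [Submodule.finrank_sup_span_singleton fun h ↦ haQ (hHQ h), hHs]⟩
  have hrN : H ⊔ K ∙ r ∈ N := hS <| mem_subspacesBetween.2
    ⟨sup_le_sup_right (hSA'.trans hA'H) _, sup_le hHB (hspan B hrB),
      by rw [Submodule.finrank_sup_span_singleton fun h ↦ hrH (le_sup_left (a := H) h), hHs]⟩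
  have hne : H ⊔ K ∙ a ≠ H ⊔ K ∙ r := fun h ↦
    hrH (h ▸ Submodule.mem_sup_right (Submodule.mem_span_singleton_self r))
  exact hN H (mem_subspacesBetween.2 ⟨bot_le, hHB, hHs⟩)
    ⟨_, haN, _, hrN, hne, le_sup_left, le_sup_left⟩ (mem_subspacesBetween.2 ⟨hHQ, hQB, hQs⟩)

theorem IsFull.descend (hN : IsSaturated B s N) {A S : Submodule K V} {r : V} (hAB : A ≤ B)
    (hA : IsFull B (s + 1) N A) (hAs : finrank K A ≤ s) (hSA : S ≤ A) (hrB : r ∈ B) (hrA : r ∉ A)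
    (hS : IsFull B (s + 1) N (S ⊔ K ∙ r)) :
    IsFull B (s + 1) N S := by
  induction h : finrank K A generalizing A with
  | zero =>
    rw [Submodule.finrank_eq_zero] at h
    rwa [eq_bot_mono hSA h, ← h]
  | succ d ih =>
    rcases hSA.eq_or_lt with rfl | hlt
    · exact hA
    have hdim := Submodule.finrank_lt_finrank_of_lt hlt
    obtain ⟨A', hA'⟩ := subspacesBetween_nonempty hSA (i := d) (by lia) (by lia)
    obtain ⟨hSA', hA'A, hA'd⟩ := mem_subspacesBetween.1 hA'
    have hA'full := hA.of_sup_span_singleton hN hAB hA'A (by lia) (by lia) hSA' hrB hrA hS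
    exact ih (hA'A.trans hAB) hA'full (by lia) hSA' (fun h ↦ hrA (hA'A h)) hA'd

theorem IsFull.inf (hN : IsSaturated B s N) {G R T : Submodule K V}
    (hT : T ∈ subspacesBetween ⊥ B (s + 1)) (hG : IsFull B (s + 1) N G)
    (hGT : G ∈ subspacesBetween ⊥ T s) (hR : IsFull B (s + 1) N R) (hRT : R ≤ T) (hRG : ¬ R ≤ G) :
    IsFull B (s + 1) N (R ⊓ G) := by
  obtain ⟨-, hTB, hTs⟩ := mem_subspacesBetween.1 hT
  obtain ⟨-, hGT, hGs⟩ := mem_subspacesBetween.1 hGT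
  obtain ⟨r, hrR, hrG⟩ := SetLike.not_le_iff_exists.1 hRG
  have hsup : R ⊓ G ⊔ K ∙ r = R := by
    refine Submodule.eq_of_le_of_finrank_le
      (sup_le inf_le_left ((Submodule.span_singleton_le_iff_mem r R).2 hrR)) ?_
    rw [Submodule.finrank_sup_span_singleton fun h ↦ hrG (Submodule.mem_inf.1 h).2]
    have := Submodule.finrank_sup_add_finrank_inf_eq R G
    have := Submodule.finrank_mono (sup_le hRT hGT)
    lia
  exact hG.descend hN (hGT.trans hTB) hGs.le inf_le_right (hTB (hRT hrR)) hrG (hsup.symm ▸ hR)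

open scoped Classical in
theorem exists_isFull_finrank_eq_one (hN : IsSaturated B s N) {T : Submodule K V} (hTN : T ∈ N)
    (hT : T ∈ subspacesBetween ⊥ B (s + 1))
    (hcard : qNumber q s ≤ #{G ∈ subspacesBetween ⊥ T s | IsFull B (s + 1) N G}) :
    ∃ E ∈ subspacesBetween ⊥ B 1, IsFull B (s + 1) N E := by
  obtain ⟨-, hTB, hTs⟩ := mem_subspacesBetween.1 hT
  have hTfull : IsFull B (s + 1) N T := fun T' hT' ↦ by
    rw [mem_subspacesBetween] at hT'
    rwa [← Submodule.eq_of_le_of_finrank_eq hT'.1 (hTs.trans hT'.2.2.symm)]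
  obtain ⟨R, ⟨hRT, hR⟩, hRmin⟩ := Set.exists_min_image {R | R ≤ T ∧ IsFull B (s + 1) N R}
    (fun R ↦ finrank K R) (Set.toFinite _) ⟨T, le_rfl, hTfull⟩
  have hsub : {G ∈ subspacesBetween ⊥ T s | IsFull B (s + 1) N G} ⊆ subspacesBetween R T s := by
    intro G hG
    rw [mem_filter] at hG
    obtain ⟨-, hGT, hGs⟩ := mem_subspacesBetween.1 hG.1
    refine mem_subspacesBetween.2 ⟨?_, hGT, hGs⟩
    by_contra hRG
    exact (hRmin (R ⊓ G) ⟨inf_le_left.trans hRT, hG.2.inf hN hT hG.1 hR hRT hRG⟩).not_gt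
      (Submodule.finrank_lt_finrank_of_lt (inf_lt_left.2 hRG))
  have hRdim : finrank K R ≤ 1 := by
    have hle : qNumber q s ≤ qNumber q (s + 1 - finrank K R) := by
      rw [← hTs, ← card_subspacesBetween_of_add_one_eq hRT hTs.symm]
      exact hcard.trans (by exact_mod_cast card_le_card hsub)
    have := (qNumber_strictMono (Nat.card_pos (α := K))).le_iff_le.1 hle
    have := Submodule.finrank_mono hRT
    lia
  obtain ⟨E, hE⟩ := subspacesBetween_nonempty hRT hRdim (by lia)
  obtain ⟨hRE, hET, hE1⟩ := mem_subspacesBetween.1 hE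
  exact ⟨E, mem_subspacesBetween.2 ⟨bot_le, hET.trans hTB, hE1⟩, hR.mono hRE⟩

theorem IsFull.eq_subspacesBetween {t : ℕ} {E : Submodule K V} (hB : finrank K B = 2 * t)
    (hE : E ∈ subspacesBetween ⊥ B 1) (hEfull : IsFull B t N E) (hNB : N ⊆ subspacesBetween ⊥ B t)
    (hN : (N : Set (Submodule K V)).Intersecting) : N = subspacesBetween E B t := by
  obtain ⟨-, hEB, hE1⟩ := mem_subspacesBetween.1 hE
  refine Subset.antisymm (fun T hT ↦ ?_) hEfull
  obtain ⟨-, hTB, hTt⟩ := mem_subspacesBetween.1 (hNB hT)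
  refine mem_subspacesBetween.2 ⟨?_, hTB, hTt⟩
  by_contra hET
  have hdisj : Disjoint E T :=
    (Submodule.isAtom_iff_finrank_eq_one.2 hE1).not_le_iff_disjoint.1 hET
  obtain ⟨D, hED, hD⟩ := hdisj.exists_isCompl
  have hDT : Disjoint (D ⊓ B) T := hD.disjoint.mono_left inf_le_left
  have hsup : D ⊓ B ⊔ T = B := by
    rw [sup_comm, ← sup_inf_assoc_of_le _ hTB, sup_comm, hD.sup_eq_top, top_inf_eq]
  have hdim := Submodule.finrank_sup_add_finrank_inf_eq (D ⊓ B) T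
  rw [hsup, hDT.eq_bot, finrank_bot, hB, hTt] at hdim
  exact hN (hEfull (mem_subspacesBetween.2 ⟨le_inf hED hEB, inf_le_right, by lia⟩)) hT hDT

end Star

section ShadowShare

variable {K V : Type*} [Field K] [AddCommGroup V] [Module K V]

open scoped Classical in
/-- The number of members of the family `F` above `A`, that is `|F_A|`. -/
noncomputable def numAbove (F : Finset (Submodule K V)) (A : Submodule K V) : ℕ := #{G ∈ F | A ≤ G}

theorem ncard_setOf_le_eq_numAbove (F : Finset (Submodule K V)) (A : Submodule K V) :
    {G ∈ (F : Set (Submodule K V)) | A ≤ G}.ncard = numAbove F A := by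
  classical
  rw [numAbove, ← Set.ncard_coe_finset, coe_filter]
  rfl

theorem numAbove_pos {F : Finset (Submodule K V)} {A B : Submodule K V} (hB : B ∈ F)
    (hAB : A ≤ B) : 0 < numAbove F A := by
  classical exact card_pos.2 ⟨B, mem_filter.2 ⟨hB, hAB⟩⟩

theorem exists_ne_of_one_lt_numAbove {F : Finset (Submodule K V)} {A : Submodule K V}
    (hA : 1 < numAbove F A) (B : Submodule K V) : ∃ B' ∈ F, A ≤ B' ∧ B' ≠ B := by
  classical
  obtain ⟨B', hB', hne⟩ := exists_mem_ne hA B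
  exact ⟨B', (mem_filter.1 hB').1, (mem_filter.1 hB').2, hne⟩

open scoped Classical in
theorem numAbove_union {F F' : Finset (Submodule K V)} (hF : Disjoint F F') (A : Submodule K V) :
    numAbove (F ∪ F') A = numAbove F A + numAbove F' A := by
  rw [numAbove, filter_union, card_union_of_disjoint (disjoint_filter_filter hF)]
  rfl

variable [FiniteDimensional K V] [Finite K] {B : Submodule K V} {s : ℕ} {N : Finset (Submodule K V)}

local notation "q" => Nat.card K

theorem downSum_indicator {t : ℕ} (hNB : N ⊆ subspacesBetween ⊥ B t) (G : Submodule K V) :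
    downSum B t (Set.indicator N 1) G = numAbove N G := by
  classical
  have h : {T ∈ subspacesBetween G B t | T ∈ N} = {T ∈ N | G ≤ T} := by
    ext T
    simp only [mem_filter, mem_subspacesBetween]
    refine ⟨fun h ↦ ⟨h.2, h.1.1⟩, fun h ↦ ⟨⟨h.2, ?_⟩, h.1⟩⟩
    exact (mem_subspacesBetween.1 (hNB h.1)).2
  rw [downSum, numAbove, ← h, card_filter]
  push_cast
  exact sum_congr rfl fun T _ ↦ by simp [Set.indicator_apply]

theorem card_subspacesBetween_of_mem {t : ℕ} (hB : finrank K B = s + t) {G : Submodule K V}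
    (hG : G ∈ subspacesBetween ⊥ B s) :
    (#(subspacesBetween G B (s + 1)) : ℚ) = qNumber q t := by
  obtain ⟨-, hGB, rfl⟩ := mem_subspacesBetween.1 hG
  rw [card_subspacesBetween_add_one hGB, hB, Nat.add_sub_cancel_left]

open scoped Classical in
theorem filter_le_subset_subspacesBetween {t : ℕ} (hNB : N ⊆ subspacesBetween ⊥ B t)
    (G : Submodule K V) : {T ∈ N | G ≤ T} ⊆ subspacesBetween G B t := fun T hT ↦ by
  rw [mem_filter] at hT
  exact mem_subspacesBetween.2 ⟨hT.2, (mem_subspacesBetween.1 (hNB hT.1)).2⟩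

theorem numAbove_le_card {t : ℕ} (hNB : N ⊆ subspacesBetween ⊥ B t) (G : Submodule K V) :
    numAbove N G ≤ #(subspacesBetween G B t) :=
  card_le_card (filter_le_subset_subspacesBetween hNB G)

theorem numAbove_le_qNumber (hB : finrank K B = 2 * (s + 1))
    (hNB : N ⊆ subspacesBetween ⊥ B (s + 1)) {G : Submodule K V} (hG : G ∈ subspacesBetween ⊥ B s) :
    (numAbove N G : ℚ) ≤ qNumber q (s + 2) := by
  rw [← card_subspacesBetween_of_mem (t := s + 2) (by lia) hG]
  exact_mod_cast numAbove_le_card hNB G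

theorem numAbove_eq_card_iff {t : ℕ} (hNB : N ⊆ subspacesBetween ⊥ B t) (G : Submodule K V) :
    numAbove N G = #(subspacesBetween G B t) ↔ IsFull B t N G := by
  classical
  have hsub := filter_le_subset_subspacesBetween hNB G
  constructor
  · intro h
    rw [IsFull, ← eq_of_subset_of_card_le hsub h.ge]
    exact filter_subset _ _
  · intro h
    refine le_antisymm (card_le_card hsub) (card_le_card fun T hT ↦ mem_filter.2 ⟨h hT, ?_⟩)
    exact (mem_subspacesBetween.1 hT).1

theorem sum_indicator_one {t : ℕ} (hNB : N ⊆ subspacesBetween ⊥ B t) :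
    ∑ T ∈ subspacesBetween ⊥ B t,
      (N : Set (Submodule K V)).indicator (1 : Submodule K V → ℚ) T = #N := by
  rw [sum_indicator_subset _ hNB]
  simp

theorem sum_numAbove (hNB : N ⊆ subspacesBetween ⊥ B (s + 1)) :
    ∑ G ∈ subspacesBetween ⊥ B s, (numAbove N G : ℚ) = qNumber q (s + 1) * #N := by
  simp only [← downSum_indicator hNB, sum_downSum, sum_indicator_one hNB]

theorem sum_numAbove_sq_le (hB : finrank K B = 2 * (s + 1))
    (hNB : N ⊆ subspacesBetween ⊥ B (s + 1)) :
    ∑ G ∈ subspacesBetween ⊥ B s, (numAbove N G : ℚ) ^ 2 ≤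
      qNumber q (s + 1) * #N *
        (qNumber q (s + 1) - 1 + #N / GaussQ q (2 * s + 1) (s + 1)) := by
  have hM : 0 < GaussQ q (2 * s + 1) (s + 1) := GaussQ_pos Finite.one_lt_card (by lia)
  have hcard : (#(subspacesBetween ⊥ B (s + 1)) : ℚ) =
      (1 + (q : ℚ) ^ (s + 1)) * GaussQ q (2 * s + 1) (s + 1) := by
    rw [card_subspacesBetween_bot, hB, GaussQ_two_mul Finite.one_lt_card s.succ_pos]
    rfl
  have hsq (T) : (N : Set (Submodule K V)).indicator (1 : Submodule K V → ℚ) T ^ 2 =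
      (N : Set (Submodule K V)).indicator 1 T := by
    by_cases h : T ∈ (N : Set (Submodule K V)) <;> simp [h]
  have h := sum_downSum_sq_le (B := B) (j := s) (by lia) (Set.indicator N 1)
  simp only [downSum_indicator hNB, hsq, sum_indicator_one hNB, hcard] at h
  rw [hB, show 2 * (s + 1) - (s + 1) = s + 1 by lia, show 2 * (s + 1) - s = s + 1 + 1 by lia,
    qNumber_succ _ (s + 1)] at h
  refine h.trans_eq ?_
  have hp := qNumber_succ' q s
  rw [show (q * qNumber q s : ℚ) = qNumber q (s + 1) - 1 by
    rw [hp, add_sub_cancel_right]]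
  field_simp
  ring

/-- The weight `∑ (c - e G) / (C - e G)` of the `s`-dimensional subspaces `G` of `B`, where `e G`
members of `N` and `c = [s + 2]` subspaces of `B` of dimension `s + 1` lie above `G`. When `B` is a
member of a cover-free family, `N = N_t(B)` and `C` is the number of subspaces of `V` of dimension
`s + 1` above `G`, this is a share of the shadow that `B` can claim for itself. -/
noncomputable def shadowShare (B : Submodule K V) (s : ℕ) (N : Finset (Submodule K V)) (C : ℚ) :
    ℚ :=
  ∑ G ∈ subspacesBetween ⊥ B s,
    (qNumber q (s + 2) - numAbove N G) / (C - numAbove N G)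

-- `C (C - 1) = (C - e) (C - 1 + e) + e (e - 1)` splits each summand into a quadratic polynomial in
-- `e`, summed by double counting, and a remainder. The last three terms are nonnegative by
-- `card_le_GaussQ_of_intersecting`, by `sum_numAbove_sq_le`, and because `e` is an integer.
theorem mul_shadowShare (hB : finrank K B = 2 * (s + 1))
    (hNB : N ⊆ subspacesBetween ⊥ B (s + 1)) {C : ℚ} (hC : qNumber q (s + 2) < C) :
    C * (C - 1) * shadowShare B s N C =
      C * qNumber q (s + 1) * (q : ℚ) ^ (s + 1) *
        GaussQ q (2 * s + 1) (s + 1) +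
      qNumber q (s + 1) * (GaussQ q (2 * s + 1) (s + 1) - #N) *
        (C - 1 - (q : ℚ) ^ (s + 1) + #N / GaussQ q (2 * s + 1) (s + 1)) +
      (qNumber q (s + 1) * #N *
        (qNumber q (s + 1) - 1 + #N / GaussQ q (2 * s + 1) (s + 1)) -
        ∑ G ∈ subspacesBetween ⊥ B s, (numAbove N G : ℚ) ^ 2) +
      ∑ G ∈ subspacesBetween ⊥ B s, (qNumber q (s + 2) - numAbove N G) *
        (numAbove N G * (numAbove N G - 1)) / (C - numAbove N G) := by
  have hcard : (#(subspacesBetween ⊥ B s) : ℚ) * qNumber q (s + 2) =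
      (1 + (q : ℚ) ^ (s + 1)) * GaussQ q (2 * s + 1) (s + 1) *
        qNumber q (s + 1) := by
    have h := card_subspacesBetween_mul_qNumber B s
    rw [card_subspacesBetween_bot B (s + 1), hB, GaussQ_two_mul Finite.one_lt_card s.succ_pos,
      show 2 * (s + 1) - s = s + 2 by lia] at h
    exact h
  have hsplit (G) (hG : G ∈ subspacesBetween ⊥ B s) :
      C * (C - 1) * ((qNumber q (s + 2) - numAbove N G) / (C - numAbove N G)) =
        qNumber q (s + 2) * (C - 1) +
        (qNumber q (s + 2) - C + 1) * numAbove N G - (numAbove N G : ℚ) ^ 2 +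
        (qNumber q (s + 2) - numAbove N G) *
          (numAbove N G * (numAbove N G - 1)) / (C - numAbove N G) := by
    have := (sub_pos.2 ((numAbove_le_qNumber hB hNB hG).trans_lt hC)).ne'
    field_simp
    ring
  rw [shadowShare, mul_sum, sum_congr rfl hsplit, sum_add_distrib, sum_sub_distrib, sum_add_distrib,
    sum_const, nsmul_eq_mul, ← mul_sum, sum_numAbove hNB]
  have hc := qNumber_succ q (s + 1)
  have hM : GaussQ q (2 * s + 1) (s + 1) ≠ 0 :=
    (GaussQ_pos Finite.one_lt_card (by lia)).ne'
  field_simp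
  linear_combination GaussQ q (2 * s + 1) (s + 1) * (C - 1) * hcard +
    GaussQ q (2 * s + 1) (s + 1) * qNumber q (s + 1) * #N * hc

theorem sub_mul_mul_sub_one_div_nonneg {c C : ℚ} {e : ℕ} (hec : e ≤ c) (hcC : c ≤ C) :
    0 ≤ (c - e) * (e * (e - 1)) / (C - e) := by
  have hint : (0 : ℚ) ≤ e * (e - 1) := by
    rcases e.eq_zero_or_pos with rfl | h
    · simp
    · have : (1 : ℚ) ≤ e := by exact_mod_cast h
      exact mul_nonneg (by positivity) (sub_nonneg.2 this)
  exact div_nonneg (mul_nonneg (sub_nonneg.2 hec) hint) (sub_nonneg.2 (hec.trans hcC))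

theorem le_shadowShare (hB : finrank K B = 2 * (s + 1)) (hNB : N ⊆ subspacesBetween ⊥ B (s + 1))
    (hN : (N : Set (Submodule K V)).Intersecting) {C : ℚ} (hC : qNumber q (s + 2) < C) :
    qNumber q (s + 1) * (q : ℚ) ^ (s + 1) * GaussQ q (2 * s + 1) (s + 1) / (C - 1) ≤
      shadowShare B s N C := by
  have hC1 : 1 < C := (one_lt_qNumber Nat.card_pos (by lia)).trans hC
  have hle : #N ≤ GaussQ q (2 * s + 1) (s + 1) :=
    card_le_GaussQ_of_intersecting s.succ_pos hB hNB hN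
  have hcard := mul_nonneg (mul_nonneg (qNumber_nonneg q (s + 1)) (sub_nonneg.2 hle))
    (sub_one_sub_pow_add_div_GaussQ_pos Finite.one_lt_card #N hC).le
  have hsq := sum_numAbove_sq_le hB hNB
  have hrem := sum_nonneg fun G hG ↦
    sub_mul_mul_sub_one_div_nonneg (numAbove_le_qNumber hB hNB hG) hC.le
  have h := mul_shadowShare hB hNB hC
  refine (div_le_iff₀ (sub_pos.2 hC1)).2 (le_of_mul_le_mul_left ?_ (zero_lt_one.trans hC1))
  linarith

theorem eq_of_shadowShare_eq (hB : finrank K B = 2 * (s + 1))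
    (hNB : N ⊆ subspacesBetween ⊥ B (s + 1)) (hN : (N : Set (Submodule K V)).Intersecting) {C : ℚ}
    (hC : qNumber q (s + 2) < C)
    (hshare : qNumber q (s + 1) * (q : ℚ) ^ (s + 1) * GaussQ q (2 * s + 1) (s + 1) / (C - 1) =
      shadowShare B s N C) :
    #N = GaussQ q (2 * s + 1) (s + 1) ∧
    ∑ G ∈ subspacesBetween ⊥ B s, (numAbove N G : ℚ) ^ 2 = qNumber q (s + 1) ^ 2 * #N ∧
    ∀ G ∈ subspacesBetween ⊥ B s,
      numAbove N G = 0 ∨ numAbove N G = 1 ∨ (numAbove N G : ℚ) = qNumber q (s + 2) := by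
  have hC1 : 1 < C := (one_lt_qNumber Nat.card_pos (by lia)).trans hC
  have hle : #N ≤ GaussQ q (2 * s + 1) (s + 1) :=
    card_le_GaussQ_of_intersecting s.succ_pos hB hNB hN
  have hfactor := sub_one_sub_pow_add_div_GaussQ_pos Finite.one_lt_card #N hC
  have hcard := mul_nonneg (mul_nonneg (qNumber_nonneg q (s + 1)) (sub_nonneg.2 hle)) hfactor.le
  have hsq := sum_numAbove_sq_le hB hNB
  have hrem (G) (hG : G ∈ subspacesBetween ⊥ B s) :=
    sub_mul_mul_sub_one_div_nonneg (numAbove_le_qNumber hB hNB hG) hC.le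
  have hrem_sum := sum_nonneg hrem
  rw [div_eq_iff (sub_pos.2 hC1).ne'] at hshare
  have h := mul_shadowShare hB hNB hC
  rw [mul_assoc C, mul_comm (C - 1), ← hshare] at h
  have hcard_eq : #N = GaussQ q (2 * s + 1) (s + 1) := by
    have hprod := le_antisymm (by linarith) hcard
    rw [mul_eq_zero_iff_right hfactor.ne', mul_eq_zero_iff_left
      (qNumber_pos Nat.card_pos s.succ_pos).ne', sub_eq_zero] at hprod
    exact hprod.symm
  refine ⟨hcard_eq, ?_, fun G hG ↦ ?_⟩
  · have hsq_eq := le_antisymm hsq (by linarith)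
    rw [hsq_eq, hcard_eq, div_self (GaussQ_pos Finite.one_lt_card (by lia)).ne']
    ring
  · have hG_zero := (sum_eq_zero_iff_of_nonneg hrem).1 (by linarith) G hG
    have hlt := (numAbove_le_qNumber hB hNB hG).trans_lt hC
    rw [div_eq_zero_iff, or_iff_left (sub_pos.2 hlt).ne', mul_eq_zero, mul_eq_zero, sub_eq_zero,
      sub_eq_zero, Nat.cast_eq_zero, Nat.cast_eq_one] at hG_zero
    tauto

theorem isSaturated_of_numAbove (hB : finrank K B = 2 * (s + 1))
    (hNB : N ⊆ subspacesBetween ⊥ B (s + 1)) (hvalues : ∀ G ∈ subspacesBetween ⊥ B s,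
      numAbove N G = 0 ∨ numAbove N G = 1 ∨ (numAbove N G : ℚ) = qNumber q (s + 2)) :
    IsSaturated B s N := by
  classical
  rintro G hG ⟨T, hT, T', hT', hne, hGT, hGT'⟩
  have htwo : 1 < numAbove N G := one_lt_card.2
    ⟨T, mem_filter.2 ⟨hT, hGT⟩, T', mem_filter.2 ⟨hT', hGT'⟩, hne⟩
  have hfull : (numAbove N G : ℚ) = qNumber q (s + 2) :=
    ((hvalues G hG).resolve_left (by lia)).resolve_left (by lia)
  rw [← card_subspacesBetween_of_mem (t := s + 2) (by lia) hG] at hfull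
  exact (numAbove_eq_card_iff hNB G).1 (by exact_mod_cast hfull)

open scoped Classical in
theorem sum_numAbove_isFull (hB : finrank K B = 2 * (s + 1))
    (hNB : N ⊆ subspacesBetween ⊥ B (s + 1))
    (hvalues : ∀ G ∈ subspacesBetween ⊥ B s,
      numAbove N G = 0 ∨ numAbove N G = 1 ∨ (numAbove N G : ℚ) = qNumber q (s + 2))
    (hsq : ∑ G ∈ subspacesBetween ⊥ B s, (numAbove N G : ℚ) ^ 2 = qNumber q (s + 1) ^ 2 * #N) :
    ∑ G ∈ subspacesBetween ⊥ B s with IsFull B (s + 1) N G, (numAbove N G : ℚ) =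
      qNumber q s * #N := by
  have hsplit (G) (hG : G ∈ subspacesBetween ⊥ B s) :
      q * qNumber q (s + 1) * (if IsFull B (s + 1) N G then (numAbove N G : ℚ) else 0) =
        (numAbove N G : ℚ) ^ 2 - numAbove N G := by
    have hfull : (numAbove N G : ℚ) = qNumber q (s + 2) ↔ IsFull B (s + 1) N G := by
      rw [← card_subspacesBetween_of_mem (t := s + 2) (by lia) hG, Nat.cast_inj,
        numAbove_eq_card_iff hNB]
    split_ifs with h
    · rw [hfull.2 h, qNumber_succ' q (s + 1)]
      ring
    · rcases hvalues G hG with h0 | h1 | hc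
      · simp [h0]
      · simp [h1]
      · exact absurd (hfull.1 hc) h
  have hne : (q : ℚ) * qNumber q (s + 1) ≠ 0 :=
    (mul_pos (Nat.cast_pos.2 Nat.card_pos) (qNumber_pos Nat.card_pos s.succ_pos)).ne'
  refine mul_left_cancel₀ hne ?_
  rw [sum_filter, mul_sum, sum_congr rfl hsplit, sum_sub_distrib, hsq, sum_numAbove hNB]
  linear_combination qNumber q (s + 1) * #N * qNumber_succ' q s

open scoped Classical in
theorem exists_qNumber_le_card_isFull (hNB : N ⊆ subspacesBetween ⊥ B (s + 1)) (hne : N.Nonempty)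
    (hsum : ∑ G ∈ subspacesBetween ⊥ B s with IsFull B (s + 1) N G, (numAbove N G : ℚ) =
      qNumber q s * #N) :
    ∃ T ∈ N, qNumber q s ≤ #{G ∈ subspacesBetween ⊥ T s | IsFull B (s + 1) N G} := by
  have hcount : ∑ T ∈ N, #{G ∈ subspacesBetween ⊥ T s | IsFull B (s + 1) N G} =
      ∑ G ∈ subspacesBetween ⊥ B s with IsFull B (s + 1) N G, numAbove N G := by
    refine Eq.trans (sum_congr rfl fun T hT ↦ congrArg card ?_)
      (sum_card_bipartiteAbove_eq_sum_card_bipartiteBelow (· ≤ ·)).symm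
    have hTB : T ≤ B := (mem_subspacesBetween.1 (hNB hT)).2.1
    ext G
    simp only [mem_filter, mem_bipartiteBelow, mem_subspacesBetween]
    exact ⟨fun h ↦ ⟨⟨⟨h.1.1, h.1.2.1.trans hTB, h.1.2.2⟩, h.2⟩, h.1.2.1⟩,
      fun h ↦ ⟨⟨h.1.1.1, h.2, h.1.1.2.2⟩, h.1.2⟩⟩
  refine exists_le_of_sum_le hne ?_
  rw [sum_const, nsmul_eq_mul, mul_comm, ← hsum]
  exact_mod_cast hcount.ge

theorem exists_eq_subspacesBetween_of_shadowShare_eq (hB : finrank K B = 2 * (s + 1))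
    (hNB : N ⊆ subspacesBetween ⊥ B (s + 1)) (hN : (N : Set (Submodule K V)).Intersecting) {C : ℚ}
    (hC : qNumber q (s + 2) < C)
    (hshare : qNumber q (s + 1) * (q : ℚ) ^ (s + 1) * GaussQ q (2 * s + 1) (s + 1) / (C - 1) =
      shadowShare B s N C) :
    ∃ E ∈ subspacesBetween ⊥ B 1, N = subspacesBetween E B (s + 1) := by
  obtain ⟨hcard, hsq, hvalues⟩ := eq_of_shadowShare_eq hB hNB hN hC hshare
  have hne : N.Nonempty := by
    rw [← card_pos, ← Nat.cast_pos (α := ℚ), hcard]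
    exact GaussQ_pos Finite.one_lt_card (by lia)
  obtain ⟨T, hT, hle⟩ :=
    exists_qNumber_le_card_isFull hNB hne (sum_numAbove_isFull hB hNB hvalues hsq)
  obtain ⟨E, hE, hEfull⟩ := exists_isFull_finrank_eq_one (isSaturated_of_numAbove hB hNB hvalues)
    hT (hNB hT) hle
  exact ⟨E, hE, hEfull.eq_subspacesBetween hB hE hNB hN⟩

end ShadowShare

section Shadow

variable {K V : Type*} [Field K] [AddCommGroup V] [Module K V] [FiniteDimensional K V] [Finite K]
  {F : Finset (Submodule K V)} {B G : Submodule K V} {s t : ℕ}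

local notation "q" => Nat.card K

open scoped Classical in
/-- The `t`-dimensional subspaces of `B` that lie in exactly one member of `F`; for `B = ⊤` this is
the family `Ω`. -/
noncomputable def singlyCovered (F : Finset (Submodule K V)) (B : Submodule K V) (t : ℕ) :
    Finset (Submodule K V) :=
  {T ∈ subspacesBetween ⊥ B t | numAbove F T = 1}

open scoped Classical in
/-- The `t`-dimensional subspaces of `B` that lie in more than one member of `F`, that is
`N_t(B)`. -/
noncomputable def multiplyCovered (F : Finset (Submodule K V)) (B : Submodule K V) (t : ℕ) :
    Finset (Submodule K V) :=
  {T ∈ subspacesBetween ⊥ B t | 1 < numAbove F T}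

theorem mem_singlyCovered {T : Submodule K V} :
    T ∈ singlyCovered F B t ↔ T ≤ B ∧ finrank K T = t ∧ numAbove F T = 1 := by
  simp [singlyCovered, mem_subspacesBetween, and_assoc]

theorem mem_multiplyCovered {T : Submodule K V} :
    T ∈ multiplyCovered F B t ↔ T ≤ B ∧ finrank K T = t ∧ 1 < numAbove F T := by
  simp [multiplyCovered, mem_subspacesBetween, and_assoc]

theorem multiplyCovered_subset : multiplyCovered F B t ⊆ subspacesBetween ⊥ B t :=
  filter_subset _ _

-- Two disjoint `t`-subspaces span `B`, so members of `F` through them would cover `B`.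
theorem IsCoverFree.intersecting_multiplyCovered (hF : IsCoverFree (F : Set (Submodule K V)))
    (hdim : ∀ A ∈ F, finrank K A = 2 * t) (hB : B ∈ F) :
    (multiplyCovered F B t : Set (Submodule K V)).Intersecting := by
  intro T hT T' hT' hdisj
  obtain ⟨hTB, hTt, hT⟩ := mem_multiplyCovered.1 hT
  obtain ⟨hTB', hTt', hT'⟩ := mem_multiplyCovered.1 hT'
  obtain ⟨B₁, hB₁, hTB₁, hne₁⟩ := exists_ne_of_one_lt_numAbove hT B
  obtain ⟨B₂, hB₂, hTB₂, hne₂⟩ := exists_ne_of_one_lt_numAbove hT' B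
  have hspan : T ⊔ T' = B := by
    refine Submodule.eq_of_le_of_finrank_eq (sup_le hTB hTB') ?_
    have := Submodule.finrank_sup_add_finrank_inf_eq T T'
    rw [hdisj.eq_bot, finrank_bot] at this
    rw [hdim B hB]
    lia
  have hne : B₁ ≠ B₂ := by
    rintro rfl
    exact hne₁ (Submodule.eq_of_le_of_finrank_eq (hspan ▸ sup_le hTB₁ hTB₂)
      ((hdim B hB).trans (hdim B₁ hB₁).symm)).symm
  exact hF ⟨B, B₁, B₂, hB, hB₁, hB₂, hne₁.symm, hne₂.symm, hne,
    hspan.ge.trans (sup_le_sup (le_inf hTB hTB₁) (le_inf hTB' hTB₂))⟩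

theorem disjoint_singlyCovered_multiplyCovered (F : Finset (Submodule K V))
    (B B' : Submodule K V) (t : ℕ) : Disjoint (singlyCovered F B t) (multiplyCovered F B' t) :=
  disjoint_left.2 fun _ hT hT' ↦
    (mem_multiplyCovered.1 hT').2.2.ne' (mem_singlyCovered.1 hT).2.2

open scoped Classical in
theorem singlyCovered_union_multiplyCovered (hB : B ∈ F) (t : ℕ) :
    singlyCovered F B t ∪ multiplyCovered F B t = subspacesBetween ⊥ B t := by
  rw [singlyCovered, multiplyCovered, ← filter_or, filter_eq_self]
  intro T hT
  have := numAbove_pos hB (mem_subspacesBetween.1 hT).2.1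
  lia

theorem numAbove_singlyCovered_add (hB : B ∈ F) (G : Submodule K V) (t : ℕ) :
    numAbove (singlyCovered F B t) G + numAbove (multiplyCovered F B t) G =
      #(subspacesBetween G B t) := by
  classical
  rw [← numAbove_union (disjoint_singlyCovered_multiplyCovered F B B t),
    singlyCovered_union_multiplyCovered hB, numAbove_eq_card_iff Subset.rfl]
  exact fun T hT ↦ mem_subspacesBetween.2 ⟨bot_le, (mem_subspacesBetween.1 hT).2⟩

theorem numAbove_singlyCovered_top_add_le (F : Finset (Submodule K V)) (B G : Submodule K V)
    (t : ℕ) :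
    numAbove (singlyCovered F ⊤ t) G + numAbove (multiplyCovered F B t) G ≤
      #(subspacesBetween G ⊤ t) := by
  classical
  rw [← numAbove_union (disjoint_singlyCovered_multiplyCovered F ⊤ B t)]
  refine numAbove_le_card (union_subset (filter_subset _ _) fun T hT ↦ ?_) G
  exact mem_subspacesBetween.2 ⟨bot_le, le_top, (mem_multiplyCovered.1 hT).2.1⟩

theorem sum_numAbove_singlyCovered (F : Finset (Submodule K V)) (G : Submodule K V) (t : ℕ) :
    ∑ B ∈ F, numAbove (singlyCovered F B t) G = numAbove (singlyCovered F ⊤ t) G := by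
  classical
  have hfiber (B : Submodule K V) : {T ∈ singlyCovered F B t | G ≤ T} =
      bipartiteBelow (· ≤ ·) {T ∈ singlyCovered F ⊤ t | G ≤ T} B := by
    ext T
    simp only [mem_filter, mem_bipartiteBelow, mem_singlyCovered]
    tauto
  refine (sum_congr rfl fun B _ ↦ congrArg card (hfiber B)).trans ?_
  rw [← sum_card_bipartiteAbove_eq_sum_card_bipartiteBelow, numAbove, card_eq_sum_ones]
  exact sum_congr rfl fun T hT ↦ (mem_singlyCovered.1 (mem_filter.1 hT).1).2.2

theorem share_le_numAbove_div (hdim : finrank K B = 2 * (s + 1)) (hB : B ∈ F)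
    (hG : G ∈ subspacesBetween ⊥ B s) :
    (qNumber q (s + 2) - numAbove (multiplyCovered F B (s + 1)) G) /
        (qNumber q (finrank K V - s) - numAbove (multiplyCovered F B (s + 1)) G) ≤
      numAbove (singlyCovered F B (s + 1)) G / (numAbove (singlyCovered F ⊤ (s + 1)) G : ℚ) := by
  have hc := card_subspacesBetween_of_mem (t := s + 2) (by lia) hG
  have hC : (#(subspacesBetween G ⊤ (s + 1)) : ℚ) = qNumber q (finrank K V - s) := by
    obtain ⟨-, -, rfl⟩ := mem_subspacesBetween.1 hG
    rw [card_subspacesBetween_add_one le_top, finrank_top]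
  rw [← hC, ← hc, ← numAbove_singlyCovered_add hB G, Nat.cast_add, add_sub_cancel_right]
  rcases (numAbove (singlyCovered F ⊤ (s + 1)) G).eq_zero_or_pos with h0 | hpos
  · have hB0 := single_le_sum (fun B _ ↦ Nat.zero_le (numAbove (singlyCovered F B (s + 1)) G)) hB
    rw [sum_numAbove_singlyCovered, h0, Nat.le_zero] at hB0
    simp [hB0]
  · refine div_le_div_of_nonneg_left (Nat.cast_nonneg _) (Nat.cast_pos.2 hpos)
      (le_sub_iff_add_le.2 ?_)
    exact_mod_cast numAbove_singlyCovered_top_add_le F B G (s + 1)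

theorem sum_shadowShare_le (hdim : ∀ A ∈ F, finrank K A = 2 * (s + 1)) :
    ∑ B ∈ F, shadowShare B s (multiplyCovered F B (s + 1)) (qNumber q (finrank K V - s)) ≤
      (ShadowSet (s + 1) (singlyCovered F ⊤ (s + 1) : Set (Submodule K V))).ncard := by
  classical
  have hshadow : ShadowSet (s + 1) (singlyCovered F ⊤ (s + 1) : Set (Submodule K V)) =
      ({G ∈ subspacesBetween ⊥ ⊤ s | numAbove (singlyCovered F ⊤ (s + 1)) G ≠ 0} : Finset _) := by
    ext G
    simp [ShadowSet, mem_subspacesBetween, numAbove, filter_eq_empty_iff]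
  calc
    _ ≤ ∑ B ∈ F, ∑ G ∈ subspacesBetween ⊥ B s,
        numAbove (singlyCovered F B (s + 1)) G / (numAbove (singlyCovered F ⊤ (s + 1)) G : ℚ) :=
      sum_le_sum fun B hB ↦ sum_le_sum fun G hG ↦ share_le_numAbove_div (hdim B hB) hB hG
    _ ≤ ∑ B ∈ F, ∑ G ∈ subspacesBetween ⊥ ⊤ s,
        numAbove (singlyCovered F B (s + 1)) G / (numAbove (singlyCovered F ⊤ (s + 1)) G : ℚ) := by
      refine sum_le_sum fun B _ ↦
        sum_le_sum_of_subset_of_nonneg (fun G hG ↦ ?_) fun G _ _ ↦ by positivity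
      exact mem_subspacesBetween.2 ⟨bot_le, le_top, (mem_subspacesBetween.1 hG).2.2⟩
    _ = ∑ G ∈ subspacesBetween ⊥ ⊤ s,
        if numAbove (singlyCovered F ⊤ (s + 1)) G ≠ 0 then 1 else 0 := by
      rw [sum_comm]
      refine sum_congr rfl fun G _ ↦ ?_
      rw [← sum_div, ← Nat.cast_sum, sum_numAbove_singlyCovered]
      split_ifs with h
      · exact div_self (Nat.cast_ne_zero.2 h)
      · rw [not_not.1 h, Nat.cast_zero, zero_div]
    _ = _ := by rw [sum_boole, hshadow, Set.ncard_coe_finset]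

theorem card_mul_le_ncard_shadowSet (hF : IsCoverFree (F : Set (Submodule K V)))
    (hdim : ∀ A ∈ F, finrank K A = 2 * (s + 1)) (hn : 2 * (s + 1) < finrank K V) :
    #F * (qNumber q (s + 1) * (q : ℚ) ^ (s + 1) * GaussQ q (2 * s + 1) (s + 1) /
        (qNumber q (finrank K V - s) - 1)) ≤
      (ShadowSet (s + 1) (singlyCovered F ⊤ (s + 1) : Set (Submodule K V))).ncard := by
  have hC : qNumber q (s + 2) < qNumber q (finrank K V - s) :=
    qNumber_strictMono Nat.card_pos (by lia)
  rw [← nsmul_eq_mul]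
  exact (card_nsmul_le_sum F _ _ fun B hB ↦ le_shadowShare (hdim B hB) multiplyCovered_subset
    (hF.intersecting_multiplyCovered hdim hB) hC).trans (sum_shadowShare_le hdim)

theorem exists_multiplyCovered_eq_of_ncard_shadowSet_eq
    (hF : IsCoverFree (F : Set (Submodule K V))) (hdim : ∀ A ∈ F, finrank K A = 2 * (s + 1))
    (hn : 2 * (s + 1) < finrank K V)
    (heq : (ShadowSet (s + 1) (singlyCovered F ⊤ (s + 1) : Set (Submodule K V))).ncard =
      #F * (qNumber q (s + 1) * (q : ℚ) ^ (s + 1) * GaussQ q (2 * s + 1) (s + 1) /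
        (qNumber q (finrank K V - s) - 1))) (hB : B ∈ F) :
    ∃ E ∈ subspacesBetween ⊥ B 1, multiplyCovered F B (s + 1) = subspacesBetween E B (s + 1) := by
  have hC : qNumber q (s + 2) < qNumber q (finrank K V - s) :=
    qNumber_strictMono Nat.card_pos (by lia)
  have hle (A) (hA : A ∈ F) := le_shadowShare (hdim A hA) multiplyCovered_subset
    (hF.intersecting_multiplyCovered hdim hA) hC
  have hsum := (sum_shadowShare_le hdim).trans_eq heq
  rw [← nsmul_eq_mul, ← sum_const] at hsum
  exact exists_eq_subspacesBetween_of_shadowShare_eq (hdim B hB) multiplyCovered_subset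
    (hF.intersecting_multiplyCovered hdim hB) hC
    ((sum_eq_sum_iff_of_le hle).1 (le_antisymm (sum_le_sum hle) hsum) B hB)

theorem omegaSet_coe (F : Finset (Submodule K V)) (t : ℕ) :
    OmegaSet (F : Set (Submodule K V)) t = singlyCovered F ⊤ t := by
  ext A
  simp [OmegaSet, mem_singlyCovered, ← ncard_setOf_le_eq_numAbove]

theorem stmt19_general {t : ℕ} (ht : 0 < t) (hn : 2 * t < finrank K V)
    (F : Set (Submodule K V)) (hdim : ∀ A ∈ F, finrank K A = 2 * t) (hF : IsCoverFree F) :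
    (q : ℚ) ^ (t - 1) * GaussQ q (finrank K V - 1) (t - 1) *
        (F.ncard / (GaussQ q (finrank K V - 1) t / GaussQ q (2 * t - 1) t)) ≤
      (ShadowSet t (OmegaSet F t)).ncard ∧
    ((ShadowSet t (OmegaSet F t)).ncard =
        (q : ℚ) ^ (t - 1) * GaussQ q (finrank K V - 1) (t - 1) *
          (F.ncard / (GaussQ q (finrank K V - 1) t / GaussQ q (2 * t - 1) t)) →
      ∀ F₀ ∈ F, ∃ E : Submodule K V, E ≤ F₀ ∧ finrank K E = 1 ∧
        {T : Submodule K V | T ≤ F₀ ∧ finrank K T = t ∧ 1 < {G ∈ F | T ≤ G}.ncard} =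
          {H : Submodule K V | H ≤ F₀ ∧ finrank K H = t ∧ E ≤ H}) := by
  obtain ⟨s, rfl⟩ := Nat.exists_eq_add_one.2 ht
  lift F to Finset (Submodule K V) using F.toFinite
  simp only [mem_coe] at hdim
  rw [show 2 * (s + 1) - 1 = 2 * s + 1 by lia, Nat.add_sub_cancel, Set.ncard_coe_finset,
    omegaSet_coe, mul_div_left_comm, ← div_qNumber_sub_one_eq Finite.one_lt_card hn]
  refine ⟨card_mul_le_ncard_shadowSet hF hdim hn, fun heq B hB ↦ ?_⟩
  obtain ⟨E, hE, hstar⟩ := exists_multiplyCovered_eq_of_ncard_shadowSet_eq hF hdim hn heq hB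
  obtain ⟨-, hEB, hE1⟩ := mem_subspacesBetween.1 hE
  refine ⟨E, hEB, hE1, Set.ext fun T ↦ ?_⟩
  simp only [ncard_setOf_le_eq_numAbove, Set.mem_ofPred_eq, ← mem_multiplyCovered, hstar,
    mem_subspacesBetween]
  tauto

end Shadow

theorem stmt19 (q n t : ℕ) (K : Type*) [Field K] [Fintype K] (hK : Fintype.card K = q)
    (V : Type*) [AddCommGroup V] [Module K V] [FiniteDimensional K V]
    (hV : Module.finrank K V = n) (ht : 2 ≤ t) (hn : 2 * t + 1 ≤ n)
    (F : Set (Submodule K V)) (hdim : ∀ A ∈ F, Module.finrank K A = 2 * t)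
    (hcf : IsCoverFree F)
    (hcard : (F.ncard : ℚ) = GaussQ q (n - 1) t / GaussQ q (2 * t - 1) t) :
    (q : ℚ) ^ (t - 1) * GaussQ q (n - 1) (t - 1) ≤
      (((ShadowSet t (OmegaSet F t)).ncard : ℚ)) ∧
    ((((ShadowSet t (OmegaSet F t)).ncard : ℚ)) =
        (q : ℚ) ^ (t - 1) * GaussQ q (n - 1) (t - 1) →
      ∀ F₀ ∈ F, ∃ E : Submodule K V, E ≤ F₀ ∧ Module.finrank K E = 1 ∧
        {T : Submodule K V | T ≤ F₀ ∧ Module.finrank K T = t ∧ 1 < {G ∈ F | T ≤ G}.ncard} =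
          {H : Submodule K V | H ≤ F₀ ∧ Module.finrank K H = t ∧ E ≤ H}) := by
  obtain ⟨rfl, rfl⟩ := And.intro hK hV
  have hq := Fintype.one_lt_card (α := K)
  have hpos : 0 < GaussQ (Fintype.card K) (finrank K V - 1) t /
      GaussQ (Fintype.card K) (2 * t - 1) t :=
    div_pos (GaussQ_pos hq (by lia)) (GaussQ_pos hq (by lia))
  simpa only [Nat.card_eq_fintype_card, hcard, div_self hpos.ne', mul_one] using
    stmt19_general (zero_lt_two.trans_le ht) hn F hdim hcf
end
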